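/- For every n ≥ 1, the iterated commutator map cₙ : PU(2)ⁿ → PU(2), sending (g₁,…,gₙ) to cₙ(g₁,…,gₙ) where c₁(g₁) = g₁ and cₖ(g₁,…,gₖ) = [gₖ, cₖ₋₁(g₁,…,gₖ₋₁)] with [x,y] = xyx⁻¹y⁻¹, is a continuous map which is not null-homotopic. -/

import Mathlib

/-- The special unitary group `SU(n)`: the subgroup of the unitary group
`U(n) = Matrix.unitaryGroup (Fin n) ℂ` consisting of matrices of determinant `1`. -/
def SU (n : ℕ) : Subgroup (Matrix.unitaryGroup (Fin n) ℂ) where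
  carrier := {A | (A : Matrix (Fin n) (Fin n) ℂ).det = 1}
  mul_mem' := by
    intro a b ha hb
    simp only [Set.mem_setOf_eq] at *
    simp [Matrix.UnitaryGroup.mul_val, Matrix.det_mul, ha, hb]
  one_mem' := by simp
  inv_mem' := by
    intro a ha
    simp only [Set.mem_setOf_eq] at *
    show ((a⁻¹ : Matrix.unitaryGroup (Fin n) ℂ) : Matrix (Fin n) (Fin n) ℂ).det = 1
    rw [Matrix.UnitaryGroup.inv_val, Matrix.star_eq_conjTranspose, Matrix.det_conjTranspose, ha]
    simp

/-- The projective unitary group `PU(n)`: the quotient of `SU(n)` by its center,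
with the quotient topology. -/
abbrev PU (n : ℕ) := SU n ⧸ Subgroup.center (SU n)

/-- The iterated commutator `cₙ`:  `c₁(g₁) = g₁` and
`cₖ(g₁, …, gₖ) = [gₖ, cₖ₋₁(g₁, …, gₖ₋₁)]` where `[x,y] = x y x⁻¹ y⁻¹`. -/
def iteratedCommutator {G : Type*} [Group G] : (n : ℕ) → (Fin n → G) → G
  | 0, _ => 1
  | 1, g => g 0
  | (n + 2), g =>
      g (Fin.last (n + 1)) * iteratedCommutator (n + 1) (fun i => g i.castSucc) *
        (g (Fin.last (n + 1)))⁻¹ *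
          (iteratedCommutator (n + 1) (fun i => g i.castSucc))⁻¹

/-!
Stable homotopy classes of continuous families of invertible matrices over a compact space `X` form
an abelian group, in essence `K⁻¹(X)`. Let `u` be a family of invertible `2 × 2` matrices, with
values in nonzero multiples of `SU(2)`, and let `w (x, p) = [p, u x]` over `X × S³ / ±`, the second
factor being `PU(2)`. If the class of `w` is divisible by two, then so is the class of `u`. Since
the commutator of a pair of points of `PU(2)` has a canonical lift to `SU(2)`, this makes an
induction over the iterated commutators possible. It starts with the loop `z ↦ diag(z², 1)` over
`Circle / ±`, which represents the generator of the fundamental group of `PU(2)` and is not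
divisible by two because its determinant has no even square root. A null-homotopy of an iterated
commutator would lift and make the class of the next commutator family trivial, thus divisible.

The divisibility step restricts families from `X × S³ / ±` to the hemisphere of the equatorial
two-sphere and measures them there by Bott periodicity, in Atiyah's form: symbols over `X` times the
two-sphere are quantized to families over `X`, with almost multiplicativity in place of index
theory.
-/

noncomputable section

open Matrix unitInterval Filter Topology ComplexConjugate

/-! ### Stable homotopy classes of families of invertible matrices -/

section Families

variable {X Y : Type*} [TopologicalSpace X] [TopologicalSpace Y] {r : Setoid X} {s : Setoid Y}
  {ι κ α β : Type} [Fintype ι] [DecidableEq ι] [Fintype κ] [DecidableEq κ] [Fintype α]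
  [DecidableEq α] [Fintype β] [DecidableEq β]

/-- A continuous family of invertible complex matrices over the quotient space `X / r`, encoded as
an `r`-invariant family over `X`, so that no topology on the quotient is ever needed. -/
structure InvertibleFamily (r : Setoid X) (ι : Type) [Fintype ι] [DecidableEq ι] where
  toFun : X → Matrix ι ι ℂ
  continuous_toFun : Continuous toFun
  isUnit_toFun : ∀ x, IsUnit (toFun x)
  eq_of_rel' : ∀ x y, r x y → toFun x = toFun y

namespace InvertibleFamily

instance : FunLike (InvertibleFamily r ι) X (Matrix ι ι ℂ) where
  coe := toFun
  coe_injective f g h := by cases f; congr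

@[ext]
theorem ext {a b : InvertibleFamily r ι} (h : ∀ x, a x = b x) : a = b :=
  DFunLike.ext _ _ h

@[fun_prop]
protected theorem continuous (a : InvertibleFamily r ι) : Continuous a :=
  a.continuous_toFun

theorem isUnit (a : InvertibleFamily r ι) (x : X) : IsUnit (a x) :=
  a.isUnit_toFun x

theorem isUnit_det (a : InvertibleFamily r ι) (x : X) : IsUnit (a x).det :=
  (isUnit_iff_isUnit_det _).1 (a.isUnit x)

theorem eq_of_rel (a : InvertibleFamily r ι) {x y : X} (h : r x y) : a x = a y :=
  a.eq_of_rel' x y h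

instance : One (InvertibleFamily r ι) :=
  ⟨⟨fun _ => 1, continuous_const, fun _ => isUnit_one, fun _ _ _ => rfl⟩⟩

instance : Mul (InvertibleFamily r ι) :=
  ⟨fun a b => ⟨fun x => a x * b x, a.continuous.matrix_mul b.continuous,
    fun x => (a.isUnit x).mul (b.isUnit x),
    fun _ _ h => by rw [a.eq_of_rel h, b.eq_of_rel h]⟩⟩

instance : Inv (InvertibleFamily r ι) :=
  ⟨fun a =>
    { toFun := fun x => (a x)⁻¹
      continuous_toFun := by
        simp only [inv_def, Ring.inverse_eq_inv']
        exact (a.continuous.matrix_det.inv₀ fun x => (a.isUnit_det x).ne_zero).smul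
          a.continuous.matrix_adjugate
      isUnit_toFun := fun x => isUnit_nonsing_inv_iff.2 (a.isUnit x)
      eq_of_rel' := fun _ _ h => by rw [a.eq_of_rel h] }⟩

@[simp] theorem one_apply (x : X) : (1 : InvertibleFamily r ι) x = 1 := rfl
@[simp] theorem mul_apply (a b : InvertibleFamily r ι) (x : X) : (a * b) x = a x * b x := rfl
@[simp] theorem inv_apply (a : InvertibleFamily r ι) (x : X) : a⁻¹ x = (a x)⁻¹ := rfl

@[simp]
theorem apply_mul_inv (a : InvertibleFamily r ι) (x : X) : a x * (a x)⁻¹ = 1 :=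
  mul_nonsing_inv _ (a.isUnit_det x)

@[simp]
theorem inv_mul_apply (a : InvertibleFamily r ι) (x : X) : (a x)⁻¹ * a x = 1 :=
  nonsing_inv_mul _ (a.isUnit_det x)

instance : Group (InvertibleFamily r ι) where
  mul_assoc a b c := ext fun x => mul_assoc _ _ _
  one_mul a := ext fun x => one_mul _
  mul_one a := ext fun x => mul_one _
  inv_mul_cancel a := ext fun x => a.inv_mul_apply x

/-- The block diagonal sum of two families. -/
def directSum (a : InvertibleFamily r ι) (b : InvertibleFamily r κ) :
    InvertibleFamily r (ι ⊕ κ) where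
  toFun x := fromBlocks (a x) 0 0 (b x)
  continuous_toFun :=
    a.continuous.matrix_fromBlocks continuous_const continuous_const b.continuous
  isUnit_toFun x := by
    rw [isUnit_iff_isUnit_det, det_fromBlocks_zero₂₁]
    exact (a.isUnit_det x).mul (b.isUnit_det x)
  eq_of_rel' _ _ h := by rw [a.eq_of_rel h, b.eq_of_rel h]

/-- The family obtained by renaming the matrix indices. -/
def reindex (e : ι ≃ κ) (a : InvertibleFamily r ι) : InvertibleFamily r κ where
  toFun x := Matrix.reindex e e (a x)
  continuous_toFun := a.continuous.matrix_reindex e e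
  isUnit_toFun x := (a.isUnit x).map (reindexAlgEquiv ℂ ℂ e)
  eq_of_rel' _ _ h := by rw [a.eq_of_rel h]

/-- The pullback of a family along a continuous map that descends to the quotients. -/
def pullback (a : InvertibleFamily r ι) (φ : C(Y, X)) (h : s ≤ r.comap φ) :
    InvertibleFamily s ι where
  toFun y := a (φ y)
  continuous_toFun := by fun_prop
  isUnit_toFun y := a.isUnit _
  eq_of_rel' _ _ hxy := a.eq_of_rel (h hxy)

@[simp]
theorem directSum_apply (a : InvertibleFamily r ι) (b : InvertibleFamily r κ) (x : X) :
    a.directSum b x = fromBlocks (a x) 0 0 (b x) := rfl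

@[simp]
theorem reindex_apply (e : ι ≃ κ) (a : InvertibleFamily r ι) (x : X) :
    a.reindex e x = (a x).submatrix e.symm e.symm := rfl

@[simp]
theorem pullback_apply (a : InvertibleFamily r ι) (φ : C(Y, X)) (h : s ≤ r.comap φ) (y : Y) :
    a.pullback φ h y = a (φ y) := rfl

theorem directSum_mul_directSum (a a' : InvertibleFamily r ι) (b b' : InvertibleFamily r κ) :
    a.directSum b * a'.directSum b' = (a * a').directSum (b * b') :=
  ext fun x => by simp [fromBlocks_multiply]

@[simp]
theorem one_directSum_one :
    (1 : InvertibleFamily r ι).directSum (1 : InvertibleFamily r κ) = 1 :=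
  ext fun _ => fromBlocks_one

theorem inv_directSum (a : InvertibleFamily r ι) (b : InvertibleFamily r κ) :
    (a.directSum b)⁻¹ = a⁻¹.directSum b⁻¹ :=
  inv_eq_of_mul_eq_one_right (by simp [directSum_mul_directSum])

@[simp]
theorem one_reindex (e : ι ≃ κ) : (1 : InvertibleFamily r ι).reindex e = 1 :=
  ext fun _ => submatrix_one_equiv _

/-- Homotopy of families: a family over `I × (X / r)` with the given ends. -/
def Homotopic (a b : InvertibleFamily r ι) : Prop :=
  ∃ H : InvertibleFamily ((⊥ : Setoid I).prod r) ι, (∀ x, H (0, x) = a x) ∧ ∀ x, H (1, x) = b x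

/-- The family over `T × (X / r)` that does not depend on the first coordinate. -/
def constLeft {T : Type*} [TopologicalSpace T] (t : Setoid T) (a : InvertibleFamily r ι) :
    InvertibleFamily (t.prod r) ι :=
  a.pullback ⟨Prod.snd, continuous_snd⟩ fun _ _ h => h.2

@[simp]
theorem constLeft_apply {T : Type*} [TopologicalSpace T] (t : Setoid T)
    (a : InvertibleFamily r ι) (p : T × X) : a.constLeft t p = a p.2 := rfl

/-- The family over `(X / r) × T` that does not depend on the second coordinate. -/
def constRight {T : Type*} [TopologicalSpace T] (t : Setoid T) (a : InvertibleFamily r ι) :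
    InvertibleFamily (r.prod t) ι :=
  a.pullback ⟨Prod.fst, continuous_fst⟩ fun _ _ h => h.1

@[simp]
theorem constRight_apply {T : Type*} [TopologicalSpace T] (t : Setoid T)
    (a : InvertibleFamily r ι) (p : X × T) : a.constRight t p = a p.1 := rfl

namespace Homotopic

variable {a b c a' b' : InvertibleFamily r ι} {d d' : InvertibleFamily r κ}

@[refl]
theorem refl (a : InvertibleFamily r ι) : Homotopic a a :=
  ⟨a.constLeft ⊥, fun _ => rfl, fun _ => rfl⟩

@[symm]
theorem symm : Homotopic a b → Homotopic b a := by
  rintro ⟨H, h₀, h₁⟩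
  refine ⟨H.pullback ⟨fun p => (σ p.1, p.2), by fun_prop⟩ fun _ _ h => ⟨congrArg σ h.1, h.2⟩,
    fun x => ?_, fun x => ?_⟩
  · simpa using h₁ x
  · simpa using h₀ x

theorem mul : Homotopic a b → Homotopic a' b' → Homotopic (a * a') (b * b') := by
  rintro ⟨H, h₀, h₁⟩ ⟨H', h₀', h₁'⟩
  exact ⟨H * H', fun x => by simp [h₀, h₀'], fun x => by simp [h₁, h₁']⟩

theorem inv : Homotopic a b → Homotopic a⁻¹ b⁻¹ := by
  rintro ⟨H, h₀, h₁⟩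
  exact ⟨H⁻¹, fun x => by simp [h₀], fun x => by simp [h₁]⟩

-- The pointwise product `(a ∼ b) · b⁻¹ · (b ∼ c)` replaces the concatenation of paths.
@[trans]
theorem trans (h : Homotopic a b) (h' : Homotopic b c) : Homotopic a c := by
  simpa using (h.mul (refl b⁻¹)).mul h'

theorem directSum : Homotopic a b → Homotopic d d' →
    Homotopic (a.directSum d) (b.directSum d') := by
  rintro ⟨H, h₀, h₁⟩ ⟨H', h₀', h₁'⟩
  exact ⟨H.directSum H', fun x => by simp [h₀, h₀'], fun x => by simp [h₁, h₁']⟩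

theorem reindex (e : ι ≃ κ) : Homotopic a b → Homotopic (a.reindex e) (b.reindex e) := by
  rintro ⟨H, h₀, h₁⟩
  exact ⟨H.reindex e, fun x => by simp [h₀], fun x => by simp [h₁]⟩

theorem pullback (φ : C(Y, X)) (h : s ≤ r.comap φ) :
    Homotopic a b → Homotopic (a.pullback φ h) (b.pullback φ h) := by
  rintro ⟨H, h₀, h₁⟩
  exact ⟨H.pullback ⟨fun p => (p.1, φ p.2), by fun_prop⟩ fun _ _ hp => ⟨hp.1, h hp.2⟩,
    fun x => h₀ (φ x), fun x => h₁ (φ x)⟩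

end Homotopic

end InvertibleFamily

end Families

section ScalarBlock

variable {ι : Type} [DecidableEq ι]

/-- The `2 × 2` scalar matrix with entries `a b c d`, acting on `ℂ² ⊗ ℂ^ι`. -/
def scalarBlock (ι : Type) [DecidableEq ι] (a b c d : ℂ) : Matrix (ι ⊕ ι) (ι ⊕ ι) ℂ :=
  fromBlocks (a • 1) (b • 1) (c • 1) (d • 1)

theorem scalarBlock_mul [Fintype ι] (a b c d a' b' c' d' : ℂ) :
    scalarBlock ι a b c d * scalarBlock ι a' b' c' d' =
      scalarBlock ι (a * a' + b * c') (a * b' + b * d') (c * a' + d * c') (c * b' + d * d') := by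
  simp [scalarBlock, fromBlocks_multiply, smul_smul, ← add_smul, mul_comm]

theorem scalarBlock_one : scalarBlock ι 1 0 0 1 = 1 := by
  simp [scalarBlock]

@[fun_prop]
theorem continuous_scalarBlock {X : Type*} [TopologicalSpace X] {a b c d : X → ℂ}
    (ha : Continuous a) (hb : Continuous b) (hc : Continuous c) (hd : Continuous d) :
    Continuous fun x => scalarBlock ι (a x) (b x) (c x) (d x) :=
  (ha.smul continuous_const).matrix_fromBlocks (hb.smul continuous_const)
    (hc.smul continuous_const) (hd.smul continuous_const)

theorem isUnit_scalarBlock [Fintype ι] {a b c d : ℂ} (h : a * d - b * c ≠ 0) :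
    IsUnit (scalarBlock ι a b c d) := by
  have e : scalarBlock ι a b c d * ((a * d - b * c)⁻¹ • scalarBlock ι d (-b) (-c) a) = 1 := by
    have : scalarBlock ι a b c d * scalarBlock ι d (-b) (-c) a =
        (a * d - b * c) • scalarBlock ι 1 0 0 1 := by
      rw [scalarBlock_mul]
      simp only [scalarBlock, fromBlocks_smul, smul_smul]
      congr 2 <;> ring
    rw [mul_smul_comm, this, scalarBlock_one, smul_smul, inv_mul_cancel₀ h, one_smul]
  exact IsUnit.of_mul_eq_one _ e

end ScalarBlock

section KGroup

variable {X Y : Type*} [TopologicalSpace X] [TopologicalSpace Y] {r : Setoid X} {s : Setoid Y}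
  {ι κ α β : Type} [Fintype ι] [DecidableEq ι] [Fintype κ] [DecidableEq κ] [Fintype α]
  [DecidableEq α] [Fintype β] [DecidableEq β]

namespace InvertibleFamily

/-- The rotation of `ℂ^ι ⊕ ℂ^ι` by the angle `π t / 2`, as a family over `I × (X / r)`. -/
def rotation (r : Setoid X) (ι : Type) [Fintype ι] [DecidableEq ι] :
    InvertibleFamily ((⊥ : Setoid I).prod r) (ι ⊕ ι) where
  toFun p := scalarBlock ι (Real.cos (Real.pi / 2 * p.1) : ℝ) (-(Real.sin (Real.pi / 2 * p.1) : ℝ))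
    (Real.sin (Real.pi / 2 * p.1) : ℝ) (Real.cos (Real.pi / 2 * p.1) : ℝ)
  continuous_toFun := by fun_prop
  isUnit_toFun p := by
    apply isUnit_scalarBlock
    rw [neg_mul, sub_neg_eq_add]
    norm_cast
    simp [← sq]
  eq_of_rel' p q h := by rw [show p.1 = q.1 from h.1]

/-- The Whitehead lemma. -/
theorem homotopic_mul_directSum_one (a b : InvertibleFamily r ι) :
    Homotopic (a.directSum b) ((a * b).directSum 1) := by
  symm
  refine ⟨(a.constLeft ⊥).directSum 1 *
    (rotation r ι * (b.constLeft ⊥).directSum 1 * (rotation r ι)⁻¹), fun x => ?_, fun x => ?_⟩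
  · have h₀ : rotation r ι (0, x) = 1 := by
      simp [rotation, DFunLike.coe, scalarBlock_one]
    simp [h₀, fromBlocks_multiply]
  · have h₁ : rotation r ι (1, x) = scalarBlock ι 0 (-1) 1 0 := by
      simp [rotation, DFunLike.coe]
    have h₁' : (scalarBlock ι 0 (-1) 1 0)⁻¹ = scalarBlock ι 0 1 (-1) 0 :=
      inv_eq_right_inv (by simp [scalarBlock_mul, scalarBlock_one])
    simp only [mul_apply, inv_apply, h₁, h₁']
    simp [scalarBlock, fromBlocks_multiply]

/-- A family is stably trivial if it becomes null-homotopic after adding an identity block. -/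
def IsStablyTrivial (a : InvertibleFamily r ι) : Prop :=
  ∃ (α : Type) (_ : Fintype α) (_ : DecidableEq α),
    Homotopic (a.directSum (1 : InvertibleFamily r α)) 1

namespace IsStablyTrivial

variable {a b : InvertibleFamily r ι} {c : InvertibleFamily r κ}

theorem of_homotopic (h : Homotopic a b) : IsStablyTrivial b → IsStablyTrivial a := by
  rintro ⟨α, _, _, hb⟩
  exact ⟨α, inferInstance, inferInstance, (h.directSum (.refl _)).trans hb⟩

theorem one : IsStablyTrivial (1 : InvertibleFamily r ι) :=
  ⟨Unit, _, inferInstance, by rw [one_directSum_one]⟩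

theorem reindex (e : ι ≃ κ) : IsStablyTrivial a → IsStablyTrivial (a.reindex e) := by
  rintro ⟨α, _, _, h⟩
  refine ⟨α, inferInstance, inferInstance, ?_⟩
  convert h.reindex (e.sumCongr (Equiv.refl α)) using 1
  · ext x (i | i) (j | j) <;> simp
  · simp

theorem directSum : IsStablyTrivial a → IsStablyTrivial c → IsStablyTrivial (a.directSum c) := by
  rintro ⟨α, _, _, h⟩ ⟨β, _, _, h'⟩
  refine ⟨α ⊕ β, inferInstance, inferInstance, ?_⟩
  convert (h.directSum h').reindex (Equiv.sumSumSumComm ι α κ β) using 1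
  · ext x ((i | i) | (i | i)) ((j | j) | (j | j)) <;> simp [Matrix.one_apply]
  · simp

theorem of_directSum_one :
    IsStablyTrivial (a.directSum (1 : InvertibleFamily r κ)) → IsStablyTrivial a := by
  rintro ⟨α, _, _, h⟩
  refine ⟨κ ⊕ α, inferInstance, inferInstance, ?_⟩
  convert h.reindex (Equiv.sumAssoc ι κ α) using 1
  · ext x (i | (i | i)) (j | (j | j)) <;> simp [Matrix.one_apply]
  · simp

theorem inv : IsStablyTrivial a → IsStablyTrivial a⁻¹ := by
  rintro ⟨α, _, _, h⟩
  exact ⟨α, inferInstance, inferInstance, by simpa [inv_directSum] using h.inv⟩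

theorem directSum_inv (a : InvertibleFamily r ι) : IsStablyTrivial (a.directSum a⁻¹) :=
  of_homotopic (homotopic_mul_directSum_one _ _) (by simpa using one)

theorem inv_directSum_self (a : InvertibleFamily r ι) : IsStablyTrivial (a⁻¹.directSum a) := by
  simpa using directSum_inv a⁻¹

theorem of_directSum (h : IsStablyTrivial (a.directSum c)) :
    IsStablyTrivial c → IsStablyTrivial a := by
  rintro ⟨β, _, _, hc⟩
  have h' : IsStablyTrivial (a.directSum (c.directSum (1 : InvertibleFamily r β))) := by
    convert (h.directSum (one (ι := β))).reindex (Equiv.sumAssoc ι κ β)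
    ext x (i | (i | i)) (j | (j | j)) <;> simp [Matrix.one_apply]
  exact of_directSum_one (of_homotopic ((Homotopic.refl a).directSum hc.symm) h')

theorem pullback (φ : C(Y, X)) (h : s ≤ r.comap φ) :
    IsStablyTrivial a → IsStablyTrivial (a.pullback φ h) := by
  rintro ⟨α, _, _, H⟩
  exact ⟨α, inferInstance, inferInstance, H.pullback φ h⟩

end IsStablyTrivial

/-- Two families are stably equivalent if they define the same element of `K¹(X / r)`. -/
def StablyEquivalent (a : InvertibleFamily r ι) (b : InvertibleFamily r κ) : Prop :=
  IsStablyTrivial (a.directSum b⁻¹)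

namespace StablyEquivalent

variable {a : InvertibleFamily r ι} {b : InvertibleFamily r κ} {c : InvertibleFamily r α}
  {d : InvertibleFamily r β}

theorem symm (h : StablyEquivalent a b) : StablyEquivalent b a := by
  unfold StablyEquivalent
  convert h.inv.reindex (Equiv.sumComm _ _)
  rw [inv_directSum, inv_inv]
  ext x (i | i) (j | j) <;> simp

theorem trans (h : StablyEquivalent a b) (h' : StablyEquivalent b c) : StablyEquivalent a c := by
  refine IsStablyTrivial.of_directSum (c := b⁻¹.directSum b) ?_ (.inv_directSum_self b)
  let e : (ι ⊕ κ) ⊕ (κ ⊕ α) ≃ (ι ⊕ α) ⊕ (κ ⊕ κ) :=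
    ((Equiv.refl _).sumCongr (Equiv.sumComm κ α)).trans (Equiv.sumSumSumComm ι κ α κ)
  convert (h.directSum h').reindex e
  ext x ((i | i) | (i | i)) ((j | j) | (j | j)) <;> simp [e]

theorem directSum (h : StablyEquivalent a b) (h' : StablyEquivalent c d) :
    StablyEquivalent (a.directSum c) (b.directSum d) := by
  unfold StablyEquivalent
  convert IsStablyTrivial.reindex (Equiv.sumSumSumComm ι κ α β) (IsStablyTrivial.directSum h h')
  rw [inv_directSum]
  ext x ((i | i) | (i | i)) ((j | j) | (j | j)) <;> simp

theorem inv (h : StablyEquivalent a b) : StablyEquivalent a⁻¹ b⁻¹ := by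
  unfold StablyEquivalent
  rw [← inv_directSum]
  exact IsStablyTrivial.inv h

end StablyEquivalent

end InvertibleFamily

open InvertibleFamily

/-- An invertible family together with its finite index type. -/
structure SizedFamily (r : Setoid X) where
  index : Type
  [fintypeIndex : Fintype index]
  [decidableEqIndex : DecidableEq index]
  family : InvertibleFamily r index

attribute [instance] SizedFamily.fintypeIndex SizedFamily.decidableEqIndex

instance stableEquivalenceSetoid (r : Setoid X) : Setoid (SizedFamily r) where
  r a b := StablyEquivalent a.family b.family
  iseqv := ⟨fun a => .directSum_inv a.family, .symm, .trans⟩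

/-- The group `K¹(X / r)` of stable homotopy classes of families of invertible matrices. -/
def KGroup (r : Setoid X) :=
  Quotient (stableEquivalenceSetoid r)

/-- The class of a family in `K¹`. -/
def InvertibleFamily.kClass (a : InvertibleFamily r ι) : KGroup r :=
  Quotient.mk _ ⟨ι, a⟩

namespace KGroup

theorem kClass_eq_iff {a : InvertibleFamily r ι} {b : InvertibleFamily r κ} :
    a.kClass = b.kClass ↔ IsStablyTrivial (a.directSum b⁻¹) :=
  Quotient.eq

@[elab_as_elim]
theorem induction {p : KGroup r → Prop}
    (h : ∀ (ι : Type) [Fintype ι] [DecidableEq ι] (a : InvertibleFamily r ι), p a.kClass) (k) :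
    p k :=
  Quotient.inductionOn k fun a => h a.index a.family

theorem kClass_eq_of_homotopic {a b : InvertibleFamily r ι} (h : Homotopic a b) :
    a.kClass = b.kClass :=
  kClass_eq_iff.2 (.of_homotopic (h.directSum (.refl _)) (.directSum_inv b))

@[simp]
theorem kClass_reindex (e : ι ≃ κ) (a : InvertibleFamily r ι) :
    (a.reindex e).kClass = a.kClass := by
  rw [kClass_eq_iff]
  convert (IsStablyTrivial.directSum_inv a).reindex (e.sumCongr (Equiv.refl _))
  ext x (i | i) (j | j) <;> simp

instance : Zero (KGroup r) := ⟨(1 : InvertibleFamily r Empty).kClass⟩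

instance : Add (KGroup r) :=
  ⟨Quotient.map₂ (fun a b => ⟨_, a.family.directSum b.family⟩) fun _ _ h _ _ h' => h.directSum h'⟩

instance : Neg (KGroup r) :=
  ⟨Quotient.map (fun a => ⟨_, a.family⁻¹⟩) fun _ _ h => h.inv⟩

theorem kClass_directSum (a : InvertibleFamily r ι) (b : InvertibleFamily r κ) :
    (a.directSum b).kClass = a.kClass + b.kClass := rfl

theorem kClass_inv (a : InvertibleFamily r ι) : a⁻¹.kClass = -a.kClass := rfl

theorem zero_def : (0 : KGroup r) = (1 : InvertibleFamily r Empty).kClass := rfl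

theorem kClass_eq_zero_iff {a : InvertibleFamily r ι} : a.kClass = 0 ↔ IsStablyTrivial a := by
  rw [zero_def, kClass_eq_iff, inv_one]
  exact ⟨.of_directSum_one, fun h => h.directSum .one⟩

@[simp]
theorem kClass_one : (1 : InvertibleFamily r ι).kClass = 0 :=
  kClass_eq_zero_iff.2 .one

protected theorem add_comm (k l : KGroup r) : k + l = l + k := by
  induction k using induction with | _ ι a
  induction l using induction with | _ κ b
  rw [← kClass_directSum, ← kClass_reindex (Equiv.sumComm ι κ), ← kClass_directSum]
  congr 1
  ext x (i | i) (j | j) <;> simp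

protected theorem add_assoc (k l m : KGroup r) : k + l + m = k + (l + m) := by
  induction k using induction with | _ ι a
  induction l using induction with | _ κ b
  induction m using induction with | _ α c
  simp only [← kClass_directSum]
  rw [← kClass_reindex (Equiv.sumAssoc ι κ α)]
  congr 1
  ext x (i | (i | i)) (j | (j | j)) <;> simp

protected theorem zero_add (k : KGroup r) : 0 + k = k := by
  induction k using induction with | _ ι a
  rw [zero_def, ← kClass_directSum, ← kClass_reindex (Equiv.emptySum Empty ι)]
  congr 1

instance : AddCommGroup (KGroup r) where
  add_assoc := KGroup.add_assoc
  add_comm := KGroup.add_comm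
  zero_add := KGroup.zero_add
  add_zero k := (KGroup.add_comm k 0).trans k.zero_add
  neg_add_cancel k := by
    induction k using induction with | _ ι a
    exact kClass_eq_zero_iff.2 (.inv_directSum_self a)
  nsmul := nsmulRec
  zsmul := zsmulRec

theorem kClass_directSum_one (a : InvertibleFamily r ι) :
    (a.directSum (1 : InvertibleFamily r κ)).kClass = a.kClass := by
  rw [kClass_directSum, kClass_one, add_zero]

theorem kClass_mul (a b : InvertibleFamily r ι) : (a * b).kClass = a.kClass + b.kClass := by
  rw [← kClass_directSum, kClass_eq_of_homotopic (homotopic_mul_directSum_one a b),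
    kClass_directSum_one]

/-- The pullback homomorphism on `K¹`. -/
def map (φ : C(Y, X)) (h : s ≤ r.comap φ) : KGroup r →+ KGroup s where
  toFun := Quotient.map (fun a => ⟨_, a.family.pullback φ h⟩)
    fun _ _ hab => IsStablyTrivial.pullback φ h hab
  map_zero' := rfl
  map_add' k l := by
    induction k using induction with | _ ι a
    induction l using induction with | _ κ b
    rfl

end KGroup

end KGroup

/-! ### Quantization of symbols on the annulus -/

section Quantum

open scoped Kronecker Matrix.Norms.L2Operator

section Compression

variable {a b c : Type} [Fintype a]

/-- The compression `Vᴴ T V` of an operator to the source of an isometry `V`. -/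
def compression (V : Matrix a b ℂ) (T : Matrix a a ℂ) : Matrix b b ℂ :=
  Vᴴ * T * V

variable [Fintype b] [DecidableEq b] [Fintype c] [DecidableEq c]

theorem l2_opNorm_mul_le_of_le {A : Matrix a b ℂ} {B : Matrix b c ℂ} {x y : ℝ} (hA : ‖A‖ ≤ x)
    (hB : ‖B‖ ≤ y) : ‖A * B‖ ≤ x * y :=
  (l2_opNorm_mul A B).trans (mul_le_mul hA hB (norm_nonneg _) ((norm_nonneg _).trans hA))

theorem l2_opNorm_le_of_conjTranspose_mul_self_eq_diagonal {A : Matrix a b ℂ} {d : b → ℂ} {ε : ℝ}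
    (hε : 0 ≤ ε) (hA : Aᴴ * A = diagonal d) (hd : ∀ k, ‖d k‖ ≤ ε ^ 2) : ‖A‖ ≤ ε := by
  refine abs_le_of_sq_le_sq' ?_ hε |>.2
  rw [sq, ← l2_opNorm_conjTranspose_mul_self, hA, l2_opNorm_diagonal]
  exact (pi_norm_le_iff_of_nonneg (sq_nonneg ε)).2 hd

theorem norm_isometry_le {V : Matrix a b ℂ} (hV : Vᴴ * V = 1) : ‖V‖ ≤ 1 :=
  l2_opNorm_le_of_conjTranspose_mul_self_eq_diagonal (d := fun _ => 1) zero_le_one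
    (hV.trans diagonal_one.symm) fun _ => by simp

variable [DecidableEq a]

theorem isUnit_of_norm_one_sub_lt {A : Matrix a a ℂ} (h : ‖1 - A‖ < 1) : IsUnit A := by
  simpa only [sub_sub_cancel] using isUnit_one_sub_of_norm_lt_one h

theorem norm_single_kronecker_one_le (i j : a) :
    ‖Matrix.single i j (1 : ℂ) ⊗ₖ (1 : Matrix b b ℂ)‖ ≤ 1 := by
  refine l2_opNorm_le_of_conjTranspose_mul_self_eq_diagonal
    (d := fun p => Pi.single (M := fun _ => ℂ) j 1 p.1) zero_le_one ?_ fun p => ?_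
  · rw [conjTranspose_kronecker, ← mul_kronecker_mul, conjTranspose_single,
      single_mul_single_same, star_one, one_mul, conjTranspose_one, one_mul,
      ← Matrix.diagonal_single, ← diagonal_one, diagonal_kronecker_diagonal]
    simp only [mul_one]
  · by_cases h : p.1 = j <;> simp [h]

theorem norm_kronecker_one_le (G : Matrix a a ℂ) :
    ‖G ⊗ₖ (1 : Matrix b b ℂ)‖ ≤ ∑ i, ∑ j, ‖G i j‖ := by
  have expansion : G ⊗ₖ (1 : Matrix b b ℂ) =
      ∑ i, ∑ j, G i j • (Matrix.single i j (1 : ℂ) ⊗ₖ (1 : Matrix b b ℂ)) := by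
    ext ⟨i, p⟩ ⟨j, q⟩
    simp [Matrix.sum_apply, Matrix.single_apply, ite_and]
  rw [expansion]
  refine (norm_sum_le _ _).trans (Finset.sum_le_sum fun i _ => (norm_sum_le _ _).trans
    (Finset.sum_le_sum fun j _ => ?_))
  rw [norm_smul]
  exact mul_le_of_le_one_right (norm_nonneg _) (norm_single_kronecker_one_le i j)

/-- The distance of `T` from leaving the range of the isometry `V` invariant. -/
def defect (V : Matrix a b ℂ) (T : Matrix a a ℂ) : ℝ :=
  ‖T * V - V * compression V T‖

/-- The projection onto the orthogonal complement of the range of an isometry. -/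
def rangeComplement (V : Matrix a b ℂ) : Matrix a a ℂ :=
  1 - V * Vᴴ

theorem defect_eq_norm_rangeComplement_mul (V : Matrix a b ℂ) (T : Matrix a a ℂ) :
    defect V T = ‖rangeComplement V * (T * V)‖ := by
  simp only [defect, rangeComplement, compression, Matrix.sub_mul, Matrix.one_mul,
    Matrix.mul_assoc]

omit [DecidableEq a] in
theorem defect_add_le (V : Matrix a b ℂ) (S T : Matrix a a ℂ) :
    defect V (S + T) ≤ defect V S + defect V T := by
  classical
  simp only [defect_eq_norm_rangeComplement_mul, Matrix.add_mul, Matrix.mul_add]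
  exact norm_add_le _ _

variable {V : Matrix a b ℂ} (hV : Vᴴ * V = 1)

include hV

theorem norm_mul_isometry_le {d : Type} [Fintype d] (A : Matrix d a ℂ) : ‖A * V‖ ≤ ‖A‖ := by
  simpa using l2_opNorm_mul_le_of_le le_rfl (norm_isometry_le hV)

omit [DecidableEq a] in
theorem norm_conjTranspose_isometry_mul_le (A : Matrix a c ℂ) : ‖Vᴴ * A‖ ≤ ‖A‖ := by
  classical
  simpa using l2_opNorm_mul_le_of_le ((l2_opNorm_conjTranspose V).trans_le (norm_isometry_le hV))
    (le_refl ‖A‖)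

theorem norm_compression_le (T : Matrix a a ℂ) : ‖compression V T‖ ≤ ‖T‖ :=
  (norm_mul_isometry_le hV _).trans (norm_conjTranspose_isometry_mul_le hV _)

theorem rangeComplement_mul : rangeComplement V * V = 0 := by
  rw [rangeComplement, Matrix.sub_mul, Matrix.one_mul, Matrix.mul_assoc, hV, Matrix.mul_one,
    sub_self]

theorem norm_rangeComplement_mul_le (A : Matrix a c ℂ) : ‖rangeComplement V * A‖ ≤ ‖A‖ := by
  have idempotent : rangeComplement V * rangeComplement V = rangeComplement V := by
    conv_lhs => enter [2]; rw [rangeComplement]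
    rw [Matrix.mul_sub, Matrix.mul_one, ← Matrix.mul_assoc, rangeComplement_mul hV,
      Matrix.zero_mul, sub_zero]
  have selfAdjoint : (rangeComplement V)ᴴ = rangeComplement V := by simp [rangeComplement]
  have h := l2_opNorm_conjTranspose_mul_self (rangeComplement V)
  rw [selfAdjoint, idempotent] at h
  have h_le : ‖rangeComplement V‖ ≤ 1 := by nlinarith [norm_nonneg (rangeComplement V)]
  simpa using l2_opNorm_mul_le_of_le h_le (le_refl ‖A‖)

theorem defect_le_norm (T : Matrix a a ℂ) : defect V T ≤ ‖T‖ := by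
  rw [defect_eq_norm_rangeComplement_mul]
  exact (norm_rangeComplement_mul_le hV _).trans (norm_mul_isometry_le hV T)

omit [DecidableEq a] in
theorem defect_le_norm_mul_sub_mul (T : Matrix a a ℂ) (S : Matrix b b ℂ) :
    defect V T ≤ ‖T * V - V * S‖ := by
  classical
  have : rangeComplement V * (T * V) = rangeComplement V * (T * V - V * S) := by
    rw [Matrix.mul_sub, ← Matrix.mul_assoc _ V, rangeComplement_mul hV, Matrix.zero_mul, sub_zero]
  rw [defect_eq_norm_rangeComplement_mul, this]
  exact norm_rangeComplement_mul_le hV _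

omit [DecidableEq a] in
theorem norm_compression_sub_le (T : Matrix a a ℂ) (S : Matrix b b ℂ) :
    ‖compression V T - S‖ ≤ ‖T * V - V * S‖ := by
  have : compression V T - S = Vᴴ * (T * V - V * S) := by
    rw [Matrix.mul_sub, ← Matrix.mul_assoc _ V, hV, Matrix.one_mul, compression, Matrix.mul_assoc]
  rw [this]
  exact norm_conjTranspose_isometry_mul_le hV _

theorem defect_mul_le (S T : Matrix a a ℂ) :
    defect V (S * T) ≤ defect V S * ‖T‖ + ‖S‖ * defect V T := by
  have split : rangeComplement V * (S * T * V) =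
      rangeComplement V * (S * V) * compression V T +
      rangeComplement V * (S * (rangeComplement V * (T * V))) := by
    conv_rhs => enter [2, 2, 2]; rw [rangeComplement]
    simp only [compression, Matrix.sub_mul, Matrix.one_mul, Matrix.mul_sub, Matrix.mul_assoc]
    abel
  rw [defect_eq_norm_rangeComplement_mul, split]
  refine (norm_add_le _ _).trans (add_le_add ?_ ?_)
  · exact l2_opNorm_mul_le_of_le (defect_eq_norm_rangeComplement_mul V S).ge
      (norm_compression_le hV T)
  · exact (norm_rangeComplement_mul_le hV _).trans
      (l2_opNorm_mul_le_of_le le_rfl (defect_eq_norm_rangeComplement_mul V T).ge)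

theorem norm_compression_mul_sub_le (S T : Matrix a a ℂ) :
    ‖compression V (S * T) - compression V S * compression V T‖ ≤ ‖S‖ * defect V T := by
  have : compression V (S * T) - compression V S * compression V T =
      Vᴴ * (S * (rangeComplement V * (T * V))) := by
    simp only [compression, rangeComplement, Matrix.sub_mul, Matrix.one_mul, Matrix.mul_sub,
      Matrix.mul_assoc]
  rw [this]
  exact (norm_conjTranspose_isometry_mul_le hV _).trans
    (l2_opNorm_mul_le_of_le le_rfl (defect_eq_norm_rangeComplement_mul V T).ge)

end Compression

section Sampling

variable {ι : Type} [DecidableEq ι]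

/-- The index set of the frequencies onto which symbols on the annulus are compressed. Their
number `m ^ 2 + 1` exceeds that of the pairs of neighbouring frequencies by one, which Bott
periodicity detects. -/
abbrev Frequency (m : ℕ) := Fin (m * m + 1)

/-- The index set of the sample heights in `[0, 1]`: each frequency `k` is supported on the window
of the `m` heights from `k` to `k + m - 1`. -/
abbrev Height (m : ℕ) := Fin (m * m + 1 + m)

/-- The parameter in `[0, 1]` of a sample height. -/
def sampleHeight (m k : ℕ) : I :=
  Set.projIcc 0 1 zero_le_one (k / ((m * m + 1 + m : ℕ) : ℝ))

/-- The primitive root of unity whose powers are the sample points on the circle. -/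
def sampleRoot (m : ℕ) : Circle :=
  Circle.exp (2 * Real.pi / ((m * m + 1 : ℕ) : ℝ))

/-- The sample points on the annulus `[0, 1] × Circle`. -/
def samplePoint (m : ℕ) (x : Height m × Frequency m) : I × Circle :=
  (sampleHeight m x.1, sampleRoot m ^ (x.2 : ℕ))

/-- The multiplication operator of a symbol on the sample points. -/
def sampling (m : ℕ) (F : I × Circle → Matrix ι ι ℂ) :
    Matrix (ι × Height m × Frequency m) (ι × Height m × Frequency m) ℂ :=
  blockDiagonal fun x => F (samplePoint m x)

theorem sampling_smul_one (m : ℕ) (f : I × Circle → ℂ) :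
    sampling m (fun y => f y • (1 : Matrix ι ι ℂ)) =
      (1 : Matrix ι ι ℂ) ⊗ₖ diagonal fun x => f (samplePoint m x) := by
  ext ⟨i, x⟩ ⟨j, y⟩
  simp only [sampling, blockDiagonal_apply, kronecker_apply, diagonal_apply, Matrix.smul_apply,
    smul_eq_mul]
  split_ifs <;> ring

theorem isPrimitiveRoot_sampleRoot (m : ℕ) :
    IsPrimitiveRoot (sampleRoot m : ℂ) (m * m + 1) := by
  convert Complex.isPrimitiveRoot_exp (m * m + 1) (Nat.succ_ne_zero _) using 1
  rw [sampleRoot, Circle.coe_exp]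
  push_cast
  ring_nf

theorem sum_sampleRoot_zpow (m : ℕ) (j : ℤ) (hj : |j| < (m * m + 1 : ℕ)) :
    ∑ p : Frequency m, ((sampleRoot m : ℂ) ^ (p : ℕ)) ^ j =
      if j = 0 then ((m * m + 1 : ℕ) : ℂ) else 0 := by
  split_ifs with h
  · simp [h]
  have hroot := isPrimitiveRoot_sampleRoot m
  have hne : (sampleRoot m : ℂ) ^ j ≠ 1 := fun h1 =>
    h (Int.eq_zero_of_abs_lt_dvd ((hroot.zpow_eq_one_iff_dvd j).1 h1) hj)
  have hpow : ((sampleRoot m : ℂ) ^ j) ^ (m * m + 1) = 1 := by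
    rw [← zpow_natCast, zpow_comm, zpow_natCast, hroot.pow_eq_one, _root_.one_zpow]
  have hgeom := mul_neg_geom_sum ((sampleRoot m : ℂ) ^ j) (m * m + 1)
  rw [hpow, sub_self] at hgeom
  simp only [← zpow_natCast, zpow_comm _ _ j]
  simp only [zpow_natCast]
  rw [Fin.sum_univ_eq_sum_range fun p => ((sampleRoot m : ℂ) ^ j) ^ p]
  exact (mul_eq_zero.1 hgeom).resolve_left (sub_ne_zero.2 hne.symm)

/-- The matrix whose `k`-th column is the character of frequency `k + J` with amplitude `c k` in
the height; the constant makes windows of height `1` and length `m` into unit vectors. -/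
def characterColumns (m : ℕ) (J : ℤ) (c : Frequency m → ℕ → ℂ) :
    Matrix (Height m × Frequency m) (Frequency m) ℂ :=
  of fun x k => ((√((m * m + 1 : ℕ) * m))⁻¹ : ℝ) *
    (((sampleRoot m : ℂ) ^ (x.2 : ℕ)) ^ ((k : ℤ) + J) * c k x.1)

theorem conjTranspose_characterColumns_mul_self {m : ℕ} (hm : 0 < m) (J : ℤ)
    (c : Frequency m → ℕ → ℂ) :
    (characterColumns m J c)ᴴ * characterColumns m J c =
      diagonal fun k => (((m : ℝ)⁻¹ * ∑ r : Height m, ‖c k r‖ ^ 2 : ℝ) : ℂ) := by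
  have hnorm : (((√((m * m + 1 : ℕ) * m))⁻¹ : ℝ) : ℂ) ^ 2 * (m * m + 1 : ℕ) = (m : ℂ)⁻¹ := by
    norm_cast
    rw [inv_pow, Real.sq_sqrt (by positivity)]
    push_cast
    rw [mul_inv, mul_right_comm, inv_mul_cancel₀ (mod_cast Nat.succ_ne_zero (m * m)), one_mul]
  ext k l
  have entry (r : Height m) (p : Frequency m) :
      (characterColumns m J c)ᴴ k (r, p) * characterColumns m J c (r, p) l =
      ((√((m * m + 1 : ℕ) * m))⁻¹ : ℝ) ^ 2 * (star (c k r) * c l r) *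
        ((sampleRoot m : ℂ) ^ (p : ℕ)) ^ ((l : ℤ) - k) := by
    have hne : (sampleRoot m : ℂ) ^ (p : ℕ) ≠ 0 := pow_ne_zero _ (Circle.coe_ne_zero _)
    have hstar : star ((sampleRoot m : ℂ) ^ (p : ℕ)) = ((sampleRoot m : ℂ) ^ (p : ℕ))⁻¹ := by
      rw [← Circle.coe_pow, ← Circle.coe_inv, Circle.coe_inv_eq_conj]
      rfl
    have hreal (x : ℝ) : star (x : ℂ) = x := Complex.conj_ofReal x
    rw [show (l : ℤ) - k = -(k + J) + (l + J) by ring, zpow_add₀ hne (-(k + J)), ← _root_.inv_zpow']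
    simp only [characterColumns, conjTranspose_apply, of_apply, star_mul', star_zpow₀, hstar,
      hreal]
    ring
  rw [Matrix.mul_apply, Fintype.sum_prod_type]
  simp only [entry, ← Finset.mul_sum]
  rw [sum_sampleRoot_zpow m _ (by have := l.2; have := k.2; rw [abs_lt]; omega)]
  by_cases hkl : k = l
  · subst hkl
    have hsq (z : ℂ) : star z * z = ((‖z‖ ^ 2 : ℝ) : ℂ) := by
      rw [mul_comm]
      exact_mod_cast RCLike.mul_conj z
    simp only [sub_self, if_true, diagonal_apply_eq, hsq]
    rw [← Finset.sum_mul, ← Finset.mul_sum, mul_right_comm, hnorm]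
    push_cast
    rfl
  · have : (l : ℤ) - k ≠ 0 := fun h => hkl (by ext; omega)
    simp [this, hkl]

variable [Fintype ι]

theorem norm_one_kronecker_characterColumns_le {m : ℕ} (hm : 0 < m) (J : ℤ)
    (c : Frequency m → ℕ → ℂ) {ε : ℝ} (hε : 0 ≤ ε)
    (h : ∀ k, ∑ r : Height m, ‖c k r‖ ^ 2 ≤ m * ε ^ 2) :
    ‖(1 : Matrix ι ι ℂ) ⊗ₖ characterColumns m J c‖ ≤ ε := by
  refine l2_opNorm_le_of_conjTranspose_mul_self_eq_diagonal hε
    (d := fun x => 1 * (((m : ℝ)⁻¹ * ∑ r : Height m, ‖c x.2 r‖ ^ 2 : ℝ) : ℂ)) ?_ fun x => ?_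
  · rw [conjTranspose_kronecker, ← mul_kronecker_mul, conjTranspose_one, one_mul,
      conjTranspose_characterColumns_mul_self hm, ← diagonal_one, diagonal_kronecker_diagonal]
  · rw [one_mul, Complex.norm_real, Real.norm_of_nonneg (by positivity),
      inv_mul_le_iff₀ (by exact_mod_cast hm)]
    exact h x.2

/-- The indicator function of the heights `k, …, k + m - 1`. -/
def window (m : ℕ) (k : ℤ) (r : ℕ) : ℂ :=
  if k ≤ r ∧ r < k + m then 1 else 0

theorem sum_norm_window_sq (m : ℕ) (k : Frequency m) :
    ∑ r : Height m, ‖window m k r‖ ^ 2 = m := by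
  have indicator (r : ℕ) : ‖window m k r‖ ^ 2 =
      if r ∈ Finset.Ico (k : ℕ) (k + m) then 1 else 0 := by
    have : ((k : ℤ) ≤ r ∧ (r : ℤ) < k + m) ↔ r ∈ Finset.Ico (k : ℕ) (k + m) := by
      rw [Finset.mem_Ico]
      omega
    simp only [window, this]
    split_ifs <;> simp
  have hsub : Finset.Ico (k : ℕ) (k + m) ⊆ Finset.range (m * m + 1 + m) := fun r hr => by
    have := k.2
    rw [Finset.mem_Ico] at hr
    rw [Finset.mem_range]
    omega
  simp only [indicator]
  rw [Fin.sum_univ_eq_sum_range fun r => if r ∈ Finset.Ico (k : ℕ) (k + m) then (1 : ℝ) else 0,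
    Finset.sum_boole, Finset.filter_mem_eq_inter, Finset.inter_eq_right.2 hsub]
  simp

theorem sum_norm_window_sub_window_sq_le (m : ℕ) (k : ℤ) {J : ℤ} (hJ : |J| ≤ 1) :
    ∑ r : Height m, ‖window m k r - window m (k + J) r‖ ^ 2 ≤ 2 := by
  have endpoints (r : ℕ) : ‖window m k r - window m (k + J) r‖ ^ 2 ≤
      (if (r : ℤ) = min k (k + J) then 1 else 0) +
        (if (r : ℤ) = min k (k + J) + m then 1 else 0) := by
    rw [abs_le] at hJ
    simp only [window]
    split_ifs <;> first | omega | norm_num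
  have sum_single_le (a : ℤ) : ∑ r : Height m, (if (r : ℤ) = a then (1 : ℝ) else 0) ≤ 1 := by
    rw [Finset.sum_boole]
    refine mod_cast Finset.card_le_one.2 fun x hx y hy => ?_
    simp only [Finset.mem_filter, Finset.mem_univ, true_and] at hx hy
    ext
    omega
  refine (Finset.sum_le_sum fun (r : Height m) _ => endpoints r).trans ?_
  rw [Finset.sum_add_distrib]
  linarith [sum_single_le (min k (k + J)), sum_single_le (min k (k + J) + m)]

/-- The isometry sending a frequency to the corresponding windowed character. -/
def windowIsometry (ι : Type) [DecidableEq ι] (m : ℕ) :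
    Matrix (ι × Height m × Frequency m) (ι × Frequency m) ℂ :=
  (1 : Matrix ι ι ℂ) ⊗ₖ characterColumns m 0 fun k r => window m k r

theorem conjTranspose_windowColumns_mul_self {m : ℕ} (hm : 0 < m) :
    (characterColumns m 0 fun k r => window m k r)ᴴ *
      (characterColumns m 0 fun k r => window m k r) = 1 := by
  simp [conjTranspose_characterColumns_mul_self hm, sum_norm_window_sq, hm.ne']

theorem conjTranspose_windowIsometry_mul_self {m : ℕ} (hm : 0 < m) :
    (windowIsometry ι m)ᴴ * windowIsometry ι m = 1 := by
  rw [windowIsometry, conjTranspose_kronecker, ← mul_kronecker_mul,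
    conjTranspose_windowColumns_mul_self hm, conjTranspose_one, one_mul, one_kronecker_one]

/-- The shift by `J` frequencies with weights `d`. -/
def weightedShift (m : ℕ) (J : ℤ) (d : Frequency m → ℂ) : Matrix (Frequency m) (Frequency m) ℂ :=
  of fun l k => if (l : ℤ) = k + J then d k else 0

theorem diagonal_mul_windowColumns (m : ℕ) (J : ℤ) (f : I → ℂ) :
    (diagonal fun x => f (samplePoint m x).1 * ((samplePoint m x).2 : ℂ) ^ J) *
        (characterColumns m 0 fun k r => window m k r) =
      characterColumns m J fun k r => f (sampleHeight m r) * window m k r := by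
  ext x k
  simp only [diagonal_mul, characterColumns, of_apply, samplePoint, add_zero, Circle.coe_pow]
  rw [zpow_add₀ (pow_ne_zero _ (Circle.coe_ne_zero _))]
  ring

theorem windowColumns_mul_weightedShift (m : ℕ) (J : ℤ) (d : Frequency m → ℂ)
    (hd : ∀ k : Frequency m, ¬ (0 ≤ (k : ℤ) + J ∧ (k : ℤ) + J < (m * m + 1 : ℕ)) → d k = 0) :
    (characterColumns m 0 fun k r => window m k r) * weightedShift m J d =
      characterColumns m J fun k r => d k * window m (k + J) r := by
  ext x k
  rw [Matrix.mul_apply]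
  by_cases h : 0 ≤ (k : ℤ) + J ∧ (k : ℤ) + J < (m * m + 1 : ℕ)
  · obtain ⟨l, hl⟩ : ∃ l : Frequency m, (l : ℤ) = k + J :=
      ⟨⟨((k : ℤ) + J).toNat, by omega⟩, by simp; omega⟩
    rw [Finset.sum_eq_single l _ (by simp)]
    · simp only [characterColumns, weightedShift, of_apply, ← hl, if_true, add_zero]
      ring
    · intro b _ hb
      have : (b : ℤ) ≠ k + J := fun h => hb (by ext; omega)
      simp [weightedShift, this]
  · simp [characterColumns, weightedShift, hd k h]

theorem norm_window_error_sq_le {m : ℕ} {k J : ℤ} {r : ℕ} {z d : ℂ} {M ε : ℝ} (hM : ‖d‖ ≤ M)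
    (hε : k ≤ r → r < k + m → ‖z - d‖ ≤ ε) :
    ‖z * window m k r - d * window m (k + J) r‖ ^ 2 ≤
      2 * ε ^ 2 * ‖window m k r‖ ^ 2 + 2 * M ^ 2 * ‖window m k r - window m (k + J) r‖ ^ 2 := by
  have near : ‖(z - d) * window m k r‖ ≤ ε * ‖window m k r‖ := by
    rw [norm_mul]
    by_cases h : k ≤ r ∧ r < k + m
    · exact mul_le_mul_of_nonneg_right (hε h.1 h.2) (norm_nonneg _)
    · simp [window, if_neg h]
  have far : ‖d * (window m k r - window m (k + J) r)‖ ≤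
      M * ‖window m k r - window m (k + J) r‖ := by
    rw [norm_mul]
    exact mul_le_mul_of_nonneg_right hM (norm_nonneg _)
  calc ‖z * window m k r - d * window m (k + J) r‖ ^ 2
      = ‖(z - d) * window m k r + d * (window m k r - window m (k + J) r)‖ ^ 2 := by ring_nf
    _ ≤ (ε * ‖window m k r‖ + M * ‖window m k r - window m (k + J) r‖) ^ 2 :=
        pow_le_pow_left₀ (norm_nonneg _) ((norm_add_le _ _).trans (add_le_add near far)) 2
    _ ≤ _ := by
        nlinarith [sq_nonneg (ε * ‖window m k r‖ - M * ‖window m k r - window m (k + J) r‖)]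

theorem norm_sampling_sub_weightedShift_le {m : ℕ} (hm : 0 < m) {J : ℤ} (hJ : |J| ≤ 1) {f : I → ℂ}
    {d : Frequency m → ℂ}
    (hd : ∀ k : Frequency m, ¬ (0 ≤ (k : ℤ) + J ∧ (k : ℤ) + J < (m * m + 1 : ℕ)) → d k = 0)
    {M ε δ : ℝ} (hM : ∀ k, ‖d k‖ ≤ M)
    (hε : ∀ (k : Frequency m) (r : ℕ), (k : ℕ) ≤ r → r < k + m → ‖f (sampleHeight m r) - d k‖ ≤ ε)
    (hδ : 0 ≤ δ) (h : 2 * ε ^ 2 + 4 * M ^ 2 / m ≤ δ ^ 2) :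
    ‖sampling m (fun y => (f y.1 * (y.2 : ℂ) ^ J) • (1 : Matrix ι ι ℂ)) * windowIsometry ι m -
      windowIsometry ι m * ((1 : Matrix ι ι ℂ) ⊗ₖ weightedShift m J d)‖ ≤ δ := by
  have : (0 : ℝ) < m := by exact_mod_cast hm
  have difference : sampling m (fun y => (f y.1 * (y.2 : ℂ) ^ J) • (1 : Matrix ι ι ℂ)) *
        windowIsometry ι m - windowIsometry ι m * ((1 : Matrix ι ι ℂ) ⊗ₖ weightedShift m J d) =
      (1 : Matrix ι ι ℂ) ⊗ₖ characterColumns m J fun k r =>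
        f (sampleHeight m r) * window m k r - d k * window m (k + J) r := by
    rw [sampling_smul_one m fun y => f y.1 * (y.2 : ℂ) ^ J, windowIsometry, ← mul_kronecker_mul,
      ← mul_kronecker_mul, one_mul, diagonal_mul_windowColumns,
      windowColumns_mul_weightedShift m J d hd]
    ext ⟨i, x⟩ ⟨j, k⟩
    simp only [Matrix.sub_apply, kronecker_apply, characterColumns, of_apply]
    ring
  rw [difference]
  refine norm_one_kronecker_characterColumns_le hm J _ hδ fun k => ?_
  calc ∑ r : Height m, ‖f (sampleHeight m r) * window m k r - d k * window m (k + J) r‖ ^ 2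
      ≤ ∑ r : Height m, (2 * ε ^ 2 * ‖window m k r‖ ^ 2 +
          2 * M ^ 2 * ‖window m k r - window m (k + J) r‖ ^ 2) :=
        Finset.sum_le_sum fun r _ => norm_window_error_sq_le (hM k) fun h₁ h₂ =>
          hε k r (by omega) (by omega)
    _ ≤ 2 * ε ^ 2 * m + 2 * M ^ 2 * 2 := by
        rw [Finset.sum_add_distrib, ← Finset.mul_sum, ← Finset.mul_sum, sum_norm_window_sq]
        gcongr
        exact sum_norm_window_sub_window_sq_le m k hJ
    _ = m * (2 * ε ^ 2 + 4 * M ^ 2 / m) := by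
        field_simp
        ring
    _ ≤ m * δ ^ 2 := by gcongr

end Sampling

section Quantization

variable {ι : Type}

theorem sampling_const (m : ℕ) (G : Matrix ι ι ℂ) :
    sampling m (fun _ => G) = G ⊗ₖ (1 : Matrix (Height m × Frequency m) _ ℂ) :=
  (kronecker_one G).symm

theorem sampling_add (m : ℕ) (F G : I × Circle → Matrix ι ι ℂ) :
    sampling m (F + G) = sampling m F + sampling m G :=
  blockDiagonal_add _ _

variable [Fintype ι]

theorem sampling_mul (m : ℕ) (F G : I × Circle → Matrix ι ι ℂ) :
    sampling m (F * G) = sampling m F * sampling m G :=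
  blockDiagonal_mul _ _

variable [DecidableEq ι]

theorem norm_sampling_smul_one_le (m : ℕ) {f : I × Circle → ℂ} {M : ℝ} (hM : ∀ y, ‖f y‖ ≤ M) :
    ‖sampling m (fun y => f y • (1 : Matrix ι ι ℂ))‖ ≤ M := by
  have hM₀ : 0 ≤ M := (norm_nonneg _).trans (hM (0, 1))
  rw [sampling_smul_one, ← diagonal_one, diagonal_kronecker_diagonal, l2_opNorm_diagonal,
    pi_norm_le_iff_of_nonneg hM₀]
  exact fun x => by simpa using hM _

/-- The Toeplitz-type quantization of a matrix-valued symbol on the annulus: the compression of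
its multiplication operator to the windowed characters. -/
def quantization (m : ℕ) (F : I × Circle → Matrix ι ι ℂ) :
    Matrix (ι × Frequency m) (ι × Frequency m) ℂ :=
  compression (windowIsometry ι m) (sampling m F)

theorem quantization_const {m : ℕ} (hm : 0 < m) (G : Matrix ι ι ℂ) :
    quantization m (fun _ => G) = G ⊗ₖ (1 : Matrix (Frequency m) (Frequency m) ℂ) := by
  rw [quantization, compression, sampling_const, windowIsometry, conjTranspose_kronecker,
    ← mul_kronecker_mul, ← mul_kronecker_mul]
  simp [conjTranspose_windowColumns_mul_self hm]

theorem defect_sampling_const {m : ℕ} (hm : 0 < m) (G : Matrix ι ι ℂ) :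
    defect (windowIsometry ι m) (sampling m fun _ => G) = 0 := by
  rw [defect, ← quantization, quantization_const hm, sampling_const, windowIsometry,
    ← mul_kronecker_mul, ← mul_kronecker_mul]
  simp

theorem norm_quantization_mul_sub_le {m : ℕ} (hm : 0 < m) (F G : I × Circle → Matrix ι ι ℂ) :
    ‖quantization m (F * G) - quantization m F * quantization m G‖ ≤
      ‖sampling m F‖ * defect (windowIsometry ι m) (sampling m G) := by
  simpa only [quantization, sampling_mul] using
    norm_compression_mul_sub_le (conjTranspose_windowIsometry_mul_self hm) _ _

variable {W : Type*}

/-- A family of symbols is asymptotically invariant if its multiplication operators almost leave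
the range of the windowed characters invariant, uniformly in the parameter. Quantization is then
asymptotically multiplicative on it. -/
structure AsymptoticallyInvariant (F : W → I × Circle → Matrix ι ι ℂ) : Prop where
  exists_norm_le : ∃ M : ℝ, ∀ m w, ‖sampling m (F w)‖ ≤ M
  eventually_defect_le : ∀ ε : ℝ, 0 < ε →
    ∀ᶠ m : ℕ in atTop, ∀ w, defect (windowIsometry ι m) (sampling m (F w)) ≤ ε

namespace AsymptoticallyInvariant

variable {F G : W → I × Circle → Matrix ι ι ℂ}

theorem exists_pos_norm_le (hF : AsymptoticallyInvariant F) :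
    ∃ M : ℝ, 0 < M ∧ ∀ m w, ‖sampling m (F w)‖ ≤ M := by
  obtain ⟨M, hM⟩ := hF.exists_norm_le
  exact ⟨|M| + 1, by positivity, fun m w => (hM m w).trans (by linarith [le_abs_self M])⟩

theorem add (hF : AsymptoticallyInvariant F) (hG : AsymptoticallyInvariant G) :
    AsymptoticallyInvariant (F + G) where
  exists_norm_le := by
    obtain ⟨M, hM⟩ := hF.exists_norm_le
    obtain ⟨M', hM'⟩ := hG.exists_norm_le
    refine ⟨M + M', fun m w => ?_⟩
    rw [Pi.add_apply, sampling_add]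
    exact (norm_add_le _ _).trans (add_le_add (hM m w) (hM' m w))
  eventually_defect_le ε hε := by
    filter_upwards [hF.eventually_defect_le _ (half_pos hε),
      hG.eventually_defect_le _ (half_pos hε)] with m hFm hGm w
    rw [Pi.add_apply, sampling_add, ← add_halves ε]
    exact (defect_add_le _ _ _).trans (add_le_add (hFm w) (hGm w))

theorem mul (hF : AsymptoticallyInvariant F) (hG : AsymptoticallyInvariant G) :
    AsymptoticallyInvariant (F * G) := by
  obtain ⟨M, hM₀, hM⟩ := hF.exists_pos_norm_le
  obtain ⟨M', hM'₀, hM'⟩ := hG.exists_pos_norm_le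
  refine ⟨⟨M * M', fun m w => ?_⟩, fun ε hε => ?_⟩
  · rw [Pi.mul_apply, sampling_mul]
    exact l2_opNorm_mul_le_of_le (hM m w) (hM' m w)
  filter_upwards [hF.eventually_defect_le (ε / 2 / M') (by positivity),
    hG.eventually_defect_le (ε / 2 / M) (by positivity), eventually_gt_atTop 0] with m hFm hGm hm w
  rw [Pi.mul_apply, sampling_mul]
  calc defect (windowIsometry ι m) (sampling m (F w) * sampling m (G w))
      ≤ defect (windowIsometry ι m) (sampling m (F w)) * ‖sampling m (G w)‖ +
          ‖sampling m (F w)‖ * defect (windowIsometry ι m) (sampling m (G w)) :=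
        defect_mul_le (conjTranspose_windowIsometry_mul_self hm) _ _
    _ ≤ ε / 2 / M' * M' + M * (ε / 2 / M) :=
        add_le_add (mul_le_mul (hFm w) (hM' m w) (norm_nonneg _) (by positivity))
          (mul_le_mul (hM m w) (hGm w) (norm_nonneg _) hM₀.le)
    _ = ε := by field_simp; ring

theorem of_bounded_parameter {G : W → Matrix ι ι ℂ} {M : ℝ} (hM : ∀ w i j, ‖G w i j‖ ≤ M) :
    AsymptoticallyInvariant fun w _ => G w where
  exists_norm_le := by
    refine ⟨∑ _ : ι, ∑ _ : ι, M, fun m w => ?_⟩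
    rw [sampling_const]
    exact (norm_kronecker_one_le _).trans
      (Finset.sum_le_sum fun i _ => Finset.sum_le_sum fun j _ => hM w i j)
  eventually_defect_le ε hε := by
    filter_upwards [eventually_gt_atTop 0] with m hm w
    exact (defect_sampling_const hm (G w)).trans_le hε.le

theorem of_forall_approx
    (h : ∀ ε : ℝ, 0 < ε → ∃ G : W → I × Circle → Matrix ι ι ℂ, AsymptoticallyInvariant G ∧
      ∀ m w, ‖sampling m (F w - G w)‖ ≤ ε) :
    AsymptoticallyInvariant F := by
  have split (G : W → I × Circle → Matrix ι ι ℂ) (m w) :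
      sampling m (F w) = sampling m (F w - G w) + sampling m (G w) := by
    rw [← sampling_add, sub_add_cancel]
  refine ⟨?_, fun ε hε => ?_⟩
  · obtain ⟨G, hG, happrox⟩ := h 1 one_pos
    obtain ⟨M, hM⟩ := hG.exists_norm_le
    refine ⟨1 + M, fun m w => ?_⟩
    rw [split G]
    exact (norm_add_le _ _).trans (add_le_add (happrox m w) (hM m w))
  · obtain ⟨G, hG, happrox⟩ := h (ε / 2) (half_pos hε)
    filter_upwards [hG.eventually_defect_le _ (half_pos hε), eventually_gt_atTop 0] with m hGm hm w
    rw [split G, ← add_halves ε]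
    exact (defect_add_le _ _ _).trans (add_le_add ((defect_le_norm
      (conjTranspose_windowIsometry_mul_self hm) _).trans (happrox m w)) (hGm w))

theorem exists_eventually_isUnit_of_near (hF : AsymptoticallyInvariant F)
    (hG : AsymptoticallyInvariant G) (hFG : F * G = 1) :
    ∃ ε : ℝ, 0 < ε ∧ ∀ᶠ m : ℕ in atTop, ∀ w T, ‖quantization m (G w) - T‖ ≤ ε → IsUnit T := by
  obtain ⟨M, hM₀, hM⟩ := hF.exists_pos_norm_le
  refine ⟨1 / 4 / M, by positivity, ?_⟩
  filter_upwards [hG.eventually_defect_le (1 / 4 / M) (by positivity), eventually_gt_atTop 0]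
    with m hGm hm w T hT
  have hFG_one : quantization m (F w * G w) = 1 := by
    rw [show F w * G w = fun _ => 1 from congrFun hFG w, quantization_const hm, one_kronecker_one]
  have near_inverse : ‖1 - quantization m (F w) * quantization m (G w)‖ ≤ 1 / 4 := by
    rw [← hFG_one]
    refine (norm_quantization_mul_sub_le hm _ _).trans ?_
    calc ‖sampling m (F w)‖ * defect (windowIsometry ι m) (sampling m (G w))
        ≤ M * (1 / 4 / M) := mul_le_mul (hM m w) (hGm w) (norm_nonneg _) hM₀.le
      _ = 1 / 4 := by field_simp
  have perturbation : ‖quantization m (F w) * (quantization m (G w) - T)‖ ≤ 1 / 4 := by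
    calc ‖quantization m (F w) * (quantization m (G w) - T)‖
        ≤ M * (1 / 4 / M) := l2_opNorm_mul_le_of_le ((norm_compression_le
          (conjTranspose_windowIsometry_mul_self hm) _).trans (hM m w)) hT
      _ = 1 / 4 := by field_simp
  have unit : IsUnit (quantization m (F w) * T) := by
    refine isUnit_of_norm_one_sub_lt ?_
    calc ‖1 - quantization m (F w) * T‖
        = ‖(1 - quantization m (F w) * quantization m (G w)) +
            quantization m (F w) * (quantization m (G w) - T)‖ := by
          rw [Matrix.mul_sub, sub_add_sub_cancel]
      _ ≤ 1 / 4 + 1 / 4 := (norm_add_le _ _).trans (add_le_add near_inverse perturbation)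
      _ < 1 := by norm_num
  rw [isUnit_iff_isUnit_det] at unit ⊢
  rw [det_mul] at unit
  exact isUnit_of_mul_isUnit_right unit

end AsymptoticallyInvariant

theorem dist_sampleHeight_le (m r s : ℕ) :
    dist (sampleHeight m r) (sampleHeight m s) ≤ |(r : ℝ) - s| / ((m * m + 1 + m : ℕ) : ℝ) := by
  rw [Subtype.dist_eq, Real.dist_eq]
  refine (Set.abs_projIcc_sub_projIcc _).trans_eq ?_
  rw [← sub_div, abs_div, abs_of_pos (by positivity : (0 : ℝ) < ((m * m + 1 + m : ℕ) : ℝ))]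

theorem sampleHeight_zero (m : ℕ) : sampleHeight m 0 = 0 := by
  ext
  simp [sampleHeight]

theorem dist_one_sampleHeight_le (m : ℕ) :
    dist 1 (sampleHeight m (m * m)) ≤ (m + 1) / ((m * m + 1 + m : ℕ) : ℝ) := by
  have hone : (1 : I) = sampleHeight m (m * m + 1 + m) := by
    ext
    rw [sampleHeight, div_self (Nat.cast_ne_zero.2 (by omega))]
    simp
  rw [hone]
  refine (dist_sampleHeight_le _ _ _).trans ?_
  gcongr
  push_cast
  rw [abs_le]
  constructor <;> linarith [(Nat.cast_nonneg m : (0 : ℝ) ≤ m)]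

theorem eventually_relative_window_lt {δ : ℝ} (hδ : 0 < δ) :
    ∀ᶠ m : ℕ in atTop, (2 * m + 1) / ((m * m + 1 + m : ℕ) : ℝ) < δ := by
  filter_upwards [(tendsto_const_div_atTop_nhds_zero_nat (3 : ℝ)).eventually (gt_mem_nhds hδ),
    eventually_gt_atTop 0] with m hlt hm
  have hm' : (1 : ℝ) ≤ m := by exact_mod_cast hm
  refine lt_of_le_of_lt ?_ hlt
  rw [div_le_div_iff₀ (by positivity) (by positivity)]
  push_cast
  nlinarith

theorem exists_forall_norm_le_of_continuous [TopologicalSpace W] [CompactSpace W] {f : W → ℂ}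
    (hf : Continuous f) : ∃ M : ℝ, ∀ x, ‖f x‖ ≤ M := by
  obtain ⟨M, hM⟩ := isCompact_univ.exists_bound_of_continuousOn hf.continuousOn
  exact ⟨M, fun x => hM x trivial⟩

theorem eventually_norm_sampling_sub_weightedShift_le {J : ℤ} (hJ : |J| ≤ 1) {f : I → ℂ}
    (hf : Continuous f) {ε : ℝ} (hε : 0 < ε) :
    ∀ᶠ m : ℕ in atTop, ∀ d : Frequency m → ℂ,
      (∀ k : Frequency m, ¬ (0 ≤ (k : ℤ) + J ∧ (k : ℤ) + J < (m * m + 1 : ℕ)) → d k = 0) →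
      (∀ k : Frequency m, ∃ t : I,
        dist t (sampleHeight m k) ≤ (m + 1) / ((m * m + 1 + m : ℕ) : ℝ) ∧ d k = f t) →
      ‖sampling m (fun y => (f y.1 * (y.2 : ℂ) ^ J) • (1 : Matrix ι ι ℂ)) * windowIsometry ι m -
        windowIsometry ι m * ((1 : Matrix ι ι ℂ) ⊗ₖ weightedShift m J d)‖ ≤ ε := by
  obtain ⟨δ, hδ, hδf⟩ := Metric.uniformContinuous_iff.1
    (CompactSpace.uniformContinuous_of_continuous hf) (ε / 2) (half_pos hε)
  obtain ⟨M, hM⟩ := exists_forall_norm_le_of_continuous hf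
  filter_upwards [eventually_relative_window_lt hδ, eventually_gt_atTop 0,
    (tendsto_const_div_atTop_nhds_zero_nat (4 * M ^ 2)).eventually
      (gt_mem_nhds (show 0 < ε ^ 2 / 2 by positivity))] with m hwindow hm hlarge d hd hdf
  refine norm_sampling_sub_weightedShift_le hm hJ hd (M := M) (ε := ε / 2) (fun k => ?_)
    (fun k r hkr hrk => ?_) hε.le (by nlinarith)
  · obtain ⟨t, -, hdt⟩ := hdf k
    exact hdt ▸ hM t
  obtain ⟨t, ht, hdt⟩ := hdf k
  rw [hdt, ← dist_eq_norm]
  refine (hδf (lt_of_le_of_lt ?_ hwindow)).le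
  have hkr' : (k : ℝ) ≤ r := by exact_mod_cast hkr
  have hrk' : (r : ℝ) ≤ k + m := by exact_mod_cast hrk.le
  calc dist (sampleHeight m r) t
      ≤ dist (sampleHeight m r) (sampleHeight m k) + dist t (sampleHeight m k) :=
        dist_triangle_right _ _ _
    _ ≤ m / ((m * m + 1 + m : ℕ) : ℝ) + (m + 1) / ((m * m + 1 + m : ℕ) : ℝ) := by
        refine add_le_add ((dist_sampleHeight_le m r k).trans ?_) ht
        gcongr
        rw [abs_of_nonneg (by linarith)]
        linarith
    _ = (2 * m + 1) / ((m * m + 1 + m : ℕ) : ℝ) := by ring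

theorem asymptoticallyInvariant_monomial {J : ℤ} (hJ : |J| ≤ 1) {f : I → ℂ} (hf : Continuous f)
    (hpoles : J ≠ 0 → f 0 = 0 ∧ f 1 = 0) :
    AsymptoticallyInvariant
      fun (_ : W) (y : I × Circle) => (f y.1 * (y.2 : ℂ) ^ J) • (1 : Matrix ι ι ℂ) := by
  refine ⟨?_, fun ε hε => ?_⟩
  · obtain ⟨M, hM⟩ := exists_forall_norm_le_of_continuous hf
    refine ⟨M, fun m _ => norm_sampling_smul_one_le m fun y => ?_⟩
    rw [norm_mul, norm_zpow, Circle.norm_coe, _root_.one_zpow, mul_one]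
    exact hM y.1
  filter_upwards [eventually_norm_sampling_sub_weightedShift_le (ι := ι) hJ hf hε,
    eventually_gt_atTop 0] with m hshift hm w
  let d (k : Frequency m) : ℂ :=
    if 0 ≤ (k : ℤ) + J ∧ (k : ℤ) + J < (m * m + 1 : ℕ) then f (sampleHeight m k) else 0
  refine (defect_le_norm_mul_sub_mul (conjTranspose_windowIsometry_mul_self hm) _ _).trans
    (hshift d (fun k hk => if_neg hk) fun k => ?_)
  by_cases hk : 0 ≤ (k : ℤ) + J ∧ (k : ℤ) + J < (m * m + 1 : ℕ)
  · exact ⟨sampleHeight m k, by rw [dist_self]; positivity, if_pos hk⟩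
  have hk_lt := k.2
  have hJ₀ : J ≠ 0 := by
    rintro rfl
    omega
  have hd : d k = 0 := if_neg hk
  have : (k : ℕ) = 0 ∨ (k : ℕ) = m * m := by
    rw [abs_le] at hJ
    omega
  rcases this with hbottom | htop
  · refine ⟨0, ?_, by rw [hd, (hpoles hJ₀).1]⟩
    rw [hbottom, sampleHeight_zero, dist_self]
    positivity
  · exact ⟨1, by rw [htop]; exact dist_one_sampleHeight_le m, by rw [hd, (hpoles hJ₀).2]⟩

end Quantization

section StoneWeierstrass

/-- The map that collapses each boundary circle of the annulus `[0, 1] × Circle` to a point; its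
range is a model of the two-sphere. -/
def collapse (y : I × Circle) : ℝ × ℂ :=
  (y.1, ((y.1 : ℝ) * (1 - y.1) : ℝ) * (y.2 : ℂ))

/-- The relation that identifies the annulus with two collapsed boundary circles with the
two-sphere. -/
def poles : Setoid (I × Circle) :=
  Setoid.ker collapse

theorem poles_iff {x y : I × Circle} :
    poles x y ↔ x.1 = y.1 ∧ (x.1 = 0 ∨ x.1 = 1 ∨ x.2 = y.2) := by
  obtain ⟨t, z⟩ := x
  obtain ⟨t', z'⟩ := y
  have height_eq_zero_iff : (((t : ℝ) * (1 - t) : ℝ) : ℂ) = 0 ↔ t = 0 ∨ t = 1 := by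
    rw [Complex.ofReal_eq_zero, mul_eq_zero, sub_eq_zero, eq_comm (a := (1 : ℝ))]
    simp
  change collapse (t, z) = collapse (t', z') ↔ t = t' ∧ (t = 0 ∨ t = 1 ∨ z = z')
  simp only [collapse, Prod.mk.injEq, Subtype.coe_inj]
  refine and_congr_right fun h => ?_
  rw [← h, mul_eq_mul_left_iff, height_eq_zero_iff, Circle.coe_inj]
  tauto

theorem continuous_collapse : Continuous collapse := by
  unfold collapse
  fun_prop

instance : CompactSpace (Set.range collapse) :=
  isCompact_iff_compactSpace.1 (isCompact_range continuous_collapse)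

/-- The quotient map from the annulus to the two-sphere. -/
def collapseMap : C(I × Circle, Set.range collapse) :=
  ⟨Set.rangeFactorization collapse, continuous_collapse.subtype_mk _⟩

@[simp]
theorem coe_collapseMap (y : I × Circle) : (collapseMap y : ℝ × ℂ) = collapse y :=
  rfl

variable {ι : Type} [Fintype ι] [DecidableEq ι] {W : Type*} [TopologicalSpace W] [CompactSpace W]

theorem asymptoticallyInvariant_smul_one_of_parameter {f : W → ℂ} (hf : Continuous f) :
    AsymptoticallyInvariant fun (w : W) (_ : I × Circle) => f w • (1 : Matrix ι ι ℂ) := by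
  obtain ⟨M, hM⟩ := exists_forall_norm_le_of_continuous hf
  refine .of_bounded_parameter (M := |M|) fun w i j => ?_
  by_cases h : i = j
  · simpa [h] using (hM w).trans (le_abs_self M)
  · simp [h]

variable (ι) in
/-- The scalar symbols given by a function on the two-sphere with parameters. -/
def scalarSymbol (g : C(W × Set.range collapse, ℂ)) (w : W) (y : I × Circle) : Matrix ι ι ℂ :=
  g (w, collapseMap y) • 1

theorem isClosed_setOf_asymptoticallyInvariant_scalarSymbol :
    IsClosed {g : C(W × Set.range collapse, ℂ) | AsymptoticallyInvariant (scalarSymbol ι g)} := by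
  refine isClosed_of_closure_subset fun g hg => .of_forall_approx fun ε hε => ?_
  obtain ⟨g', hg', hdist⟩ := Metric.mem_closure_iff.1 hg ε hε
  refine ⟨_, hg', fun m w => ?_⟩
  rw [show scalarSymbol ι g w - scalarSymbol ι g' w = fun y =>
    (g (w, collapseMap y) - g' (w, collapseMap y)) • (1 : Matrix ι ι ℂ) from
      funext fun y => (sub_smul _ _ _).symm]
  refine norm_sampling_smul_one_le m fun y => ?_
  rw [← dist_eq_norm]
  exact (ContinuousMap.dist_apply_le_dist _).trans hdist.le

variable (ι W) in
/-- The star algebra of the functions on the two-sphere with parameters that give asymptotically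
invariant symbols. The adjoint is included as invariance of a subspace under an operator does not
pass to the adjoint operator. -/
def asymptoticallyInvariantFunctions : StarSubalgebra ℂ C(W × Set.range collapse, ℂ) where
  carrier := {g | AsymptoticallyInvariant (scalarSymbol ι g) ∧
    AsymptoticallyInvariant (scalarSymbol ι (star g))}
  mul_mem' {f g} := by
    have symbol_mul (f g : C(W × Set.range collapse, ℂ)) :
        scalarSymbol ι (f * g) = scalarSymbol ι f * scalarSymbol ι g := by
      funext w y
      simp [scalarSymbol, smul_smul, mul_comm]
    rintro ⟨hf, hf'⟩ ⟨hg, hg'⟩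
    refine ⟨symbol_mul f g ▸ hf.mul hg, ?_⟩
    rw [star_mul, symbol_mul]
    exact hg'.mul hf'
  add_mem' {f g} := by
    have symbol_add (f g : C(W × Set.range collapse, ℂ)) :
        scalarSymbol ι (f + g) = scalarSymbol ι f + scalarSymbol ι g := by
      funext w y
      simp [scalarSymbol, add_smul]
    rintro ⟨hf, hf'⟩ ⟨hg, hg'⟩
    refine ⟨symbol_add f g ▸ hf.add hg, ?_⟩
    rw [star_add, symbol_add]
    exact hf'.add hg'
  algebraMap_mem' c := by
    have symbol_const (c : ℂ) :
        AsymptoticallyInvariant (scalarSymbol ι (algebraMap ℂ C(W × Set.range collapse, ℂ) c)) :=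
      asymptoticallyInvariant_smul_one_of_parameter continuous_const
    exact ⟨symbol_const c, by simpa only [algebraMap_star_comm] using symbol_const (star c)⟩
  star_mem' := fun ⟨hf, hf'⟩ => ⟨hf', by rwa [star_star]⟩

theorem isClosed_asymptoticallyInvariantFunctions :
    IsClosed (asymptoticallyInvariantFunctions ι W : Set C(W × Set.range collapse, ℂ)) :=
  isClosed_setOf_asymptoticallyInvariant_scalarSymbol.inter
    (isClosed_setOf_asymptoticallyInvariant_scalarSymbol.preimage continuous_star)

theorem ofReal_mem_asymptoticallyInvariantFunctions {g : C(W × Set.range collapse, ℝ)}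
    (hg : AsymptoticallyInvariant fun (w : W) y =>
      (g (w, collapseMap y) : ℂ) • (1 : Matrix ι ι ℂ)) :
    (⟨fun x => (g x : ℂ), by fun_prop⟩ : C(W × Set.range collapse, ℂ)) ∈
      asymptoticallyInvariantFunctions ι W := by
  refine ⟨hg, ?_⟩
  convert hg using 3
  simp [scalarSymbol]

theorem equator_mem_asymptoticallyInvariantFunctions :
    (⟨fun x => x.2.1.2, by fun_prop⟩ : C(W × Set.range collapse, ℂ)) ∈
      asymptoticallyInvariantFunctions ι W := by
  have monomial (J : ℤ) (hJ : |J| ≤ 1) :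
      AsymptoticallyInvariant fun (_ : W) (y : I × Circle) =>
        ((((y.1 : ℝ) * (1 - y.1) : ℝ) : ℂ) * (y.2 : ℂ) ^ J) • (1 : Matrix ι ι ℂ) :=
    asymptoticallyInvariant_monomial (f := fun t => (((t : ℝ) * (1 - t) : ℝ) : ℂ)) hJ
      (by fun_prop) (by simp)
  constructor
  · convert monomial 1 (by norm_num) using 3
    simp [scalarSymbol, collapse]
  · convert monomial (-1) (by norm_num) using 3
    simp [scalarSymbol, collapse, ← Circle.coe_inv_eq_conj]

variable [T2Space W]

theorem separatesPoints_asymptoticallyInvariantFunctions :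
    (asymptoticallyInvariantFunctions ι W).SeparatesPoints := by
  rintro ⟨w, s⟩ ⟨w', s'⟩ hne
  by_cases hw : w = w'
  · by_cases hheight : s.1.1 = s'.1.1
    · refine ⟨_, ⟨_, equator_mem_asymptoticallyInvariantFunctions, rfl⟩, fun h => hne ?_⟩
      exact Prod.ext hw (Subtype.ext (Prod.ext hheight h))
    · have hmem : AsymptoticallyInvariant fun (_ : W) y =>
          (((collapseMap y).1.1 : ℝ) : ℂ) • (1 : Matrix ι ι ℂ) := by
        convert asymptoticallyInvariant_monomial (ι := ι) (W := W) (J := 0) (by norm_num)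
          (f := fun t => ((t : ℝ) : ℂ)) (by fun_prop) (by simp) using 3
        simp [collapse]
      refine ⟨_, ⟨_, ofReal_mem_asymptoticallyInvariantFunctions
        (g := ⟨fun x => x.2.1.1, by fun_prop⟩) hmem, rfl⟩, fun h => hheight ?_⟩
      exact Complex.ofReal_injective h
  · obtain ⟨f, h0, h1, -⟩ := exists_continuous_zero_one_of_isClosed
      (isClosed_singleton (x := w)) (isClosed_singleton (x := w')) (by simpa using hw)
    refine ⟨_, ⟨_, ofReal_mem_asymptoticallyInvariantFunctions
      (g := ⟨fun x => f x.1, by fun_prop⟩)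
      (asymptoticallyInvariant_smul_one_of_parameter (f := fun w => (f w : ℂ)) (by fun_prop)),
      rfl⟩, fun h => zero_ne_one (α := ℝ) ?_⟩
    rw [← Pi.zero_apply (M := fun _ => ℝ) w, ← Pi.one_apply (M := fun _ => ℝ) w', ← h0 rfl,
      ← h1 rfl]
    exact Complex.ofReal_injective h

theorem asymptoticallyInvariant_scalarSymbol (g : C(W × Set.range collapse, ℂ)) :
    AsymptoticallyInvariant (scalarSymbol ι g) := by
  have hmem : g ∈ (asymptoticallyInvariantFunctions ι W).topologicalClosure := by
    rw [ContinuousMap.starSubalgebra_topologicalClosure_eq_top_of_separatesPoints _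
      separatesPoints_asymptoticallyInvariantFunctions]
    trivial
  exact (isClosed_asymptoticallyInvariantFunctions.closure_subset hmem).1

theorem isQuotientMap_prodMap_collapseMap :
    IsQuotientMap (Prod.map id collapseMap : W × (I × Circle) → W × Set.range collapse) := by
  have hcont : Continuous (Prod.map id collapseMap : W × (I × Circle) → W × Set.range collapse) :=
    continuous_id.prodMap collapseMap.continuous
  exact hcont.isClosedMap.isQuotientMap hcont
    (Function.surjective_id.prodMap Set.rangeFactorization_surjective)

theorem asymptoticallyInvariant_smul_one {f : W → I × Circle → ℂ} (hf : Continuous ↿f)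
    (hpoles : ∀ w x y, poles x y → f w x = f w y) :
    AsymptoticallyInvariant fun w y => f w y • (1 : Matrix ι ι ℂ) := by
  let q : C(W × (I × Circle), W × Set.range collapse) :=
    ⟨Prod.map id collapseMap, isQuotientMap_prodMap_collapseMap.continuous⟩
  have hfactors : Function.FactorsThrough (⟨↿f, hf⟩ : C(W × (I × Circle), ℂ)) q := by
    rintro ⟨w, x⟩ ⟨w', y⟩ h
    obtain ⟨rfl, hxy⟩ := Prod.ext_iff.1 h
    exact hpoles _ x y (congrArg Subtype.val hxy)
  convert asymptoticallyInvariant_scalarSymbol (ι := ι)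
    (IsQuotientMap.lift (f := q) isQuotientMap_prodMap_collapseMap ⟨↿f, hf⟩ hfactors) using 3
    with w y
  exact congrArg (· • _) (DFunLike.congr_fun (IsQuotientMap.lift_comp (f := q)
    isQuotientMap_prodMap_collapseMap ⟨↿f, hf⟩ hfactors) (w, y)).symm

theorem asymptoticallyInvariant_of_continuous {F : W → I × Circle → Matrix ι ι ℂ}
    (hF : Continuous ↿F) (hpoles : ∀ w x y, poles x y → F w x = F w y) :
    AsymptoticallyInvariant F := by
  have entry (i j : ι) :
      AsymptoticallyInvariant fun w y => (F w y i j • 1) * Matrix.single i j (1 : ℂ) :=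
    (asymptoticallyInvariant_smul_one (hF.matrix_elem i j)
      fun w x y hxy => by rw [hpoles w x y hxy]).mul
      (.of_bounded_parameter (M := 1) fun _ k l => by
        rw [Matrix.single_apply]
        split_ifs <;> simp)
  have hsum : F = ∑ p : ι × ι, fun w y => (F w y p.1 p.2 • 1) * Matrix.single p.1 p.2 (1 : ℂ) := by
    funext w y
    conv_lhs => rw [matrix_eq_sum_single (F w y)]
    simp [Fintype.sum_prod_type]
  rw [hsum]
  exact Finset.sum_induction _ AsymptoticallyInvariant (fun _ _ => .add)
    (.of_bounded_parameter (M := 0) (by simp)) fun p _ => entry p.1 p.2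

end StoneWeierstrass

section QuantizedClass

variable {X : Type*} [TopologicalSpace X] {r : Setoid X} {ι κ : Type} [Fintype ι] [DecidableEq ι]
  [Fintype κ] [DecidableEq κ]

namespace InvertibleFamily

/-- The extension by the identity of a family along an embedding `W` of its fibre as the summand
with the projection `V`. -/
def extend (a : InvertibleFamily r κ) (W : Matrix ι κ ℂ) (V : Matrix κ ι ℂ) (h : V * W = 1) :
    InvertibleFamily r ι where
  toFun x := 1 + W * (a x - 1) * V
  continuous_toFun := by
    have := a.continuous
    fun_prop
  isUnit_toFun x := by
    refine IsUnit.of_mul_eq_one (1 + W * ((a x)⁻¹ - 1) * V) ?_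
    have product : W * (a x - 1) * V * (W * ((a x)⁻¹ - 1) * V) =
        -(W * (a x - 1) * V) - W * ((a x)⁻¹ - 1) * V := by
      calc W * (a x - 1) * V * (W * ((a x)⁻¹ - 1) * V)
          = W * ((a x - 1) * (V * W) * ((a x)⁻¹ - 1)) * V := by simp only [Matrix.mul_assoc]
        _ = W * (-(a x - 1) - ((a x)⁻¹ - 1)) * V := by
            rw [h, Matrix.mul_one, sub_mul, mul_sub, apply_mul_inv]
            simp
        _ = -(W * (a x - 1) * V) - W * ((a x)⁻¹ - 1) * V := by
            rw [Matrix.mul_sub, Matrix.sub_mul, Matrix.mul_neg, Matrix.neg_mul]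
    rw [add_mul, mul_add, mul_add, product]
    simp only [Matrix.mul_one, Matrix.one_mul]
    abel
  eq_of_rel' _ _ hxy := by rw [a.eq_of_rel hxy]

/-- The direct sum of `n` copies of a family. -/
def copies (n : ℕ) (a : InvertibleFamily r ι) : InvertibleFamily r (ι × Fin n) where
  toFun x := a x ⊗ₖ 1
  continuous_toFun := by
    have := a.continuous
    simp only [kronecker_one]
    fun_prop
  isUnit_toFun x := by
    rw [isUnit_iff_isUnit_det, det_kronecker]
    simpa using (a.isUnit_det x).pow n
  eq_of_rel' _ _ hxy := by rw [a.eq_of_rel hxy]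

@[simp]
theorem extend_apply (a : InvertibleFamily r κ) (W : Matrix ι κ ℂ) (V : Matrix κ ι ℂ)
    (h : V * W = 1) (x : X) : a.extend W V h x = 1 + W * (a x - 1) * V := rfl

@[simp]
theorem copies_apply (n : ℕ) (a : InvertibleFamily r ι) (x : X) : a.copies n x = a x ⊗ₖ 1 := rfl

theorem homotopic_of_isUnit_segment {a b : InvertibleFamily r ι}
    (h : ∀ x (t : I), IsUnit (a x + (t : ℂ) • (b x - a x))) : Homotopic a b := by
  refine ⟨⟨fun p => a p.2 + ((p.1 : ℝ) : ℂ) • (b p.2 - a p.2), by fun_prop, fun p => h p.2 p.1, ?_⟩,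
    fun x => ?_, fun x => ?_⟩
  · rintro ⟨t, x⟩ ⟨t', x'⟩ ⟨rfl : t = t', hx⟩
    simp only [a.eq_of_rel hx, b.eq_of_rel hx]
  · change a x + ((0 : ℝ) : ℂ) • (b x - a x) = a x
    simp
  · change a x + ((1 : ℝ) : ℂ) • (b x - a x) = b x
    simp

end InvertibleFamily

open InvertibleFamily

namespace KGroup

theorem kClass_extend (a : InvertibleFamily r κ) (W : Matrix ι κ ℂ) (V : Matrix κ ι ℂ)
    (h : V * W = 1) : (a.extend W V h).kClass = a.kClass := by
  have h₁ : (1 - W * V) * W = 0 := by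
    rw [Matrix.sub_mul, Matrix.one_mul, Matrix.mul_assoc, h, Matrix.mul_one, sub_self]
  have h₂ : V * (1 - W * V) = 0 := by
    rw [Matrix.mul_sub, Matrix.mul_one, ← Matrix.mul_assoc, h, Matrix.one_mul, sub_self]
  have h₃ : (1 - W * V) * (1 - W * V) = 1 - W * V := by
    rw [Matrix.mul_sub, ← Matrix.mul_assoc (1 - W * V), h₁]
    simp
  have involutive : fromBlocks (1 - W * V) W V 0 * fromBlocks (1 - W * V) W V 0 = 1 := by
    simp [fromBlocks_multiply, h₁, h₂, h₃, h]
  -- The involution `u` swaps the fibre of `a` with its image under `W`.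
  let u : InvertibleFamily r (ι ⊕ κ) := ⟨fun _ => fromBlocks (1 - W * V) W V 0, continuous_const,
    fun _ => .of_mul_eq_one _ involutive, fun _ _ _ => rfl⟩
  have hu : u * u = 1 := ext fun _ => involutive
  have conjugate : (a.extend W V h).directSum (1 : InvertibleFamily r κ) =
      u * (1 : InvertibleFamily r ι).directSum a * u := by
    refine ext fun x => ?_
    change fromBlocks (1 + W * (a x - 1) * V) 0 0 1 =
      fromBlocks (1 - W * V) W V 0 * fromBlocks 1 0 0 (a x) * fromBlocks (1 - W * V) W V 0
    simp [fromBlocks_multiply, h₁, h₂, h₃, h, Matrix.mul_sub, Matrix.sub_mul, Matrix.mul_assoc]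
    abel
  have cancel : u.kClass + u.kClass = 0 := by rw [← kClass_mul, hu, kClass_one]
  rw [← kClass_directSum_one (κ := κ), conjugate, kClass_mul, kClass_mul, kClass_directSum,
    kClass_one, zero_add, add_right_comm, cancel, zero_add]

theorem kClass_copies (n : ℕ) (a : InvertibleFamily r ι) :
    (a.copies n).kClass = n • a.kClass := by
  induction n with
  | zero =>
    have : a.copies 0 = 1 := ext fun x => Subsingleton.elim _ _
    rw [this, kClass_one, zero_smul]
  | succ n ih =>
    have split : (a.copies (n + 1)).reindex
        ((Equiv.prodCongr (Equiv.refl ι) finSumFinEquiv.symm).trans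
          ((Equiv.prodSumDistrib ι (Fin n) (Fin 1)).trans
            (Equiv.sumCongr (Equiv.refl _) (Equiv.prodUnique ι (Fin 1))))) =
        (a.copies n).directSum a := by
      ext x (⟨i, k⟩ | i) (⟨j, l⟩ | j) <;>
        simp [Matrix.one_apply, Fin.ext_iff] <;> grind
    simpa only [kClass_reindex, kClass_directSum, ih, succ_nsmul] using congrArg kClass split

end KGroup

open KGroup

namespace InvertibleFamily

/-- The symbol on the annulus given by a family over `X × S²` at a point of `X`. -/
def symbol (a : InvertibleFamily (r.prod poles) ι) (x : X) (y : I × Circle) : Matrix ι ι ℂ :=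
  a (x, y)

theorem symbol_eq_of_rel (a : InvertibleFamily (r.prod poles) ι) {x y : X} (h : r x y) :
    a.symbol x = a.symbol y :=
  funext fun z => a.eq_of_rel ⟨h, poles.refl z⟩

theorem continuous_quantization_symbol (m : ℕ) (a : InvertibleFamily (r.prod poles) ι) :
    Continuous fun x => quantization m (a.symbol x) := by
  have := a.continuous
  unfold quantization compression sampling symbol
  fun_prop

/-- The quantization of a family over `X × S²`, a family over `X`. -/
def quantize (m : ℕ) (a : InvertibleFamily (r.prod poles) ι)
    (h : ∀ x, IsUnit (quantization m (a.symbol x))) : InvertibleFamily r (ι × Frequency m) where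
  toFun x := quantization m (a.symbol x)
  continuous_toFun := continuous_quantization_symbol m a
  isUnit_toFun := h
  eq_of_rel' _ _ hxy := by rw [a.symbol_eq_of_rel hxy]

open Classical in
/-- The class of the quantization of a family over `X × S²`, with the value `0` for those `m` for
which the quantization is not invertible. It plays the role of the index map
`K¹(X × S²) → K¹(X)`, but depends on `m`. -/
def quantizedClass (m : ℕ) (a : InvertibleFamily (r.prod poles) ι) : KGroup r :=
  if h : ∀ x, IsUnit (quantization m (a.symbol x)) then (a.quantize m h).kClass else 0

@[simp]
theorem quantize_apply (m : ℕ) (a : InvertibleFamily (r.prod poles) ι)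
    (h : ∀ x, IsUnit (quantization m (a.symbol x))) (x : X) :
    a.quantize m h x = quantization m (a.symbol x) := rfl

theorem quantizedClass_of_isUnit {m : ℕ} {a : InvertibleFamily (r.prod poles) ι}
    (h : ∀ x, IsUnit (quantization m (a.symbol x))) :
    a.quantizedClass m = (a.quantize m h).kClass :=
  dif_pos h

variable [CompactSpace X] [T2Space X]

theorem asymptoticallyInvariant_symbol (a : InvertibleFamily (r.prod poles) ι) :
    AsymptoticallyInvariant a.symbol :=
  asymptoticallyInvariant_of_continuous a.continuous fun x _ _ h => a.eq_of_rel ⟨r.refl x, h⟩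

theorem exists_eventually_isUnit_of_near (a : InvertibleFamily (r.prod poles) ι) :
    ∃ ε : ℝ, 0 < ε ∧ ∀ᶠ m : ℕ in atTop, ∀ x T, ‖quantization m (a.symbol x) - T‖ ≤ ε → IsUnit T :=
  a⁻¹.asymptoticallyInvariant_symbol.exists_eventually_isUnit_of_near
    a.asymptoticallyInvariant_symbol (funext₂ fun x y => a.inv_mul_apply (x, y))

theorem eventually_isUnit_quantization (a : InvertibleFamily (r.prod poles) ι) :
    ∀ᶠ m : ℕ in atTop, ∀ x, IsUnit (quantization m (a.symbol x)) := by
  obtain ⟨ε, hε, h⟩ := a.exists_eventually_isUnit_of_near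
  filter_upwards [h] with m hm x
  exact hm x _ (by simpa using hε.le)

theorem exists_eventually_quantizedClass_eq_of_near (a : InvertibleFamily (r.prod poles) ι) :
    ∃ ε : ℝ, 0 < ε ∧ ∀ᶠ m : ℕ in atTop, ∀ T : InvertibleFamily r (ι × Frequency m),
      (∀ x, ‖quantization m (a.symbol x) - T x‖ ≤ ε) → a.quantizedClass m = T.kClass := by
  obtain ⟨ε, hε, h⟩ := a.exists_eventually_isUnit_of_near
  refine ⟨ε, hε, ?_⟩
  filter_upwards [h, a.eventually_isUnit_quantization] with m hm hunit T hT
  rw [quantizedClass_of_isUnit hunit]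
  refine kClass_eq_of_homotopic (homotopic_of_isUnit_segment fun x t => hm x _ ?_)
  change ‖quantization m (a.symbol x) - (quantization m (a.symbol x) +
    ((t : ℝ) : ℂ) • (T x - quantization m (a.symbol x)))‖ ≤ ε
  rw [sub_add_cancel_left, norm_neg, norm_smul, Complex.norm_real, Real.norm_of_nonneg t.2.1,
    norm_sub_rev]
  exact (mul_le_of_le_one_left (norm_nonneg _) t.2.2).trans (hT x)

theorem eventually_quantizedClass_mul (a b : InvertibleFamily (r.prod poles) ι) :
    ∀ᶠ m : ℕ in atTop, (a * b).quantizedClass m = a.quantizedClass m + b.quantizedClass m := by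
  obtain ⟨ε, hε, hnear⟩ := (a * b).exists_eventually_quantizedClass_eq_of_near
  obtain ⟨M, hM₀, hM⟩ := a.asymptoticallyInvariant_symbol.exists_pos_norm_le
  filter_upwards [hnear, a.eventually_isUnit_quantization, b.eventually_isUnit_quantization,
    b.asymptoticallyInvariant_symbol.eventually_defect_le (ε / M) (by positivity),
    eventually_gt_atTop 0] with m hm ha hb hdefect hm₀
  rw [quantizedClass_of_isUnit ha, quantizedClass_of_isUnit hb, ← kClass_mul]
  refine hm _ fun x => (norm_quantization_mul_sub_le hm₀ (a.symbol x) (b.symbol x)).trans ?_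
  calc ‖sampling m (a.symbol x)‖ * defect (windowIsometry ι m) (sampling m (b.symbol x))
      ≤ M * (ε / M) := mul_le_mul (hM m x) (hdefect x) (norm_nonneg _) hM₀.le
    _ = ε := mul_div_cancel₀ _ hM₀.ne'

theorem eventually_quantizedClass_eq_of_homotopic {a b : InvertibleFamily (r.prod poles) ι}
    (h : Homotopic a b) : ∀ᶠ m : ℕ in atTop, a.quantizedClass m = b.quantizedClass m := by
  obtain ⟨H, h₀, h₁⟩ := h
  let H' : InvertibleFamily (((⊥ : Setoid I).prod r).prod poles) ι :=
    H.pullback ⟨fun p => (p.1.1, p.1.2, p.2), by fun_prop⟩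
      fun _ _ h => ⟨h.1.1, h.1.2, h.2⟩
  filter_upwards [a.eventually_isUnit_quantization, b.eventually_isUnit_quantization,
    H'.eventually_isUnit_quantization] with m ha hb hH
  rw [quantizedClass_of_isUnit ha, quantizedClass_of_isUnit hb]
  refine kClass_eq_of_homotopic ⟨H'.quantize m hH, fun x => ?_, fun x => ?_⟩
  · exact congrArg (quantization m) (funext fun y => h₀ (x, y))
  · exact congrArg (quantization m) (funext fun y => h₁ (x, y))

theorem eventually_quantizedClass_constRight (a : InvertibleFamily r ι) :
    ∀ᶠ m : ℕ in atTop, (a.constRight poles).quantizedClass m = (m * m + 1) • a.kClass := by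
  filter_upwards [(a.constRight poles).eventually_isUnit_quantization, eventually_gt_atTop 0]
    with m h hm
  have : (a.constRight poles).quantize m h = a.copies (m * m + 1) :=
    ext fun x => quantization_const hm (a x)
  rw [quantizedClass_of_isUnit h, this, kClass_copies]

end InvertibleFamily

theorem quantization_apply (m : ℕ) (F : I × Circle → Matrix ι ι ℂ) (i j : ι) (k l : Frequency m) :
    quantization m F (i, k) (j, l) =
      compression (characterColumns m 0 fun k r => window m k r)
        (diagonal fun x => F (samplePoint m x) i j) k l := by
  simp [quantization, compression, sampling, windowIsometry, Matrix.mul_apply,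
    Fintype.sum_prod_type, blockDiagonal_apply, diagonal_apply, Matrix.one_apply,
    apply_ite (starRingEnd ℂ)]

theorem eventually_quantizedClass_directSum [CompactSpace X] [T2Space X]
    (a : InvertibleFamily (r.prod poles) ι) (b : InvertibleFamily (r.prod poles) κ) :
    ∀ᶠ m : ℕ in atTop,
      (a.directSum b).quantizedClass m = a.quantizedClass m + b.quantizedClass m := by
  filter_upwards [a.eventually_isUnit_quantization, b.eventually_isUnit_quantization,
    (a.directSum b).eventually_isUnit_quantization] with m ha hb hab
  have split : ((a.directSum b).quantize m hab).reindex (Equiv.sumProdDistrib ι κ (Frequency m)) =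
      (a.quantize m ha).directSum (b.quantize m hb) := by
    ext x (⟨i, k⟩ | ⟨i, k⟩) (⟨j, l⟩ | ⟨j, l⟩) <;>
      simp [quantization_apply, symbol, compression]
  rw [quantizedClass_of_isUnit ha, quantizedClass_of_isUnit hb, quantizedClass_of_isUnit hab,
    ← kClass_directSum, ← split, kClass_reindex]

end QuantizedClass

section BottFamily

variable {ι : Type}

theorem sampling_sum {P : Type*} (s : Finset P) (m : ℕ) (F : P → I × Circle → Matrix ι ι ℂ) :
    sampling m (∑ p ∈ s, F p) = ∑ p ∈ s, sampling m (F p) := by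
  refine (congrArg blockDiagonal (funext fun x => ?_)).trans
    (map_sum (blockDiagonalAddMonoidHom ι ι (Height m × Frequency m) ℂ)
      (fun p x => F p (samplePoint m x)) s)
  simp only [Finset.sum_apply]

variable [DecidableEq ι]

/-- The two inclusions of a space in its double. -/
def doubleInclusion (ι : Type) [DecidableEq ι] : Fin 2 → Matrix (ι ⊕ ι) ι ℂ :=
  ![fromRows 1 0, fromRows 0 1]

theorem transpose_doubleInclusion_mul [Fintype ι] (b c : Fin 2) :
    (doubleInclusion ι b)ᵀ * doubleInclusion ι c = if b = c then 1 else 0 := by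
  fin_cases b <;> fin_cases c <;>
    simp [doubleInclusion, transpose_fromRows, fromCols_mul_fromRows]

/-- The component `b` of the embedding of `m²` frequencies in pairs of frequencies with weights
`v`. It lowers the frequency by `b` after a shift by one, so that all `m²` frequencies stay in
range. -/
def shiftComponent (v : Fin 2 → I → ℝ) (m : ℕ) (b : Fin 2) :
    Matrix (Frequency m) (Fin (m * m)) ℂ :=
  of fun l k => if (l : ℕ) + b = k + 1 then ((v b (sampleHeight m k) : ℝ) : ℂ) else 0

/-- The weights of the weighted shift formed by two shift components. -/
def shiftWeight (v : Fin 2 → I → ℝ) (m : ℕ) (b c : Fin 2) (l : Frequency m) : ℂ :=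
  if (l : ℕ) + c ∈ Finset.Icc 1 (m * m) then
    ((v b (sampleHeight m (l + c - 1)) * v c (sampleHeight m (l + c - 1)) : ℝ) : ℂ)
  else 0

variable {v : Fin 2 → I → ℝ}

theorem shiftComponent_mul_transpose (v : Fin 2 → I → ℝ) (m : ℕ) (b c : Fin 2) :
    shiftComponent v m b * (shiftComponent v m c)ᵀ =
      weightedShift m ((c : ℤ) - b) (shiftWeight v m b c) := by
  ext l l'
  simp only [Matrix.mul_apply, transpose_apply, shiftComponent, of_apply, weightedShift,
    shiftWeight, Finset.mem_Icc]
  by_cases h : 1 ≤ (l' : ℕ) + c ∧ (l' : ℕ) + c ≤ m * m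
  · rw [Finset.sum_eq_single ⟨l' + c - 1, by omega⟩]
    · have : (l : ℕ) + b = l' + c ↔ ((l : ℕ) : ℤ) = (l' : ℕ) + ((c : ℕ) - (b : ℕ) : ℤ) := by omega
      simp only [Nat.sub_add_cancel h.1, this, h, and_self, if_true]
      split_ifs <;> simp
    · intro k _ hk
      rw [if_neg (c := (l' : ℕ) + c = k + 1) fun h' => hk (Fin.ext (by simp; omega)), mul_zero]
    · simp
  · rw [if_neg h, ite_self]
    refine Finset.sum_eq_zero fun k _ => ?_
    rw [if_neg (c := (l' : ℕ) + c = k + 1) (by omega), mul_zero]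

theorem transpose_shiftComponent_mul_self (v : Fin 2 → I → ℝ) (m : ℕ) (b : Fin 2) :
    (shiftComponent v m b)ᵀ * shiftComponent v m b =
      diagonal fun k : Fin (m * m) => ((v b (sampleHeight m k) ^ 2 : ℝ) : ℂ) := by
  ext k k'
  rw [Matrix.mul_apply, Finset.sum_eq_single ⟨(k : ℕ) + 1 - b, by omega⟩]
  · have hk : (k : ℕ) + 1 - b + b = k + 1 := by omega
    obtain rfl | hne := eq_or_ne k k'
    · simp [shiftComponent, hk, sq]
    · simp [shiftComponent, hk, hne, Fin.val_ne_of_ne hne]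
  · intro l _ hl
    have : ¬(l : ℕ) + b = k + 1 := fun h => hl (Fin.ext (by simp; omega))
    simp [shiftComponent, this]
  · simp

/-- The isometry from `m²` copies of a space to `m² + 1` copies of its double with the shift
components of `v`. -/
def bottIsometry (ι : Type) [DecidableEq ι] (v : Fin 2 → I → ℝ) (m : ℕ) :
    Matrix ((ι ⊕ ι) × Frequency m) (ι × Fin (m * m)) ℂ :=
  ∑ b, doubleInclusion ι b ⊗ₖ shiftComponent v m b

theorem transpose_bottIsometry (v : Fin 2 → I → ℝ) (m : ℕ) :
    (bottIsometry ι v m)ᵀ = ∑ b, (doubleInclusion ι b)ᵀ ⊗ₖ (shiftComponent v m b)ᵀ :=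
  transpose_sum _ _

variable [Fintype ι]

theorem transpose_bottIsometry_mul_self (hv : ∀ t, v 0 t ^ 2 + v 1 t ^ 2 = 1) (m : ℕ) :
    (bottIsometry ι v m)ᵀ * bottIsometry ι v m = 1 := by
  have hsum : (shiftComponent v m 0)ᵀ * shiftComponent v m 0 +
      (shiftComponent v m 1)ᵀ * shiftComponent v m 1 = 1 := by
    rw [transpose_shiftComponent_mul_self, transpose_shiftComponent_mul_self, diagonal_add,
      ← diagonal_one]
    exact congrArg diagonal (funext fun k => mod_cast hv (sampleHeight m k))
  rw [transpose_bottIsometry, bottIsometry]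
  simp only [Fin.sum_univ_two, Matrix.add_mul, Matrix.mul_add, ← mul_kronecker_mul,
    transpose_doubleInclusion_mul, if_true, zero_ne_one, one_ne_zero, if_false, zero_kronecker,
    add_zero, zero_add]
  rw [← kronecker_add, hsum, one_kronecker_one]

theorem bottIsometry_mul_mul_transpose (v : Fin 2 → I → ℝ) (m : ℕ) (A : Matrix ι ι ℂ) :
    bottIsometry ι v m * (A ⊗ₖ (1 : Matrix (Fin (m * m)) (Fin (m * m)) ℂ)) * (bottIsometry ι v m)ᵀ =
      ∑ p : Fin 2 × Fin 2, (doubleInclusion ι p.1 * A * (doubleInclusion ι p.2)ᵀ) ⊗ₖ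
        weightedShift m ((p.2 : ℤ) - p.1) (shiftWeight v m p.1 p.2) := by
  rw [transpose_bottIsometry, bottIsometry]
  simp only [Matrix.sum_mul, Matrix.mul_sum, Fintype.sum_prod_type, ← mul_kronecker_mul,
    Matrix.mul_one, shiftComponent_mul_transpose]
  exact Finset.sum_comm

theorem norm_quantization_one_add_sum_sub_le {P : Type*} [Fintype P] {m : ℕ} (hm : 0 < m)
    (f : P → I × Circle → ℂ) (G : P → Matrix ι ι ℂ)
    (D : P → Matrix (Frequency m) (Frequency m) ℂ) :
    ‖quantization m (fun y => 1 + ∑ p, f p y • G p) - (1 + ∑ p, G p ⊗ₖ D p)‖ ≤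
      ∑ p, ‖sampling m (fun y => f p y • (1 : Matrix ι ι ℂ)) * windowIsometry ι m -
        windowIsometry ι m * ((1 : Matrix ι ι ℂ) ⊗ₖ D p)‖ *
          ‖G p ⊗ₖ (1 : Matrix (Frequency m) (Frequency m) ℂ)‖ := by
  have symbol_eq : (fun y => 1 + ∑ p, f p y • G p) =
      (fun _ => 1) + ∑ p, (fun y => f p y • (1 : Matrix ι ι ℂ)) * fun _ => G p := by
    ext1 y
    simp
  have sampling_eq : sampling m (fun y => 1 + ∑ p, f p y • G p) =
      1 + ∑ p, sampling m (fun y => f p y • (1 : Matrix ι ι ℂ)) *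
        (G p ⊗ₖ (1 : Matrix (Height m × Frequency m) (Height m × Frequency m) ℂ)) := by
    rw [symbol_eq, sampling_add, sampling_const, one_kronecker_one, sampling_sum]
    simp only [sampling_mul, sampling_const]
  have commute (p : P) :
      (G p ⊗ₖ (1 : Matrix (Height m × Frequency m) (Height m × Frequency m) ℂ)) *
        windowIsometry ι m =
      windowIsometry ι m * (G p ⊗ₖ (1 : Matrix (Frequency m) (Frequency m) ℂ)) := by
    rw [windowIsometry, ← mul_kronecker_mul, ← mul_kronecker_mul]
    simp
  have kronecker_eq (p : P) : G p ⊗ₖ D p = ((1 : Matrix ι ι ℂ) ⊗ₖ D p) *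
      (G p ⊗ₖ (1 : Matrix (Frequency m) (Frequency m) ℂ)) := by
    rw [← mul_kronecker_mul, Matrix.one_mul, Matrix.mul_one]
  refine (norm_compression_sub_le (conjTranspose_windowIsometry_mul_self hm) _ _).trans ?_
  rw [sampling_eq, Matrix.add_mul, Matrix.mul_add, Matrix.one_mul, Matrix.mul_one,
    add_sub_add_left_eq_sub, Matrix.sum_mul, Matrix.mul_sum, ← Finset.sum_sub_distrib]
  refine norm_sum_le_of_le _ fun p _ => ?_
  rw [kronecker_eq, Matrix.mul_assoc, commute, ← Matrix.mul_assoc, ← Matrix.mul_assoc,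
    ← Matrix.sub_mul]
  exact l2_opNorm_mul _ _

omit [Fintype ι] [DecidableEq ι] in
theorem exists_dist_sampleHeight_le_shiftWeight_eq (hv₀ : v 0 0 = 0) (hv₁ : v 1 1 = 0) (m : ℕ)
    (b c : Fin 2) (l : Frequency m) :
    ∃ t, dist t (sampleHeight m l) ≤ (m + 1) / ((m * m + 1 + m : ℕ) : ℝ) ∧
      shiftWeight v m b c l = ((v b t * v c t : ℝ) : ℂ) := by
  by_cases h : (l : ℕ) + c ∈ Finset.Icc 1 (m * m)
  · refine ⟨sampleHeight m (l + c - 1), (dist_sampleHeight_le _ _ _).trans ?_, if_pos h⟩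
    gcongr
    rw [Finset.mem_Icc] at h
    have hc : (c : ℝ) ≤ 1 := by exact_mod_cast (by omega : (c : ℕ) ≤ 1)
    push_cast [h.1]
    rw [abs_le]
    constructor <;> linarith [(Nat.cast_nonneg (c : ℕ) : (0 : ℝ) ≤ _), m.cast_nonneg (α := ℝ)]
  · rw [shiftWeight, if_neg h]
    rw [Finset.mem_Icc] at h
    rcases (by omega : (l : ℕ) = 0 ∧ (c : ℕ) = 0 ∨ (l : ℕ) = m * m ∧ (c : ℕ) = 1) with
      ⟨hl, hc⟩ | ⟨hl, hc⟩
    · refine ⟨0, by rw [hl, sampleHeight_zero, dist_self]; positivity, ?_⟩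
      rw [show c = 0 from Fin.ext hc, hv₀]
      simp
    · refine ⟨1, by rw [hl]; exact dist_one_sampleHeight_le m, ?_⟩
      rw [show c = 1 from Fin.ext hc, hv₁]
      simp

theorem eventually_norm_sampling_sub_shift_le (hvc : ∀ b, Continuous (v b)) (hv₀ : v 0 0 = 0)
    (hv₁ : v 1 1 = 0) (b c : Fin 2) {ε : ℝ} (hε : 0 < ε) :
    ∀ᶠ m : ℕ in atTop, ‖sampling m (fun y : I × Circle =>
        (((v b y.1 * v c y.1 : ℝ) : ℂ) * (y.2 : ℂ) ^ ((c : ℤ) - b)) • (1 : Matrix ι ι ℂ)) *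
          windowIsometry ι m -
        windowIsometry ι m * (1 ⊗ₖ weightedShift m ((c : ℤ) - b) (shiftWeight v m b c))‖ ≤ ε := by
  have := hvc b
  have := hvc c
  filter_upwards [eventually_norm_sampling_sub_weightedShift_le (ι := ι) (J := (c : ℤ) - b)
    (f := fun t => ((v b t * v c t : ℝ) : ℂ)) (by rw [abs_le]; omega) (by fun_prop) hε] with m hm
  refine hm _ (fun l hl => if_neg ?_)
    fun l => exists_dist_sampleHeight_le_shiftWeight_eq hv₀ hv₁ m b c l
  rw [Finset.mem_Icc]
  omega

variable {X : Type*} [TopologicalSpace X] [CompactSpace X] [T2Space X] {r : Setoid X}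

open InvertibleFamily KGroup

-- Toeplitz form of the Bott map: since `v 0` and `v 1` vanish at the respective ends, the
-- quantization is close to the sum of `m²` copies of `u`, embedded by the Bott isometry.
theorem eventually_quantizedClass_eq_nsmul (hvc : ∀ b, Continuous (v b))
    (hv : ∀ t, v 0 t ^ 2 + v 1 t ^ 2 = 1) (hv₀ : v 0 0 = 0) (hv₁ : v 1 1 = 0)
    (u : InvertibleFamily r ι) (a : InvertibleFamily (r.prod poles) (ι ⊕ ι))
    (ha : ∀ x y, a (x, y) = 1 + ∑ p : Fin 2 × Fin 2,
      (((v p.1 y.1 * v p.2 y.1 : ℝ) : ℂ) * (y.2 : ℂ) ^ ((p.2 : ℤ) - p.1)) •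
        (doubleInclusion ι p.1 * (u x - 1) * (doubleInclusion ι p.2)ᵀ)) :
    ∀ᶠ m : ℕ in atTop, a.quantizedClass m = (m * m) • u.kClass := by
  obtain ⟨ε, hε, hnear⟩ := a.exists_eventually_quantizedClass_eq_of_near
  let G (p : Fin 2 × Fin 2) (x : X) : Matrix (ι ⊕ ι) (ι ⊕ ι) ℂ :=
    doubleInclusion ι p.1 * (u x - 1) * (doubleInclusion ι p.2)ᵀ
  have bounded (p) : ∃ M : ℝ, 0 < M ∧ ∀ x (m : ℕ),
      ‖G p x ⊗ₖ (1 : Matrix (Frequency m) (Frequency m) ℂ)‖ ≤ M := by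
    have := u.continuous
    obtain ⟨M, hM⟩ := isCompact_univ.exists_bound_of_continuousOn
      (by fun_prop : Continuous fun x => ∑ i, ∑ j, ‖G p x i j‖).continuousOn
    exact ⟨|M| + 1, by positivity, fun x m => (norm_kronecker_one_le _).trans
      (by linarith [le_abs_self M, (Real.le_norm_self _).trans (hM x trivial)])⟩
  choose M hM₀ hM using bounded
  have shifts := eventually_all.2 fun p : Fin 2 × Fin 2 => eventually_norm_sampling_sub_shift_le
    (ι := ι ⊕ ι) hvc hv₀ hv₁ p.1 p.2 (div_pos hε (mul_pos four_pos (hM₀ p)))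
  filter_upwards [hnear, shifts, eventually_gt_atTop 0] with m hm hshifts hm₀
  have near := hm ((u.copies (m * m)).extend (bottIsometry ι v m) (bottIsometry ι v m)ᵀ
    (transpose_bottIsometry_mul_self hv m)) fun x => ?_
  · rw [near, kClass_extend, kClass_copies]
  have copies_sub_one : u.copies (m * m) x - 1 =
      (u x - 1) ⊗ₖ (1 : Matrix (Fin (m * m)) (Fin (m * m)) ℂ) := by
    simp only [copies_apply, kronecker_one, ← blockDiagonal_one, ← blockDiagonal_sub]
    rfl
  rw [show a.symbol x = _ from funext (ha x), extend_apply, copies_sub_one,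
    bottIsometry_mul_mul_transpose]
  refine (norm_quantization_one_add_sum_sub_le hm₀ _ (fun p => G p x) _).trans ?_
  calc _ ≤ ∑ p, ε / (4 * M p) * M p := Finset.sum_le_sum fun p _ =>
        mul_le_mul (hshifts p) (hM p x m) (norm_nonneg _) (by have := hM₀ p; positivity)
    _ = ∑ _p : Fin 2 × Fin 2, ε / 4 := Finset.sum_congr rfl fun p _ => by
        have := (hM₀ p).ne'
        field_simp
    _ = ε := by
        simp
        ring

end BottFamily

end Quantum

/-! ### Spheres and antipodal maps -/

section Spheres

/-- The underlying matrix of a special unitary matrix, as a monoid homomorphism. -/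
def SU.toMatrix (n : ℕ) : SU n →* Matrix (Fin n) (Fin n) ℂ :=
  (unitaryGroup (Fin n) ℂ).subtype.comp (SU n).subtype

namespace SU

variable {n : ℕ}

theorem toMatrix_injective : Function.Injective (toMatrix n) :=
  Subtype.val_injective.comp Subtype.val_injective

theorem isUnit_toMatrix (A : SU n) : IsUnit (toMatrix n A) :=
  (Group.isUnit A).map _

theorem toMatrix_inv (A : SU n) : toMatrix n A⁻¹ = (toMatrix n A)⁻¹ :=
  (inv_eq_right_inv (by rw [← map_mul, mul_inv_cancel, map_one])).symm

@[fun_prop]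
theorem continuous_toMatrix : Continuous (toMatrix n) :=
  continuous_subtype_val.comp continuous_subtype_val

end SU

/-- The relation of being equal or opposite. -/
def antipodal (Y : Type*) [InvolutiveNeg Y] : Setoid Y where
  r x y := x = y ∨ x = -y
  iseqv :=
    { refl := fun _ => .inl rfl
      symm := Or.imp Eq.symm fun h => by rw [h, neg_neg]
      trans := by
        rintro x y z (rfl | rfl) (rfl | rfl) <;> simp }

theorem antipodal_le_comap {Y Z : Type*} [InvolutiveNeg Y] [InvolutiveNeg Z] {φ : Y → Z}
    (h : ∀ y, φ (-y) = -φ y) : antipodal Y ≤ (antipodal Z).comap φ := by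
  rintro _ _ (rfl | rfl)
  · exact .inl rfl
  · exact .inr (h _)

/-- The unit sphere of `ℂ²`. -/
abbrev Sphere3 : Type := Metric.sphere (0 : EuclideanSpace ℂ (Fin 2)) 1

/-- The sphere of unit vectors of `ℂ²` with real second coordinate. -/
abbrev Sphere2 : Type := {p : Sphere3 // (p.1 1).im = 0}

instance : InvolutiveNeg Sphere2 where
  neg w := ⟨-w.1, by simp [w.2]⟩
  neg_neg _ := by simp

@[simp] theorem Sphere2.coe_neg (w : Sphere2) : ((-w : Sphere2) : Sphere3) = -w := rfl

instance : ContinuousNeg Sphere2 :=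
  ⟨continuous_subtype_val.neg.subtype_mk _⟩

namespace Sphere3

theorem fromColumn_mem_unitaryGroup {a b : ℂ} (h : a * conj a + b * conj b = 1) :
    !![a, -conj b; b, conj a] ∈ unitaryGroup (Fin 2) ℂ := by
  rw [mem_unitaryGroup_iff]
  ext i j
  fin_cases i <;> fin_cases j <;> simp [mul_apply, star_apply] <;> grind

theorem norm_sq_add_norm_sq (p : Sphere3) : ‖p.1 0‖ ^ 2 + ‖p.1 1‖ ^ 2 = 1 := by
  rw [← Fin.sum_univ_two fun i => ‖p.1 i‖ ^ 2, ← EuclideanSpace.norm_sq_eq, norm_eq_of_mem_sphere,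
    one_pow]

theorem mul_conj_add_mul_conj (p : Sphere3) :
    p.1 0 * starRingEnd ℂ (p.1 0) + p.1 1 * starRingEnd ℂ (p.1 1) = 1 := by
  simpa [Complex.mul_conj'] using congrArg Complex.ofReal p.norm_sq_add_norm_sq

/-- The identification of the sphere with `SU(2)`. -/
def toSU (p : Sphere3) : SU 2 :=
  ⟨⟨!![p.1 0, -starRingEnd ℂ (p.1 1); p.1 1, starRingEnd ℂ (p.1 0)],
    fromColumn_mem_unitaryGroup p.mul_conj_add_mul_conj⟩, by
    change det _ = 1
    rw [det_fin_two_of, ← p.mul_conj_add_mul_conj]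
    ring⟩

theorem toMatrix_toSU (p : Sphere3) :
    SU.toMatrix 2 p.toSU = !![p.1 0, -starRingEnd ℂ (p.1 1); p.1 1, starRingEnd ℂ (p.1 0)] := rfl

theorem toMatrix_toSU_neg (p : Sphere3) :
    SU.toMatrix 2 (-p).toSU = -SU.toMatrix 2 p.toSU := by
  simp [toMatrix_toSU]

@[fun_prop]
theorem continuous_toSU : Continuous toSU := by
  refine ((continuous_matrix fun i j => ?_).subtype_mk _).subtype_mk _
  fin_cases i <;> fin_cases j <;> dsimp <;> fun_prop

/-- The north pole of the two-sphere. -/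
def pole : Sphere3 := ⟨EuclideanSpace.single 1 1, by simp⟩

theorem eq_pole_or_eq_neg_pole {p : Sphere3} (h₀ : p.1 0 = 0) (h₁ : (p.1 1).im = 0) :
    p = pole ∨ p = -pole := by
  obtain ⟨x, hx⟩ : ∃ x : ℝ, p.1 1 = x := ⟨_, (Complex.conj_eq_iff_real.1
    (Complex.conj_eq_iff_im.2 h₁)).choose_spec⟩
  have hx1 : x ^ 2 = 1 := by
    simpa [h₀, hx] using p.norm_sq_add_norm_sq
  rcases sq_eq_one_iff.1 hx1 with rfl | rfl
  · left; ext i; fin_cases i <;> simp [pole, h₀, hx]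
  · right; ext i; fin_cases i <;> simp [pole, h₀, hx]

/-- The radial projection of a nonzero vector to the sphere. -/
def ofNeZero (v : EuclideanSpace ℂ (Fin 2)) (hv : v ≠ 0) : Sphere3 :=
  ⟨NormedSpace.normalize v, by simpa using NormedSpace.norm_normalize_eq_one_iff.2 hv⟩

theorem continuous_ofNeZero {Y : Type*} [TopologicalSpace Y] {v : Y → EuclideanSpace ℂ (Fin 2)}
    (hv : Continuous v) (h : ∀ y, v y ≠ 0) : Continuous fun y => ofNeZero (v y) (h y) :=
  ((hv.norm.inv₀ fun y => norm_ne_zero_iff.2 (h y)).smul hv).subtype_mk _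

theorem ofNeZero_eq {v : EuclideanSpace ℂ (Fin 2)} (hv : v ≠ 0) {p : Sphere3} (h : v = p) :
    ofNeZero v hv = p :=
  Subtype.ext (by
    subst h; exact NormedSpace.normalize_eq_self_of_norm_eq_one (norm_eq_of_mem_sphere p))

/-- The vector obtained from `p` by shrinking the coordinate other than the `j`-th one, by a factor
that vanishes at time one where `1 / 2 ≤ ‖p j‖`. -/
def pinchVector (j : Fin 2) (t : I) (p : Sphere3) : EuclideanSpace ℂ (Fin 2) :=
  WithLp.toLp 2 (Function.update ((1 - (t : ℝ) + t * max 0 (1 / 2 - ‖p.1 j‖)) • p.1.ofLp) j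
    (p.1 j))

theorem pinchVector_ne_zero (j : Fin 2) (t : I) (p : Sphere3) : pinchVector j t p ≠ 0 := by
  intro h
  have hj : p.1 j = 0 := by simpa [pinchVector] using congrFun (congrArg WithLp.ofLp h) j
  have hfactor : (1 - (t : ℝ) + t * max 0 (1 / 2 - ‖p.1 j‖)) ≠ 0 := by
    have := t.2.2
    rw [hj, norm_zero, sub_zero, max_eq_right (by norm_num)]
    linarith
  refine ne_zero_of_mem_unit_sphere p ?_
  ext i
  by_cases hij : i = j
  · rw [hij, hj]; rfl
  · have hi : (1 - (t : ℝ) + t * max 0 (1 / 2 - ‖p.1 j‖)) • p.1 i = 0 := by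
      simpa only [pinchVector, Function.update_of_ne hij, Pi.smul_apply,
        PiLp.zero_apply] using
        congrFun (congrArg WithLp.ofLp h) i
    exact (smul_eq_zero.1 hi).resolve_left hfactor

/-- A deformation of the sphere that moves the region `1 / 2 ≤ ‖p j‖` to the `j`-th coordinate
axis. -/
def pinch (j : Fin 2) (t : I) (p : Sphere3) : Sphere3 :=
  ofNeZero (pinchVector j t p) (pinchVector_ne_zero j t p)

@[fun_prop]
theorem continuous_pinch {Y : Type*} [TopologicalSpace Y] (j : Fin 2) {t : Y → I}
    {p : Y → Sphere3} (ht : Continuous t) (hp : Continuous p) :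
    Continuous fun y => pinch j (t y) (p y) := by
  refine continuous_ofNeZero ((PiLp.continuous_toLp 2 _).comp ?_) _
  refine Continuous.update ?_ j ?_ <;> fun_prop

theorem pinch_zero (j : Fin 2) (p : Sphere3) : pinch j 0 p = p :=
  ofNeZero_eq _ (by simp [pinchVector])

theorem pinch_neg (j : Fin 2) (t : I) (p : Sphere3) : pinch j t (-p) = -pinch j t p := by
  have : pinchVector j t (-p) = -pinchVector j t p := by
    ext i
    by_cases hij : i = j
    · subst hij; simp [pinchVector]
    · simp [pinchVector, hij]
  exact Subtype.ext (by simp [pinch, ofNeZero, this, NormedSpace.normalize_neg])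

theorem pinch_one_apply {i j : Fin 2} (hij : i ≠ j) {p : Sphere3} (h : 1 / 2 ≤ ‖p.1 j‖) :
    (pinch j 1 p).1 i = 0 := by
  simp [pinch, ofNeZero, NormedSpace.normalize, pinchVector, hij, -one_div, h]

theorem im_pinch_apply_one (t : I) (w : Sphere2) : ((pinch 1 t w).1 1).im = 0 := by
  simp [pinch, ofNeZero, NormedSpace.normalize, pinchVector, w.2]

theorem exists_half_le_norm (p : Sphere3) : ∃ j, 1 / 2 ≤ ‖p.1 j‖ := by
  by_contra! h
  have := p.norm_sq_add_norm_sq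
  nlinarith [h 0, h 1, norm_nonneg (p.1 0), norm_nonneg (p.1 1)]

end Sphere3

namespace Sphere2

open Sphere3

/-- The track of `w` under a contraction of the two-sphere avoiding the origin of `ℂ²`. The
imaginary term steers the segment from `w` to the pole around the origin. -/
def contractionVector (t : I) (w : Sphere2) : EuclideanSpace ℂ (Fin 2) :=
  (1 - (t : ℝ)) • w.1.1 +
    ((t : ℝ) + ((t * (1 - t) : ℝ) : ℂ) * Complex.I) • EuclideanSpace.single 1 1

theorem contractionVector_ne_zero (t : I) (w : Sphere2) : contractionVector t w ≠ 0 := by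
  intro h
  have h₁ : (1 - (t : ℝ)) • w.1.1 1 + ((t : ℝ) + ((t * (1 - t) : ℝ) : ℂ) * Complex.I) = 0 := by
    simpa [contractionVector] using congrFun (congrArg WithLp.ofLp h) 1
  have him : (t : ℝ) = 0 ∨ 1 - (t : ℝ) = 0 := by
    simpa [w.2] using congrArg Complex.im h₁
  rcases him with ht | ht
  · exact ne_zero_of_mem_unit_sphere w.1 (by simpa [contractionVector, ht] using h)
  · rw [ht] at h₁
    have : (t : ℝ) = 1 := by linarith
    simp [this] at h₁

/-- A contraction of the two-sphere to the north pole inside the three-sphere. -/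
def contraction (t : I) (w : Sphere2) : Sphere3 :=
  ofNeZero (contractionVector t w) (contractionVector_ne_zero t w)

@[fun_prop]
theorem continuous_contraction {Y : Type*} [TopologicalSpace Y] {t : Y → I} {w : Y → Sphere2}
    (ht : Continuous t) (hw : Continuous w) : Continuous fun y => contraction (t y) (w y) :=
  continuous_ofNeZero (by unfold contractionVector; fun_prop) _

theorem contraction_zero (w : Sphere2) : contraction 0 w = w :=
  ofNeZero_eq _ (by simp [contractionVector])

theorem contraction_one (w : Sphere2) : contraction 1 w = pole :=
  ofNeZero_eq _ (by simp [contractionVector, pole])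

end Sphere2

end Spheres

/-! ### Families over products with a sphere modulo the antipode -/

section SignedFamilies

variable {X Y : Type*} [TopologicalSpace X] [TopologicalSpace Y] {r : Setoid X} {s : Setoid Y}

/-- The monoid homomorphism `A ↦ A ⊗ 1` from `2 × 2` matrices to matrices acting on
`ℂ² ⊗ ℂ^ι`. -/
def doubleTensor (ι : Type) [Fintype ι] [DecidableEq ι] :
    Matrix (Fin 2) (Fin 2) ℂ →* Matrix (ι ⊕ ι) (ι ⊕ ι) ℂ where
  toFun A := scalarBlock ι (A 0 0) (A 0 1) (A 1 0) (A 1 1)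
  map_one' := by simp [scalarBlock_one]
  map_mul' A B := by simp [scalarBlock_mul, mul_apply, Fin.sum_univ_two]

theorem doubleTensor_apply {ι : Type} [Fintype ι] [DecidableEq ι] (A : Matrix (Fin 2) (Fin 2) ℂ) :
    doubleTensor ι A = scalarBlock ι (A 0 0) (A 0 1) (A 1 0) (A 1 1) := rfl

theorem doubleTensor_mul_comm_of_diagonal {ι : Type} [Fintype ι] [DecidableEq ι]
    {A : Matrix (Fin 2) (Fin 2) ℂ} (h₀₁ : A 0 1 = 0) (h₁₀ : A 1 0 = 0) (B : Matrix ι ι ℂ) :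
    doubleTensor ι A * fromBlocks B 0 0 1 = fromBlocks B 0 0 1 * doubleTensor ι A := by
  simp [doubleTensor_apply, scalarBlock, fromBlocks_multiply, h₀₁, h₁₀]

variable {ι : Type} [Fintype ι] [DecidableEq ι]

/-- A continuous family of invertible matrices over `X` that is `r`-invariant up to sign.
Conjugation by such a family preserves families over `X / r`. -/
structure SignedFamily (r : Setoid X) (ι : Type) [Fintype ι] [DecidableEq ι] where
  toFamily : InvertibleFamily (⊥ : Setoid X) ι
  eq_or_eq_neg : ∀ x y, r x y → toFamily x = toFamily y ∨ toFamily x = -toFamily y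

namespace SignedFamily

instance : CoeFun (SignedFamily r ι) fun _ => X → Matrix ι ι ℂ := ⟨fun g => g.toFamily⟩

/-- The pullback of a signed family along a continuous map that descends to the quotients. -/
def pullback (g : SignedFamily r ι) (φ : C(Y, X)) (h : s ≤ r.comap φ) : SignedFamily s ι where
  toFamily := g.toFamily.pullback φ fun _ _ => congrArg φ
  eq_or_eq_neg _ _ hxy := g.eq_or_eq_neg _ _ (h hxy)

@[simp]
theorem pullback_apply (g : SignedFamily r ι) (φ : C(Y, X)) (h : s ≤ r.comap φ) (y : Y) :
    g.pullback φ h y = g (φ y) := rfl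

/-- The signed family over `(X / r) × Y` that does not depend on the first coordinate. -/
def constLeft (r : Setoid X) (g : SignedFamily s ι) : SignedFamily (r.prod s) ι :=
  g.pullback ⟨Prod.snd, continuous_snd⟩ fun _ _ h => h.2

/-- The signed family `g ⊗ 1`. -/
def double (ι : Type) [Fintype ι] [DecidableEq ι] (g : SignedFamily r (Fin 2)) :
    SignedFamily r (ι ⊕ ι) where
  toFamily :=
    { toFun := fun x => doubleTensor ι (g x)
      continuous_toFun := by
        simp only [doubleTensor_apply]
        have := g.toFamily.continuous
        fun_prop
      isUnit_toFun := fun x => (g.toFamily.isUnit x).map _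
      eq_of_rel' := fun _ _ h => by rw [g.toFamily.eq_of_rel h] }
  eq_or_eq_neg x y h := by
    refine (g.eq_or_eq_neg x y h).imp (congrArg (doubleTensor ι)) fun h => ?_
    change doubleTensor ι (g x) = -doubleTensor ι (g y)
    simp [h, doubleTensor_apply, scalarBlock, fromBlocks_neg]

theorem double_apply (g : SignedFamily r (Fin 2)) (x : X) :
    g.double ι x = doubleTensor ι (g x) := rfl

/-- The conjugate of a family by a signed family. -/
def conjugate (g : SignedFamily r ι) (a : InvertibleFamily r ι) : InvertibleFamily r ι where
  toFun x := g x * a x * (g x)⁻¹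
  continuous_toFun :=
    (g.toFamily.continuous.matrix_mul a.continuous).matrix_mul g.toFamily⁻¹.continuous
  isUnit_toFun x := ((g.toFamily.isUnit x).mul (a.isUnit x)).mul (g.toFamily⁻¹.isUnit x)
  eq_of_rel' x y h := by
    have inv_neg : (-g y)⁻¹ = -(g y)⁻¹ := inv_eq_right_inv (by simp)
    rcases g.eq_or_eq_neg x y h with hg | hg <;> simp [a.eq_of_rel h, hg, inv_neg]

@[simp]
theorem conjugate_apply (g : SignedFamily r ι) (a : InvertibleFamily r ι) (x : X) :
    g.conjugate a x = g x * a x * (g x)⁻¹ := rfl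

theorem conjugate_one (g : SignedFamily r ι) : g.conjugate 1 = 1 :=
  InvertibleFamily.ext fun x => by simp [g.toFamily.apply_mul_inv]

theorem conjugate_mul (g : SignedFamily r ι) (a b : InvertibleFamily r ι) :
    g.conjugate (a * b) = g.conjugate a * g.conjugate b :=
  InvertibleFamily.ext fun x => by
    simp [Matrix.mul_assoc, nonsing_inv_mul_cancel_left _ _ (g.toFamily.isUnit_det x)]

theorem conjugate_apply_of_mul_comm (g : SignedFamily r ι) (a : InvertibleFamily r ι) {x : X}
    (h : g x * a x = a x * g x) : g.conjugate a x = a x := by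
  rw [conjugate_apply, h, Matrix.mul_assoc, g.toFamily.apply_mul_inv, Matrix.mul_one]

end SignedFamily

/-- The family `p ↦ toSU p` over the antipodal quotient of the three-sphere. -/
def Sphere3.tautological : SignedFamily (antipodal Sphere3) (Fin 2) where
  toFamily :=
    { toFun := fun p => SU.toMatrix 2 p.toSU
      continuous_toFun := by fun_prop
      isUnit_toFun := fun p => SU.isUnit_toMatrix _
      eq_of_rel' := by rintro _ _ rfl; rfl }
  eq_or_eq_neg := by
    rintro x y (rfl | rfl)
    · exact .inl rfl
    · exact .inr (Sphere3.toMatrix_toSU_neg y)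

theorem Sphere3.tautological_apply (p : Sphere3) :
    Sphere3.tautological p = !![p.1 0, -conj (p.1 1); p.1 1, conj (p.1 0)] := rfl

/-- The restriction of the tautological family to the two-sphere. -/
def Sphere2.tautological : SignedFamily (antipodal Sphere2) (Fin 2) :=
  Sphere3.tautological.pullback ⟨Subtype.val, continuous_subtype_val⟩
    (antipodal_le_comap (φ := Subtype.val) fun _ => rfl)

end SignedFamilies

section Transfer

variable {X Y : Type*} [TopologicalSpace X] [TopologicalSpace Y] [InvolutiveNeg Y]
  {r : Setoid X} {ι : Type} [Fintype ι] [DecidableEq ι]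

namespace SignedFamily

/-- The matrices with columns `(1, g y)` and `(1, -g y)`, which are exchanged by `y ↦ -y` if `g` is
odd. -/
def transferFrame (g : SignedFamily (antipodal Y) ι) :
    InvertibleFamily (⊥ : Setoid Y) (ι ⊕ ι) where
  toFun y := fromBlocks 1 1 (g y) (-g y)
  continuous_toFun :=
    have := g.toFamily.continuous
    continuous_const.matrix_fromBlocks continuous_const this this.neg
  isUnit_toFun y := by
    have : fromBlocks 1 1 (g y) (-g y) =
        (InvertibleFamily.directSum 1 g.toFamily) y * scalarBlock ι 1 1 1 (-1) := by
      simp [scalarBlock, fromBlocks_multiply]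
    rw [this]
    exact (InvertibleFamily.isUnit _ y).mul (isUnit_scalarBlock (by norm_num))
  eq_of_rel' := by rintro _ _ rfl; rfl

theorem transferFrame_apply (g : SignedFamily (antipodal Y) ι) (y : Y) :
    g.transferFrame y = fromBlocks 1 1 (g y) (-g y) := rfl

theorem transferFrame_neg {g : SignedFamily (antipodal Y) ι} (hg : ∀ y, g (-y) = -g y) (y : Y) :
    g.transferFrame (-y) = g.transferFrame y * scalarBlock ι 0 1 1 0 := by
  simp [transferFrame_apply, hg, scalarBlock, fromBlocks_multiply]

variable [ContinuousNeg Y]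

/-- The transfer of a family along the double covering `X × Y → X × (Y / ±)`, twisted by the odd
family `g`. -/
def transfer (g : SignedFamily (antipodal Y) ι) (hg : ∀ y, g (-y) = -g y)
    (b : InvertibleFamily (r.prod (⊥ : Setoid Y)) ι) :
    InvertibleFamily (r.prod (antipodal Y)) (ι ⊕ ι) where
  toFun p := g.transferFrame p.2 * fromBlocks (b p) 0 0 (b (p.1, -p.2)) * (g.transferFrame p.2)⁻¹
  continuous_toFun := by
    have h := g.transferFrame.continuous
    have h' := g.transferFrame⁻¹.continuous
    refine ((h.comp continuous_snd).matrix_mul ?_).matrix_mul (h'.comp continuous_snd)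
    exact b.continuous.matrix_fromBlocks continuous_const continuous_const
      (b.continuous.comp (by fun_prop))
  isUnit_toFun p :=
    ((g.transferFrame.isUnit p.2).mul ((b.directSum (b.pullback (s := r.prod ⊥)
      ⟨fun p => (p.1, -p.2), by fun_prop⟩ fun _ _ h => ⟨h.1, congrArg (-·) h.2⟩)).isUnit p)).mul
      (g.transferFrame⁻¹.isUnit p.2)
  eq_of_rel' := by
    have swap_mul_swap : scalarBlock ι 0 1 1 0 * scalarBlock ι 0 1 1 0 = 1 := by
      simp [scalarBlock_mul, scalarBlock_one]
    have swap_conj (A B : Matrix ι ι ℂ) : scalarBlock ι 0 1 1 0 * fromBlocks A 0 0 B *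
        scalarBlock ι 0 1 1 0 = fromBlocks B 0 0 A := by
      simp [scalarBlock, fromBlocks_multiply]
    rintro ⟨x, y⟩ ⟨x', y'⟩ ⟨hx : r x x', hy⟩
    have hb (z : Y) : b (x, z) = b (x', z) := b.eq_of_rel ⟨hx, rfl⟩
    rcases hy with rfl | rfl
    · simp only [hb]
    · simp only [hb, transferFrame_neg hg, neg_neg, Matrix.mul_inv_rev,
        inv_eq_right_inv swap_mul_swap]
      have cancel (A : Matrix (ι ⊕ ι) (ι ⊕ ι) ℂ) :
          scalarBlock ι 0 1 1 0 * (scalarBlock ι 0 1 1 0 * A) = A := by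
        rw [← Matrix.mul_assoc, swap_mul_swap, Matrix.one_mul]
      rw [← swap_conj]
      simp only [Matrix.mul_assoc, cancel]

theorem transfer_apply_of_eq (g : SignedFamily (antipodal Y) ι) (hg : ∀ y, g (-y) = -g y)
    (b : InvertibleFamily (r.prod (⊥ : Setoid Y)) ι) {x : X} {y : Y} (h : b (x, -y) = b (x, y)) :
    g.transfer hg b (x, y) = fromBlocks (b (x, y)) 0 0 (g y * b (x, y) * (g y)⁻¹) := by
  have commute : g.transferFrame y * fromBlocks (b (x, y)) 0 0 (b (x, y)) =
      fromBlocks (b (x, y)) 0 0 (g y * b (x, y) * (g y)⁻¹) * g.transferFrame y := by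
    simp [transferFrame_apply, fromBlocks_multiply, Matrix.mul_assoc]
  change g.transferFrame y * fromBlocks (b (x, y)) 0 0 (b (x, -y)) * (g.transferFrame y)⁻¹ = _
  rw [h, commute, Matrix.mul_assoc, g.transferFrame.apply_mul_inv, Matrix.mul_one]

end SignedFamily

end Transfer

section Restriction

variable {X : Type*} [TopologicalSpace X] {r : Setoid X} {ι : Type} [Fintype ι] [DecidableEq ι]

open Sphere3 SignedFamily

namespace InvertibleFamily

theorem homotopic_of_prod {Y : Type*} [TopologicalSpace Y] {s : Setoid Y}
    {a b : InvertibleFamily (r.prod s) ι}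
    (H : InvertibleFamily (((⊥ : Setoid I).prod r).prod s) ι)
    (h₀ : ∀ x y, H ((0, x), y) = a (x, y)) (h₁ : ∀ x y, H ((1, x), y) = b (x, y)) :
    Homotopic a b :=
  ⟨H.pullback ⟨fun p => ((p.1, p.2.1), p.2.2), by fun_prop⟩ fun _ _ h => ⟨⟨h.1, h.2.1⟩, h.2.2⟩,
    fun p => h₀ p.1 p.2, fun p => h₁ p.1 p.2⟩

/-- The restriction of a family over `X × (S³ / ±)` to `X × (S² / ±)`. -/
def restrict (f : InvertibleFamily (r.prod (antipodal Sphere3)) ι) :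
    InvertibleFamily (r.prod (antipodal Sphere2)) ι :=
  f.pullback ⟨fun p => (p.1, p.2.1), by fun_prop⟩
    fun _ _ h => ⟨h.1, antipodal_le_comap (φ := fun w : Sphere2 => w.1) (fun _ => rfl) h.2⟩

/-- The conjugate of `a ⊕ 1` by the tautological family, which acts on `ℂ² ⊗ ℂ^ι`. -/
def twist (a : InvertibleFamily (r.prod (antipodal Sphere2)) ι) :
    InvertibleFamily (r.prod (antipodal Sphere2)) (ι ⊕ ι) :=
  ((Sphere2.tautological.double ι).constLeft r).conjugate (a.directSum 1)

-- The two coordinate pinchings together carry each point of the sphere either to a place where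
-- the conjugating matrix is diagonal or to the poles, where the family is trivial.
theorem doubleTensor_pinch_mul_comm (f : InvertibleFamily (r.prod (antipodal Sphere3)) ι)
    (hf : ∀ x, f (x, pole) = 1) (x : X) (w : Sphere2) :
    doubleTensor ι (tautological (pinch 0 1 w)) * fromBlocks (f (x, pinch 1 1 w)) 0 0 1 =
      fromBlocks (f (x, pinch 1 1 w)) 0 0 1 * doubleTensor ι (tautological (pinch 0 1 w)) := by
  obtain ⟨j, hj⟩ := exists_half_le_norm w.1
  fin_cases j
  · have h₁ : (pinch 0 1 w.1).1 1 = 0 := pinch_one_apply one_ne_zero hj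
    exact doubleTensor_mul_comm_of_diagonal (by simp [tautological_apply, h₁])
      (by simp [tautological_apply, h₁]) _
  · have h₀ : (pinch 1 1 w.1).1 0 = 0 := pinch_one_apply zero_ne_one hj
    have h : f (x, pinch 1 1 w) = 1 := by
      rw [← hf x]
      exact f.eq_of_rel ⟨r.refl x, eq_pole_or_eq_neg_pole h₀ (im_pinch_apply_one 1 w)⟩
    simp [h]

theorem kClass_twist_restrict (f : InvertibleFamily (r.prod (antipodal Sphere3)) ι)
    (hf : ∀ x, f (x, pole) = 1) : f.restrict.twist.kClass = f.restrict.kClass := by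
  let F : InvertibleFamily ((⊥ : Setoid I).prod (r.prod (antipodal Sphere2))) (ι ⊕ ι) :=
    (f.pullback ⟨fun p => (p.2.1, pinch 1 p.1 p.2.2), by fun_prop⟩
      (by
        rintro ⟨t, x, w⟩ ⟨t', x', w'⟩ ⟨ht : t = t', hx, hw⟩
        subst ht
        exact ⟨hx, antipodal_le_comap (φ := fun w : Sphere2 => pinch 1 t w)
          (fun _ => pinch_neg _ _ _) hw⟩)).directSum 1
  let g : SignedFamily ((⊥ : Setoid I).prod (r.prod (antipodal Sphere2))) (ι ⊕ ι) :=
    (tautological.double ι).pullback ⟨fun p => pinch 0 p.1 p.2.2, by fun_prop⟩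
      (by
        rintro ⟨t, x, w⟩ ⟨t', x', w'⟩ ⟨ht : t = t', hx, hw⟩
        subst ht
        exact antipodal_le_comap (φ := fun w : Sphere2 => pinch 0 t w)
          (fun _ => pinch_neg _ _ _) hw)
  let F₁ : InvertibleFamily (r.prod (antipodal Sphere2)) (ι ⊕ ι) :=
    F.pullback ⟨fun p => (1, p), by fun_prop⟩ fun _ _ h => ⟨rfl, h⟩
  have hF (t x w) : F (t, (x, w)) = fromBlocks (f (x, pinch 1 t w)) 0 0 1 := rfl
  have hg (t x w) : g (t, (x, w)) = doubleTensor ι (tautological (pinch 0 t w)) := rfl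
  have h : Homotopic (f.restrict.directSum (1 : InvertibleFamily _ ι)) F₁ :=
    ⟨F, fun p => by rw [hF, pinch_zero]; rfl, fun _ => rfl⟩
  have h' : Homotopic f.restrict.twist F₁ :=
    ⟨g.conjugate F, fun p => by rw [conjugate_apply, hF, hg, pinch_zero, pinch_zero]; rfl,
      fun p => g.conjugate_apply_of_mul_comm F (doubleTensor_pinch_mul_comm f hf p.1 p.2)⟩
  rw [KGroup.kClass_eq_of_homotopic h', ← KGroup.kClass_eq_of_homotopic h,
    KGroup.kClass_directSum_one]

-- After pulling back to the double covering of `S² / ±`, the sphere can be contracted in `S³`; the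
-- transfer of this contraction is a homotopy from `(f ⊕ 1) ⊕ twist f` to `1`.
theorem kClass_restrict_add_kClass_twist (f : InvertibleFamily (r.prod (antipodal Sphere3)) ι)
    (hf : ∀ x, f (x, pole) = 1) : f.restrict.kClass + f.restrict.twist.kClass = 0 := by
  let g := Sphere2.tautological.double ι
  have hg (w : Sphere2) : g (-w) = -g w := by
    simp [g, double_apply, doubleTensor_apply, scalarBlock, fromBlocks_neg, Sphere2.tautological,
      tautological_apply]
  let b : InvertibleFamily (((⊥ : Setoid I).prod r).prod (⊥ : Setoid Sphere2)) (ι ⊕ ι) :=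
    (f.pullback ⟨fun p => (p.1.2, Sphere2.contraction p.1.1 p.2), by fun_prop⟩
      (by
        rintro ⟨⟨t, x⟩, w⟩ ⟨⟨t', x'⟩, w'⟩ ⟨⟨ht : t = t', hx⟩, hw : w = w'⟩
        subst ht hw
        exact ⟨hx, .inl rfl⟩)).directSum 1
  have hb (t x w) : b ((t, x), w) = fromBlocks (f (x, Sphere2.contraction t w)) 0 0 1 := rfl
  have hb₀ (x w) : b ((0, x), w) = f.restrict.directSum (1 : InvertibleFamily _ ι) (x, w) := by
    rw [hb, Sphere2.contraction_zero]; rfl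
  have hb₁ (x w) : b ((1, x), w) = 1 := by
    rw [hb, Sphere2.contraction_one, hf, fromBlocks_one]
  have h : Homotopic ((f.restrict.directSum (1 : InvertibleFamily _ ι)).directSum
      f.restrict.twist) 1 := by
    refine homotopic_of_prod (g.transfer hg b) (fun x w => ?_) fun x w => ?_
    · rw [transfer_apply_of_eq, hb₀]
      · rfl
      · rw [hb₀, hb₀]
        exact eq_of_rel _ ⟨r.refl x, .inr rfl⟩
    · rw [transfer_apply_of_eq _ _ _ (by rw [hb₁, hb₁]), hb₁]
      simp [g.toFamily.apply_mul_inv]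
  rw [← KGroup.kClass_directSum_one (κ := ι) f.restrict, ← KGroup.kClass_directSum,
    KGroup.kClass_eq_of_homotopic h, KGroup.kClass_one]

theorem kClass_restrict_add_self (f : InvertibleFamily (r.prod (antipodal Sphere3)) ι)
    (hf : ∀ x, f (x, pole) = 1) : f.restrict.kClass + f.restrict.kClass = 0 := by
  simpa only [kClass_twist_restrict f hf] using kClass_restrict_add_kClass_twist f hf

end InvertibleFamily

end Restriction

/-! ### Families of commutators -/

section CommutatorFamily

variable {X : Type*} [TopologicalSpace X] {r : Setoid X}

/-- The exchange of the tensor factors of `ℂ² ⊗ ℂ²`. -/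
def tensorFlip : Matrix (Fin 2 ⊕ Fin 2) (Fin 2 ⊕ Fin 2) ℂ :=
  fromBlocks !![1, 0; 0, 0] !![0, 0; 1, 0] !![0, 1; 0, 0] !![0, 0; 0, 1]

theorem tensorFlip_mul_self : tensorFlip * tensorFlip = 1 := by
  rw [tensorFlip, fromBlocks_multiply, ← fromBlocks_one]
  congr 1 <;> · ext i j; fin_cases i <;> fin_cases j <;> simp

theorem tensorFlip_mul_doubleTensor_mul_tensorFlip (A : Matrix (Fin 2) (Fin 2) ℂ) :
    tensorFlip * doubleTensor (Fin 2) A * tensorFlip = fromBlocks A 0 0 A := by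
  rw [tensorFlip, doubleTensor_apply, scalarBlock, fromBlocks_multiply, fromBlocks_multiply]
  congr 1 <;> · ext i j; fin_cases i <;> fin_cases j <;> simp

namespace SignedFamily

-- The flip turns `g ⊗ 1` into `g ⊕ g`. It enters through its own class and that of its conjugate,
-- twice each, and these cancel because the flip is an involution.
theorem kClass_conjugate_double (g : SignedFamily r (Fin 2)) (u : InvertibleFamily r (Fin 2)) :
    ((g.double (Fin 2)).conjugate (u.directSum 1)).kClass = (g.conjugate u).kClass := by
  let flip : InvertibleFamily r (Fin 2 ⊕ Fin 2) :=
    ⟨fun _ => tensorFlip, continuous_const, fun _ => .of_mul_eq_one _ tensorFlip_mul_self,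
      fun _ _ _ => rfl⟩
  have flip_mul_flip : flip * flip = 1 := InvertibleFamily.ext fun _ => tensorFlip_mul_self
  let flip' := (g.double (Fin 2)).conjugate flip
  have flip'_mul_flip' : flip' * flip' = 1 := by
    rw [← conjugate_mul, flip_mul_flip, conjugate_one]
  have key : (g.conjugate u).directSum (1 : InvertibleFamily r (Fin 2)) =
      flip * (flip' * (g.double (Fin 2)).conjugate (u.directSum 1) * flip') * flip := by
    rw [← conjugate_mul, ← conjugate_mul]
    refine InvertibleFamily.ext fun x => ?_
    have inv_flip : tensorFlip⁻¹ = tensorFlip := inv_eq_right_inv tensorFlip_mul_self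
    have double_inv : (fromBlocks (g x) 0 0 (g x))⁻¹ =
        tensorFlip * (doubleTensor (Fin 2) (g x))⁻¹ * tensorFlip := by
      simp only [← tensorFlip_mul_doubleTensor_mul_tensorFlip, Matrix.mul_inv_rev, inv_flip,
        Matrix.mul_assoc]
    have inv_double : (fromBlocks (g x) 0 0 (g x))⁻¹ = fromBlocks (g x)⁻¹ 0 0 (g x)⁻¹ :=
      inv_eq_right_inv (by simp [fromBlocks_multiply, g.toFamily.apply_mul_inv])
    calc fromBlocks (g x * u x * (g x)⁻¹) 0 0 1
        = fromBlocks (g x) 0 0 (g x) * fromBlocks (u x) 0 0 1 *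
          (fromBlocks (g x) 0 0 (g x))⁻¹ := by
          simp [inv_double, fromBlocks_multiply, g.toFamily.apply_mul_inv]
      _ = tensorFlip * (doubleTensor (Fin 2) (g x) *
          (tensorFlip * fromBlocks (u x) 0 0 1 * tensorFlip) *
          (doubleTensor (Fin 2) (g x))⁻¹) * tensorFlip := by
          rw [double_inv, ← tensorFlip_mul_doubleTensor_mul_tensorFlip]
          simp only [Matrix.mul_assoc]
  have h := congrArg InvertibleFamily.kClass flip_mul_flip
  have h' := congrArg InvertibleFamily.kClass flip'_mul_flip'
  rw [KGroup.kClass_mul, KGroup.kClass_one] at h h'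
  rw [← KGroup.kClass_directSum_one (κ := Fin 2) (g.conjugate u), key]
  simp only [KGroup.kClass_mul]
  symm
  calc flip.kClass + (flip'.kClass + ((g.double (Fin 2)).conjugate (u.directSum 1)).kClass +
        flip'.kClass) + flip.kClass
      = flip.kClass + flip.kClass + (flip'.kClass + flip'.kClass) +
        ((g.double (Fin 2)).conjugate (u.directSum 1)).kClass := by abel
    _ = ((g.double (Fin 2)).conjugate (u.directSum 1)).kClass := by rw [h, h', add_zero, zero_add]

end SignedFamily

open Sphere3

namespace InvertibleFamily

variable {ι : Type} [Fintype ι] [DecidableEq ι]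

/-- The restriction of a family over `X × (S³ / ±)` to the pole. -/
def atPole (f : InvertibleFamily (r.prod (antipodal Sphere3)) ι) : InvertibleFamily r ι :=
  f.pullback ⟨fun x => (x, pole), by fun_prop⟩ fun _ _ h => ⟨h, .inl rfl⟩

theorem kClass_restrict_eq_zero (e : InvertibleFamily (r.prod (antipodal Sphere3)) ι)
    {k : KGroup (r.prod (antipodal Sphere3))} (hk : e.kClass = k + k) (he : e.atPole.kClass = 0) :
    e.restrict.kClass = 0 := by
  induction k using KGroup.induction with
  | _ κ f =>
    let f₀ : InvertibleFamily (r.prod (antipodal Sphere3)) κ := f.atPole.constRight _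
    have h : (f * f₀⁻¹).restrict.kClass + (f * f₀⁻¹).restrict.kClass = 0 :=
      kClass_restrict_add_self _ fun x => f.apply_mul_inv (x, pole)
    have h₀ : f.atPole.kClass + f.atPole.kClass = 0 := by
      rw [← he]
      exact (congrArg (KGroup.map _ _) hk).symm
    have h₀' : f₀.restrict.kClass + f₀.restrict.kClass = 0 :=
      congrArg (KGroup.map (s := r.prod (antipodal Sphere2)) ⟨Prod.fst, continuous_fst⟩
        fun _ _ h => h.1) h₀
    have hk' : e.restrict.kClass = f.restrict.kClass + f.restrict.kClass :=
      congrArg (KGroup.map _ _) hk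
    have mul_inv : (f * f₀⁻¹).restrict = f.restrict * f₀.restrict⁻¹ := rfl
    rw [mul_inv, KGroup.kClass_mul, KGroup.kClass_inv] at h
    rw [hk', ← h, ← sub_eq_zero, ← h₀']
    abel

/-- The family `(x, p) ↦ [toSU p, u x]`. -/
def commutatorFamily (u : InvertibleFamily r (Fin 2)) :
    InvertibleFamily (r.prod (antipodal Sphere3)) (Fin 2) :=
  (tautological.constLeft r).conjugate (u.constRight _) * (u.constRight _)⁻¹

theorem kClass_atPole_commutatorFamily (u : InvertibleFamily r (Fin 2)) :
    u.commutatorFamily.atPole.kClass = 0 := by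
  let g : InvertibleFamily r (Fin 2) :=
    ⟨fun _ => tautological pole, continuous_const, fun _ => tautological.toFamily.isUnit _,
      fun _ _ _ => rfl⟩
  have : u.commutatorFamily.atPole = g * u * g⁻¹ * u⁻¹ := rfl
  rw [this]
  simp only [KGroup.kClass_mul, KGroup.kClass_inv]
  abel

/-- The restriction of the commutator family to the two-sphere, stabilized so that `toSU` acts on
the first factor of `ℂ² ⊗ ℂ²` and `u ⊕ 1` on the second. -/
def doubledCommutator (u : InvertibleFamily r (Fin 2)) :
    InvertibleFamily (r.prod (antipodal Sphere2)) (Fin 2 ⊕ Fin 2) :=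
  (u.constRight _).twist * (u⁻¹.constRight _).directSum 1

theorem kClass_doubledCommutator_eq_zero (u : InvertibleFamily r (Fin 2))
    {k : KGroup (r.prod (antipodal Sphere3))} (hk : u.commutatorFamily.kClass = k + k) :
    u.doubledCommutator.kClass = 0 := by
  let g := Sphere2.tautological.constLeft r
  have h : u.commutatorFamily.restrict = g.conjugate (u.constRight _) * (u⁻¹.constRight _) := rfl
  have twist_eq : (u.constRight _).twist =
      (g.double (Fin 2)).conjugate ((u.constRight _).directSum 1) := rfl
  rw [← kClass_restrict_eq_zero _ hk u.kClass_atPole_commutatorFamily, h, doubledCommutator,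
    twist_eq, KGroup.kClass_mul, KGroup.kClass_mul, KGroup.kClass_directSum_one,
    g.kClass_conjugate_double]

end InvertibleFamily

end CommutatorFamily

section Annulus

variable {X : Type*} [TopologicalSpace X] {r : Setoid X} {ι : Type} [Fintype ι] [DecidableEq ι]

namespace InvertibleFamily

/-- A family over `X × (I × S¹)` that is constant on the two boundary circles, as a family over the
product of `X` with the two-sphere. -/
def ofAnnulus (a : InvertibleFamily (r.prod (⊥ : Setoid (I × Circle))) ι)
    (h₀ : ∀ x z z', a (x, (0, z)) = a (x, (0, z')))
    (h₁ : ∀ x z z', a (x, (1, z)) = a (x, (1, z'))) : InvertibleFamily (r.prod poles) ι where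
  toFun := a
  continuous_toFun := a.continuous
  isUnit_toFun := a.isUnit
  eq_of_rel' := by
    rintro ⟨x, t, z⟩ ⟨x', t', z'⟩ ⟨hx, hy⟩
    obtain ⟨rfl : t = t', rfl | rfl | rfl : t = 0 ∨ t = 1 ∨ z = z'⟩ := poles_iff.1 hy
    · rw [h₀ x z z']
      exact a.eq_of_rel ⟨hx, rfl⟩
    · rw [h₁ x z z']
      exact a.eq_of_rel ⟨hx, rfl⟩
    · exact a.eq_of_rel ⟨hx, rfl⟩

@[simp]
theorem ofAnnulus_apply (a : InvertibleFamily (r.prod (⊥ : Setoid (I × Circle))) ι)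
    (h₀ : ∀ x z z', a (x, (0, z)) = a (x, (0, z')))
    (h₁ : ∀ x z z', a (x, (1, z)) = a (x, (1, z'))) (p : X × (I × Circle)) :
    a.ofAnnulus h₀ h₁ p = a p := rfl

/-- The family that agrees with `c` on the upper half of each circle and is trivial on the lower
half. -/
def upperHalf (c : InvertibleFamily (r.prod poles) ι) (h₀ : ∀ x z, c (x, (0, z)) = 1)
    (h₁ : ∀ x z, c (x, (1, z)) = 1)
    (h_real : ∀ x t (z : Circle), (z : ℂ).im = 0 → c (x, (t, z)) = 1) :
    InvertibleFamily (r.prod poles) ι where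
  toFun p := if 0 ≤ (p.2.2 : ℂ).im then c p else 1
  continuous_toFun := by
    refine c.continuous.if_le continuous_const continuous_const (by fun_prop) ?_
    rintro ⟨x, t, z⟩ h
    exact h_real x t z h.symm
  isUnit_toFun p := by
    split_ifs
    · exact c.isUnit p
    · exact isUnit_one
  eq_of_rel' := by
    rintro ⟨x, t, z⟩ ⟨x', t', z'⟩ h
    have hc := c.eq_of_rel h
    obtain ⟨rfl : t = t', rfl | rfl | rfl : t = 0 ∨ t = 1 ∨ z = z'⟩ := poles_iff.1 h.2
    · simp [h₀]
    · simp [h₁]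
    · simp only [hc]

theorem poles_mul_left (ζ : Circle) {y y' : I × Circle} (h : poles y y') :
    poles (y.1, ζ * y.2) (y'.1, ζ * y'.2) := by
  obtain ⟨ht, h⟩ := poles_iff.1 h
  exact poles_iff.2 ⟨ht, h.imp_right (Or.imp_right (congrArg (ζ * ·)))⟩

/-- The pullback of a family under the antipodal map of the circle. -/
def reflect (c : InvertibleFamily (r.prod poles) ι) : InvertibleFamily (r.prod poles) ι :=
  c.pullback ⟨fun p => (p.1, (p.2.1, -1 * p.2.2)), by fun_prop⟩
    fun _ _ h => ⟨h.1, poles_mul_left (-1) h.2⟩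

theorem homotopic_reflect (c : InvertibleFamily (r.prod poles) ι) : Homotopic c c.reflect := by
  have exp_pi : Circle.exp Real.pi = -1 := Circle.ext (by simp)
  let H : InvertibleFamily (((⊥ : Setoid I).prod r).prod poles) ι :=
    c.pullback ⟨fun p => (p.1.2, (p.2.1, Circle.exp (Real.pi * p.1.1) * p.2.2)), by fun_prop⟩ (by
      rintro ⟨⟨τ, x⟩, y⟩ ⟨⟨τ', x'⟩, y'⟩ ⟨⟨hτ : τ = τ', hx⟩, hy⟩
      subst hτ
      exact ⟨hx, poles_mul_left _ hy⟩)
  exact homotopic_of_prod H (fun x y => by simp [H]) fun x y => by simp [H, exp_pi, reflect]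

-- An even family is the product of its upper half and the reflection of its upper half, which are
-- homotopic.
theorem exists_eventually_quantizedClass_eq_add_self [CompactSpace X] [T2Space X]
    (c : InvertibleFamily (r.prod poles) ι) (h₀ : ∀ x z, c (x, (0, z)) = 1)
    (h₁ : ∀ x z, c (x, (1, z)) = 1)
    (h_real : ∀ x t (z : Circle), (z : ℂ).im = 0 → c (x, (t, z)) = 1)
    (h_even : ∀ x t z, c (x, (t, -z)) = c (x, (t, z))) :
    ∃ k : ℕ → KGroup r, ∀ᶠ m : ℕ in atTop, c.quantizedClass m = k m + k m := by
  let e := c.upperHalf h₀ h₁ h_real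
  have upper (x t) (z : Circle) : e (x, (t, z)) = if 0 ≤ (z : ℂ).im then c (x, (t, z)) else 1 :=
    rfl
  have lower (x t) (z : Circle) :
      e.reflect (x, (t, z)) = if (z : ℂ).im ≤ 0 then c (x, (t, z)) else 1 := by
    simp [reflect, upper, h_even]
  have hc : c = e * e.reflect := by
    ext1 ⟨x, t, z⟩
    rw [mul_apply, upper, lower]
    rcases lt_trichotomy (z : ℂ).im 0 with h | h | h
    · rw [if_neg h.not_ge, if_pos h.le, Matrix.one_mul]
    · rw [if_pos h.ge, if_pos h.le, h_real x t z h, Matrix.mul_one]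
    · rw [if_pos h.le, if_neg h.not_ge, Matrix.mul_one]
  refine ⟨e.quantizedClass, ?_⟩
  filter_upwards [eventually_quantizedClass_mul e e.reflect,
    eventually_quantizedClass_eq_of_homotopic e.homotopic_reflect] with m hmul hreflect
  rw [hc, hmul, ← hreflect]

end InvertibleFamily

end Annulus

section SphericalCoordinates

open Sphere3

theorem eq_one_or_eq_neg_one_of_im_eq_zero {z : Circle} (h : (z : ℂ).im = 0) :
    z = 1 ∨ z = -1 := by
  have hre : (z : ℂ).re = 1 ∨ (z : ℂ).re = -1 := by
    simpa [Complex.normSq_apply, h, mul_self_eq_one_iff] using Circle.normSq_coe z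
  exact hre.imp (fun hre => Circle.ext (Complex.ext (by simpa) (by simpa)))
    fun hre => Circle.ext (Complex.ext (by simpa) (by simpa))

namespace Sphere2

/-- The point of the two-sphere with polar angle `θ` and azimuth `z`. -/
def ofSpherical (θ : ℝ) (z : Circle) : Sphere2 :=
  ⟨⟨!₂[(Real.sin θ : ℂ) * z, (Real.cos θ : ℂ)], by
    have h : ‖(Real.sin θ : ℂ) * z‖ ^ 2 + ‖(Real.cos θ : ℂ)‖ ^ 2 = 1 := by
      rw [norm_mul, Circle.norm_coe, mul_one, Complex.norm_real, Complex.norm_real]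
      simp
    rw [mem_sphere_zero_iff_norm, EuclideanSpace.norm_eq, Fin.sum_univ_two]
    exact Real.sqrt_eq_one.2 h⟩, by simp⟩

@[fun_prop]
theorem continuous_ofSpherical {Y : Type*} [TopologicalSpace Y] {θ : Y → ℝ} {z : Y → Circle}
    (hθ : Continuous θ) (hz : Continuous z) : Continuous fun y => ofSpherical (θ y) (z y) := by
  have : Continuous fun y => (z y : ℂ) := by fun_prop
  unfold ofSpherical
  fun_prop

theorem ofSpherical_zero (z z' : Circle) : ofSpherical 0 z = ofSpherical 0 z' := by
  simp [ofSpherical]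

theorem neg_ofSpherical_pi_div_two (z : Circle) :
    -ofSpherical (Real.pi / 2) z = ofSpherical (Real.pi / 2) (-z) := by
  ext i
  fin_cases i <;> simp [ofSpherical]

end Sphere2

/-- The polar angle in the parametrization of a hemisphere by the annulus, which stays on the
equator during the second half of the interval. -/
def polarAngle (t : I) : ℝ := Real.pi / 2 * min (2 * (t : ℝ)) 1

@[fun_prop]
theorem continuous_polarAngle : Continuous polarAngle := by
  unfold polarAngle
  fun_prop

theorem polarAngle_zero : polarAngle 0 = 0 := by simp [polarAngle]

theorem polarAngle_of_half_le {t : I} (h : 1 / 2 ≤ (t : ℝ)) : polarAngle t = Real.pi / 2 := by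
  rw [polarAngle, min_eq_right (by linarith), mul_one]

theorem polarAngle_one : polarAngle 1 = Real.pi / 2 := polarAngle_of_half_le (by norm_num)

/-- The function that is one on the first half of the interval and decreases linearly to zero on the
second half. -/
def decay (t : I) : I := Set.projIcc 0 1 zero_le_one (2 - 2 * (t : ℝ))

@[fun_prop]
theorem continuous_decay : Continuous decay := continuous_projIcc.comp (by fun_prop)

theorem decay_of_le_half {t : I} (h : (t : ℝ) ≤ 1 / 2) : decay t = 1 :=
  Set.projIcc_of_right_le _ (by linarith)

theorem decay_one : decay 1 = 0 := Set.projIcc_of_le_left _ (by norm_num)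

end SphericalCoordinates

section Hemisphere

open Sphere2

variable {X Y : Type*} [TopologicalSpace X] [TopologicalSpace Y] {r : Setoid X} {s : Setoid Y}
  {ι κ : Type} [Fintype ι] [DecidableEq ι] [Fintype κ] [DecidableEq κ]

namespace InvertibleFamily

/-- The restriction of a family over `X × (S² / ±)` to a hemisphere whose boundary is collapsed. -/
def hemisphere (b : InvertibleFamily (r.prod (antipodal Sphere2)) κ)
    (h : ∀ x z z', b (x, ofSpherical (Real.pi / 2) z) = b (x, ofSpherical (Real.pi / 2) z')) :
    InvertibleFamily (r.prod poles) κ :=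
  ofAnnulus
    (b.pullback ⟨fun p => (p.1, ofSpherical (polarAngle p.2.1) p.2.2), by fun_prop⟩ (by
      rintro ⟨x, y⟩ ⟨x', y'⟩ ⟨hx, hy : y = y'⟩
      subst hy
      exact ⟨hx, .inl rfl⟩))
    (fun x z z' => by simp [polarAngle_zero, ofSpherical_zero z z'])
    (fun x z z' => by simp [polarAngle_one, h x z z'])

theorem hemisphere_apply (b : InvertibleFamily (r.prod (antipodal Sphere2)) κ)
    (h : ∀ x z z', b (x, ofSpherical (Real.pi / 2) z) = b (x, ofSpherical (Real.pi / 2) z'))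
    (x : X) (y : I × Circle) :
    b.hemisphere h (x, y) = b (x, ofSpherical (polarAngle y.1) y.2) := rfl

theorem IsStablyTrivial.exists_normalized {b : InvertibleFamily (r.prod s) κ}
    (hb : IsStablyTrivial b) {y₀ : Y} (hy₀ : ∀ x, b (x, y₀) = 1) :
    ∃ (α : Type) (_ : Fintype α) (_ : DecidableEq α)
      (G : InvertibleFamily ((⊥ : Setoid I).prod (r.prod s)) (κ ⊕ α)),
      (∀ p, G (0, p) = fromBlocks (b p) 0 0 1) ∧ (∀ p, G (1, p) = 1) ∧
        ∀ t x, G (t, (x, y₀)) = 1 := by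
  obtain ⟨α, _, _, F, hF₀, hF₁⟩ := hb
  let F' : InvertibleFamily ((⊥ : Setoid I).prod (r.prod s)) (κ ⊕ α) :=
    F.pullback ⟨fun p => (p.1, (p.2.1, y₀)), by fun_prop⟩ fun _ _ h => ⟨h.1, h.2.1, s.refl y₀⟩
  have hF' (t x y) : F' (t, (x, y)) = F (t, (x, y₀)) := rfl
  refine ⟨α, _, _, F * F'⁻¹, ?_, ?_, fun t x => F.apply_mul_inv (t, (x, y₀))⟩
  · rintro ⟨x, y⟩
    simp [hF', hF₀, hy₀]
  · rintro ⟨x, y⟩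
    simp [hF', hF₁]

theorem eventually_quantizedClass_directSum_one [CompactSpace X] [T2Space X]
    (a : InvertibleFamily (r.prod poles) ι) :
    ∀ᶠ m : ℕ in atTop,
      (a.directSum (1 : InvertibleFamily _ κ)).quantizedClass m = a.quantizedClass m := by
  filter_upwards [eventually_quantizedClass_directSum a (1 : InvertibleFamily _ κ),
    eventually_quantizedClass_constRight (1 : InvertibleFamily r κ)] with m hsum hone
  have constRight_one : (1 : InvertibleFamily r κ).constRight poles = 1 := rfl
  rw [hsum, ← constRight_one, hone, KGroup.kClass_one, smul_zero, add_zero]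

theorem exists_homotopic_hemisphere (b : InvertibleFamily (r.prod (antipodal Sphere2)) κ)
    (h : ∀ x z, b (x, ofSpherical (Real.pi / 2) z) = 1)
    (G : InvertibleFamily ((⊥ : Setoid I).prod (r.prod (antipodal Sphere2))) κ)
    (hG : ∀ p, G (0, p) = b p) :
    ∃ c : InvertibleFamily (r.prod poles) κ,
      Homotopic (b.hemisphere fun x z z' => (h x z).trans (h x z').symm) c ∧
      ∀ x t z, c (x, (t, z)) = G (decay t, (x, ofSpherical (polarAngle t) z)) := by
  let H : InvertibleFamily (((⊥ : Setoid I).prod r).prod poles) κ :=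
    ofAnnulus
      (G.pullback ⟨fun p => (p.1.1 * decay p.2.1,
          (p.1.2, ofSpherical (polarAngle p.2.1) p.2.2)), by fun_prop⟩ (by
        rintro ⟨⟨τ, x⟩, y⟩ ⟨⟨τ', x'⟩, y'⟩ ⟨⟨hτ : τ = τ', hx⟩, hy : y = y'⟩
        subst hτ hy
        exact ⟨rfl, hx, .inl rfl⟩))
      (fun p z z' => by simp [polarAngle_zero, ofSpherical_zero z z'])
      (fun p z z' => by simp [polarAngle_one, decay_one, hG, h])
  let c : InvertibleFamily (r.prod poles) κ :=
    H.pullback ⟨fun p => ((1, p.1), p.2), by fun_prop⟩ fun _ _ h => ⟨⟨rfl, h.1⟩, h.2⟩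
  exact ⟨c, homotopic_of_prod H (fun x y => by simp [H, hG, hemisphere_apply]) fun _ _ => rfl,
    fun x t z => by simp [c, H]⟩

theorem exists_eventually_quantizedClass_hemisphere_eq_add_self [CompactSpace X] [T2Space X]
    (b : InvertibleFamily (r.prod (antipodal Sphere2)) κ)
    (h : ∀ x z, b (x, ofSpherical (Real.pi / 2) z) = 1) (hb : b.kClass = 0) :
    ∃ k : ℕ → KGroup r, ∀ᶠ m : ℕ in atTop,
      (b.hemisphere fun x z z' => (h x z).trans (h x z').symm).quantizedClass m = k m + k m := by
  obtain ⟨α, _, _, G, hG₀, hG₁, hG⟩ :=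
    (KGroup.kClass_eq_zero_iff.1 hb).exists_normalized (y₀ := ofSpherical (Real.pi / 2) 1)
      fun x => h x 1
  have neg (t x) (w : Sphere2) : G (t, (x, -w)) = G (t, (x, w)) :=
    G.eq_of_rel ⟨rfl, r.refl x, .inr rfl⟩
  have equator (x z) : b.directSum (1 : InvertibleFamily _ α)
      (x, ofSpherical (Real.pi / 2) z) = 1 := by
    rw [directSum_apply, h, one_apply, fromBlocks_one]
  obtain ⟨c, homotopic, hc⟩ := exists_homotopic_hemisphere (b.directSum 1) equator G hG₀
  have early (x z) {t : I} (ht : (t : ℝ) ≤ 1 / 2) : c (x, (t, z)) = 1 := by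
    rw [hc, decay_of_le_half ht, hG₁]
  have late (x z) {t : I} (ht : 1 / 2 ≤ (t : ℝ)) :
      c (x, (t, z)) = G (decay t, (x, ofSpherical (Real.pi / 2) z)) := by
    rw [hc, polarAngle_of_half_le ht]
  obtain ⟨k, hk⟩ := exists_eventually_quantizedClass_eq_add_self c
    (fun x z => early x z (by norm_num))
    (fun x z => by rw [late x z (by norm_num), decay_one, hG₀]; exact equator x z)
    (fun x t z hz => by
      rcases le_total (t : ℝ) (1 / 2) with ht | ht
      · exact early x z ht
      rcases eq_one_or_eq_neg_one_of_im_eq_zero hz with rfl | rfl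
      · rw [late x 1 ht, hG]
      · rw [late x _ ht, ← neg_ofSpherical_pi_div_two, neg, hG])
    (fun x t z => by
      rcases le_total (t : ℝ) (1 / 2) with ht | ht
      · rw [early x _ ht, early x _ ht]
      · rw [late x _ ht, late x _ ht, ← neg_ofSpherical_pi_div_two, neg])
  refine ⟨k, ?_⟩
  filter_upwards [hk, eventually_quantizedClass_eq_of_homotopic homotopic,
    eventually_quantizedClass_directSum_one (κ := α) (b.hemisphere _)] with m hm hhom hsum
  rw [← hm, ← hhom, ← hsum]
  rfl

end InvertibleFamily

end Hemisphere

section TwistedHemisphere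

variable {X : Type*} [TopologicalSpace X] {r : Setoid X} {ι : Type} [Fintype ι] [DecidableEq ι]

theorem doubleTensor_mul_corner_mul_doubleTensor (A A' : Matrix (Fin 2) (Fin 2) ℂ)
    (B : Matrix ι ι ℂ) :
    doubleTensor ι A * fromBlocks B 0 0 0 * doubleTensor ι A' =
      ∑ p : Fin 2 × Fin 2,
        (A p.1 0 * A' 0 p.2) • (doubleInclusion ι p.1 * B * (doubleInclusion ι p.2)ᵀ) := by
  rw [Fintype.sum_prod_type]
  simp only [Fin.sum_univ_two, doubleInclusion, doubleTensor_apply, scalarBlock,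
    fromBlocks_multiply]
  ext (i | i) (j | j)
  all_goals
    simp [Matrix.fromRows_mul, transpose_fromRows, Matrix.mul_fromCols]
    ring

theorem doubleTensor_conjugate_corner {A : Matrix (Fin 2) (Fin 2) ℂ}
    (hA : A ∈ unitaryGroup (Fin 2) ℂ) (B : Matrix ι ι ℂ) :
    doubleTensor ι A * fromBlocks B 0 0 1 * (doubleTensor ι A)⁻¹ =
      1 + ∑ p : Fin 2 × Fin 2, (A p.1 0 * conj (A p.2 0)) •
        (doubleInclusion ι p.1 * (B - 1) * (doubleInclusion ι p.2)ᵀ) := by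
  have mul_star : doubleTensor ι A * doubleTensor ι (star A) = 1 := by
    rw [← map_mul, mem_unitaryGroup_iff.1 hA, map_one]
  have corner : fromBlocks B 0 0 (1 : Matrix ι ι ℂ) = 1 + fromBlocks (B - 1) 0 0 0 := by
    rw [← fromBlocks_one, fromBlocks_add]
    simp
  rw [inv_eq_right_inv mul_star, corner, Matrix.mul_add, Matrix.add_mul, Matrix.mul_one, mul_star,
    doubleTensor_mul_corner_mul_doubleTensor]
  rfl

namespace Sphere2

theorem tautological_mem_unitaryGroup (w : Sphere2) :
    Sphere2.tautological w ∈ unitaryGroup (Fin 2) ℂ :=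
  w.1.toSU.1.2

theorem tautological_ofSpherical (θ : ℝ) (z : Circle) :
    Sphere2.tautological (ofSpherical θ z) =
      !![(Real.sin θ : ℂ) * z, -(Real.cos θ : ℂ); (Real.cos θ : ℂ),
        conj ((Real.sin θ : ℂ) * z)] := by
  simp [Sphere2.tautological, Sphere3.tautological_apply, ofSpherical, -Complex.ofReal_cos]

end Sphere2

open Sphere2

namespace InvertibleFamily

theorem twist_apply (a : InvertibleFamily (r.prod (antipodal Sphere2)) ι) (x : X) (w : Sphere2) :
    a.twist (x, w) = doubleTensor ι (Sphere2.tautological w) * fromBlocks (a (x, w)) 0 0 1 *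
      (doubleTensor ι (Sphere2.tautological w))⁻¹ := rfl

theorem twist_apply_equator (a : InvertibleFamily (r.prod (antipodal Sphere2)) ι) (x : X)
    (z : Circle) :
    a.twist (x, ofSpherical (Real.pi / 2) z) =
      fromBlocks (a (x, ofSpherical (Real.pi / 2) z)) 0 0 1 := by
  have isUnit_det : IsUnit (doubleTensor ι
      (Sphere2.tautological (ofSpherical (Real.pi / 2) z))).det :=
    (Sphere2.tautological.double ι).toFamily.isUnit_det _
  rw [twist_apply, doubleTensor_mul_comm_of_diagonal, Matrix.mul_assoc,
    Matrix.mul_nonsing_inv _ isUnit_det, Matrix.mul_one] <;>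
    simp [tautological_ofSpherical]

theorem doubledCommutator_apply_equator (u : InvertibleFamily r (Fin 2)) (x : X) (z : Circle) :
    u.doubledCommutator (x, ofSpherical (Real.pi / 2) z) = 1 := by
  rw [doubledCommutator, mul_apply, twist_apply_equator]
  simp [fromBlocks_multiply]

theorem eventually_quantizedClass_hemisphere_twist [CompactSpace X] [T2Space X]
    (u : InvertibleFamily r ι) :
    ∀ᶠ m : ℕ in atTop, ((u.constRight (antipodal Sphere2)).twist.hemisphere fun x z z' => by
      simp [twist_apply_equator]).quantizedClass m = (m * m) • u.kClass := by
  refine eventually_quantizedClass_eq_nsmul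
    (v := ![fun t => Real.sin (polarAngle t), fun t => Real.cos (polarAngle t)])
    (fun b => by fin_cases b <;> · dsimp; fun_prop)
    (fun t => Real.sin_sq_add_cos_sq _) (by simp [polarAngle_zero]) (by simp [polarAngle_one])
    u _ fun x y => ?_
  have conj_z : conj (y.2 : ℂ) = (y.2 : ℂ)⁻¹ := by rw [← Circle.coe_inv_eq_conj, Circle.coe_inv]
  rw [hemisphere_apply, twist_apply, constRight_apply,
    doubleTensor_conjugate_corner (tautological_mem_unitaryGroup _), tautological_ofSpherical]
  congr 1
  refine Finset.sum_congr rfl fun ⟨b, c⟩ _ => congrArg (· • _) ?_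
  fin_cases b <;> fin_cases c <;> simp [conj_z, -Complex.ofReal_sin, -Complex.ofReal_cos]
  all_goals field_simp

-- The Bott family of `u` quantizes to `m²` copies of `u`, the constant family of `u⁻¹` to `m² + 1`
-- copies of `u⁻¹`, so that exactly the class of `u⁻¹` remains.
theorem exists_kClass_eq_add_self [CompactSpace X] [T2Space X] (u : InvertibleFamily r (Fin 2))
    {k : KGroup (r.prod (antipodal Sphere3))} (hk : u.commutatorFamily.kClass = k + k) :
    ∃ k' : KGroup r, u.kClass = k' + k' := by
  let U := (u.constRight (antipodal Sphere2)).twist.hemisphere fun x z z' => by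
    simp [twist_apply_equator]
  let V := (u⁻¹.directSum (1 : InvertibleFamily r (Fin 2))).constRight poles
  obtain ⟨k', hk'⟩ := exists_eventually_quantizedClass_hemisphere_eq_add_self _
    u.doubledCommutator_apply_equator (u.kClass_doubledCommutator_eq_zero hk)
  obtain ⟨m, h, hmul, hU, hV⟩ := (hk'.and ((eventually_quantizedClass_mul U V).and
    ((eventually_quantizedClass_hemisphere_twist u).and
      (eventually_quantizedClass_constRight
        (u⁻¹.directSum (1 : InvertibleFamily r (Fin 2))))))).exists
  refine ⟨-k' m, ?_⟩
  have count : (m * m) • u.kClass + (m * m + 1) • -u.kClass = k' m + k' m := by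
    rw [← h, ← hU, ← KGroup.kClass_inv, ← KGroup.kClass_directSum_one (κ := Fin 2) u⁻¹, ← hV,
      ← hmul]
    rfl
  rw [← neg_add, ← count, add_smul, one_smul, smul_neg]
  abel

end InvertibleFamily

end TwistedHemisphere

/-! ### The generator over the circle -/

section CircleFamilies

-- The logarithm of a quotient close to one provides the square root.
theorem eventually_exists_even_sq_mul_eq {D : I × Circle → ℂ} (hD : Continuous D)
    (h₀ : ∀ y, D y ≠ 0) (h_even : ∀ t z, D (t, -z) = D (t, z)) (t : I) :
    ∀ᶠ t' in 𝓝 t, ∃ s : Circle → ℂ, Continuous s ∧ (∀ z, s (-z) = s z) ∧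
      ∀ z, s z ^ 2 * D (t', z) = D (t, z) := by
  have quotient : Continuous fun p : I × Circle => D (t, p.2) / D p :=
    (hD.comp (by fun_prop)).div hD h₀
  have near : ∀ᶠ t' in 𝓝 t, ∀ z ∈ (Set.univ : Set Circle),
      D (t, z) / D (t', z) ∈ Complex.slitPlane := by
    refine isCompact_univ.eventually_forall_of_forall_eventually fun z _ => ?_
    refine quotient.continuousAt.eventually_mem (Complex.isOpen_slitPlane.mem_nhds ?_)
    simp [div_self (h₀ (t, z))]
  filter_upwards [near] with t' ht'
  refine ⟨fun z => Complex.exp (Complex.log (D (t, z) / D (t', z)) / 2), ?_,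
    fun z => by simp only [h_even], fun z => ?_⟩
  · exact Complex.continuous_exp.comp
      (((quotient.comp (Continuous.prodMk_right t')).clog fun z => ht' z trivial).div_const 2)
  · rw [← Complex.exp_nat_mul, Nat.cast_ofNat, mul_div_cancel₀ _ two_ne_zero,
      Complex.exp_log (div_ne_zero (h₀ _) (h₀ _)), div_mul_cancel₀ _ (h₀ _)]

theorem exists_even_sq_mul_eq {D : I × Circle → ℂ} (hD : Continuous D) (h₀ : ∀ y, D y ≠ 0)
    (h_even : ∀ t z, D (t, -z) = D (t, z)) :
    ∃ s : Circle → ℂ, Continuous s ∧ (∀ z, s (-z) = s z) ∧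
      ∀ z, s z ^ 2 * D (1, z) = D (0, z) := by
  let P (t t' : I) : Prop := ∃ s : Circle → ℂ, Continuous s ∧ (∀ z, s (-z) = s z) ∧
    ∀ z, s z ^ 2 * D (t', z) = D (t, z)
  have symm {t t'} : P t t' → P t' t := by
    rintro ⟨s, hs, hs_even, h⟩
    have hs₀ (z) : s z ≠ 0 := fun hz => h₀ (t, z) (by rw [← h z, hz]; simp)
    refine ⟨fun z => (s z)⁻¹, hs.inv₀ hs₀, fun z => by simp only [hs_even], fun z => ?_⟩
    rw [← h z, inv_pow, inv_mul_cancel_left₀ (pow_ne_zero 2 (hs₀ z))]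
  have trans (a b c) : P a b → P b c → P a c := by
    rintro ⟨s, hs, hs_even, h⟩ ⟨s', hs', hs_even', h'⟩
    refine ⟨fun z => s z * s' z, hs.mul hs', fun z => by simp only [hs_even, hs_even'],
      fun z => ?_⟩
    rw [← h z, ← h' z, mul_pow, mul_assoc]
  exact PreconnectedSpace.induction₂' P
    (fun t => (eventually_exists_even_sq_mul_eq hD h₀ h_even t).mono fun _ h => ⟨h, symm h⟩)
    ⟨trans⟩ 0 1

-- A continuous square root of `z²` is `z` or `-z`, which are both odd.
theorem sq_ne_sq_of_even {s : Circle → ℂ} (hs : Continuous s) (h_even : ∀ z, s (-z) = s z) :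
    ¬ ∀ z : Circle, s z ^ 2 = (z : ℂ) ^ 2 := by
  intro hsq
  let q (z : Circle) : ℂ := s z / z
  have hq : Continuous q := hs.div (by fun_prop) fun z => z.coe_ne_zero
  have q_neg (z) : q (-z) = -q z := by simp [q, h_even, div_neg]
  have q_eq (z) : q z = 1 ∨ q z = -1 := by
    rw [← sq_eq_one_iff, div_pow, hsq, div_self (pow_ne_zero 2 z.coe_ne_zero)]
  have connected : IsPreconnected (Set.univ : Set Circle) := isPreconnected_univ
  rcases connected.eq_or_eq_neg_of_sq_eq hq.continuousOn (continuousOn_const (c := (1 : ℂ)))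
    (fun z _ => by rcases q_eq z with h | h <;> simp [h]) (fun _ => one_ne_zero) with h | h
  all_goals
    have h₁ := h (Set.mem_univ 1)
    have h₂ := h (Set.mem_univ (-1))
    rw [q_neg, h₁] at h₂
    norm_num at h₂

/-- The family `z ↦ diag(z², 1)` over the antipodal quotient of the circle, a generator of its
K-group. -/
def circleGenerator : InvertibleFamily (antipodal Circle) (Fin 2) where
  toFun z := !![(z : ℂ) ^ 2, 0; 0, 1]
  continuous_toFun := by
    refine continuous_matrix fun i j => ?_
    fin_cases i <;> fin_cases j <;> dsimp <;> fun_prop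
  isUnit_toFun z := by simp [isUnit_iff_isUnit_det, det_fin_two_of]
  eq_of_rel' := by
    rintro z w (rfl | rfl)
    · rfl
    · simp

theorem circleGenerator_apply (z : Circle) : circleGenerator z = !![(z : ℂ) ^ 2, 0; 0, 1] := rfl

theorem kClass_circleGenerator_ne_add_self (k : KGroup (antipodal Circle)) :
    circleGenerator.kClass ≠ k + k := by
  induction k using KGroup.induction with
  | _ ι a =>
    intro hk
    rw [← KGroup.kClass_directSum, KGroup.kClass_eq_iff] at hk
    obtain ⟨α, _, _, H, H₀, H₁⟩ := hk
    have det_ne (z) : (a z).det ≠ 0 := (a.isUnit_det z).ne_zero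
    have even (t z) : H (t, -z) = H (t, z) := H.eq_of_rel ⟨rfl, .inr rfl⟩
    obtain ⟨s, hs, hs_even, hsq⟩ := exists_even_sq_mul_eq (D := fun y => (H y).det)
      H.continuous.matrix_det (fun y => (H.isUnit_det y).ne_zero) fun t z => by rw [even]
    have a_even (z) : a (-z) = a z := a.eq_of_rel (.inr rfl)
    refine sq_ne_sq_of_even (s := fun z => s z * (a z).det) (hs.mul a.continuous.matrix_det)
      (fun z => by simp only [hs_even, a_even]) fun z => ?_
    have h : s z ^ 2 = (z : ℂ) ^ 2 * ((a z).det⁻¹ * (a z).det⁻¹) := by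
      simpa [H₀, H₁, circleGenerator_apply, det_fin_two_of, det_nonsing_inv] using hsq z
    rw [mul_pow, h, ← mul_inv, ← sq, mul_assoc, inv_mul_cancel₀ (pow_ne_zero 2 (det_ne z)),
      mul_one]

end CircleFamilies

/-! ### Iterated commutators in the projective unitary group -/

section CentralCommutator

variable {G : Type*} [Group G]

/-- The commutator map of `G`, which descends to the quotient by the center in both arguments. -/
def centralCommutator (a b : G ⧸ Subgroup.center G) : G :=
  Quotient.liftOn₂ a b (fun g h => g * h * g⁻¹ * h⁻¹) (by
    intro g h g' h' hg hh
    obtain ⟨z, hz, rfl⟩ : ∃ z ∈ Subgroup.center G, g' = g * z :=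
      ⟨g⁻¹ * g', QuotientGroup.leftRel_apply.1 hg, by group⟩
    obtain ⟨w, hw, rfl⟩ : ∃ w ∈ Subgroup.center G, h' = h * w :=
      ⟨h⁻¹ * h', QuotientGroup.leftRel_apply.1 hh, by group⟩
    have hz' := Subgroup.mem_center_iff.1 hz
    have hw' := Subgroup.mem_center_iff.1 hw
    calc g * h * g⁻¹ * h⁻¹ = g * h * (g⁻¹ * w) * w⁻¹ * h⁻¹ := by group
      _ = g * (h * w * z) * z⁻¹ * g⁻¹ * w⁻¹ * h⁻¹ := by rw [hw' g⁻¹]; group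
      _ = g * z * (h * w) * (g * z)⁻¹ * (h * w)⁻¹ := by rw [hz' (h * w)]; group)

theorem centralCommutator_mk (g h : G) :
    centralCommutator (g : G ⧸ Subgroup.center G) h = g * h * g⁻¹ * h⁻¹ := rfl

theorem centralCommutator_one (a : G ⧸ Subgroup.center G) : centralCommutator a 1 = 1 := by
  obtain ⟨g, rfl⟩ := QuotientGroup.mk_surjective a
  rw [← QuotientGroup.mk_one, centralCommutator_mk]
  group

theorem mk_centralCommutator (a b : G ⧸ Subgroup.center G) :
    ((centralCommutator a b : G) : G ⧸ Subgroup.center G) = a * b * a⁻¹ * b⁻¹ := by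
  obtain ⟨g, rfl⟩ := QuotientGroup.mk_surjective a
  obtain ⟨h, rfl⟩ := QuotientGroup.mk_surjective b
  rfl

theorem continuous_centralCommutator [TopologicalSpace G] [IsTopologicalGroup G] :
    Continuous fun p : (G ⧸ Subgroup.center G) × (G ⧸ Subgroup.center G) =>
      centralCommutator p.1 p.2 := by
  have quotient : IsOpenQuotientMap (Prod.map (QuotientGroup.mk : G → G ⧸ Subgroup.center G)
      (QuotientGroup.mk : G → G ⧸ Subgroup.center G)) :=
    QuotientGroup.isOpenQuotientMap_mk.prodMap QuotientGroup.isOpenQuotientMap_mk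
  rw [← quotient.continuous_comp_iff]
  change Continuous fun p : G × G => p.1 * p.2 * p.1⁻¹ * p.2⁻¹
  fun_prop

theorem continuous_iteratedCommutator [TopologicalSpace G] [IsTopologicalGroup G] :
    ∀ n : ℕ, Continuous fun g : Fin n → G => iteratedCommutator n g
  | 0 => continuous_const
  | 1 => continuous_apply 0
  | n + 2 => by
    have init : Continuous fun g : Fin (n + 2) → G =>
        iteratedCommutator (n + 1) fun i => g i.castSucc :=
      (continuous_iteratedCommutator (n + 1)).comp (by fun_prop)
    have last : Continuous fun g : Fin (n + 2) → G => g (Fin.last (n + 1)) := continuous_apply _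
    exact ((last.mul init).mul last.inv).mul init.inv

theorem iteratedCommutator_one : ∀ n : ℕ, iteratedCommutator n (1 : Fin n → G) = 1
  | 0 => rfl
  | 1 => rfl
  | n + 2 => by
    have init : iteratedCommutator (n + 1) (fun _ => (1 : G)) = 1 := iteratedCommutator_one (n + 1)
    simp [iteratedCommutator, init]

end CentralCommutator

section Detection

theorem Sphere3.mk_toSU_eq {p q : Sphere3} (h : antipodal Sphere3 p q) :
    (p.toSU : PU 2) = q.toSU := by
  rcases h with rfl | rfl
  · rfl
  have neg_one : SU.toMatrix 2 ((-q).toSU⁻¹ * q.toSU) = -1 := by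
    have h := q.toMatrix_toSU_neg
    rw [map_mul, ← neg_neg (SU.toMatrix 2 q.toSU), ← h, mul_neg, ← map_mul, inv_mul_cancel,
      map_one]
  rw [QuotientGroup.eq, Subgroup.mem_center_iff]
  intro g
  refine SU.toMatrix_injective ?_
  rw [map_mul _ g, map_mul _ _ g, neg_one, mul_neg_one, neg_one_mul]

/-- The matrix `M` is a nonzero multiple of a representative of `g`. -/
def IsScaledLift (M : Matrix (Fin 2) (Fin 2) ℂ) (g : PU 2) : Prop :=
  ∃ (A : SU 2) (a : ℂ), a ≠ 0 ∧ (A : PU 2) = g ∧ M = a • SU.toMatrix 2 A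

variable {X Y Z : Type*} [TopologicalSpace X] [TopologicalSpace Y] {r : Setoid X}

/-- The family `(x, p) ↦ [toSU p, f x]`, where the commutator with `f x ∈ PU(2)` is lifted to
`SU(2)`. -/
def commutatorWith (r : Setoid X) (f : C(X, PU 2)) (h : ∀ x y, r x y → f x = f y) :
    InvertibleFamily (r.prod (antipodal Sphere3)) (Fin 2) where
  toFun p := SU.toMatrix 2 (centralCommutator (p.2.toSU : PU 2) (f p.1))
  continuous_toFun := by
    have lift : Continuous fun p : X × Sphere3 => (p.2.toSU : PU 2) :=
      QuotientGroup.continuous_mk.comp (by fun_prop)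
    exact SU.continuous_toMatrix.comp (continuous_centralCommutator.comp
      (lift.prodMk (f.continuous.comp continuous_fst)))
  isUnit_toFun _ := SU.isUnit_toMatrix _
  eq_of_rel' _ _ hp := by rw [h _ _ hp.1, Sphere3.mk_toSU_eq hp.2]

theorem commutatorWith_apply (f : C(X, PU 2)) (h : ∀ x y, r x y → f x = f y) (p : X × Sphere3) :
    commutatorWith r f h p = SU.toMatrix 2 (centralCommutator (p.2.toSU : PU 2) (f p.1)) := rfl

theorem InvertibleFamily.commutatorFamily_eq_commutatorWith (u : InvertibleFamily r (Fin 2))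
    (f : C(X, PU 2)) (h : ∀ x y, r x y → f x = f y) (hu : ∀ x, IsScaledLift (u x) (f x)) :
    u.commutatorFamily = commutatorWith r f h := by
  ext1 ⟨x, p⟩
  obtain ⟨A, a, ha, hA, hu⟩ := hu x
  have inv_smul : (a • SU.toMatrix 2 A)⁻¹ = a⁻¹ • SU.toMatrix 2 A⁻¹ :=
    inv_eq_right_inv (by
      rw [smul_mul_smul_comm, mul_inv_cancel₀ ha, ← map_mul, mul_inv_cancel, map_one, one_smul])
  have commutator_apply : u.commutatorFamily (x, p) =
      SU.toMatrix 2 p.toSU * u x * (SU.toMatrix 2 p.toSU)⁻¹ * (u x)⁻¹ := rfl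
  rw [commutator_apply, commutatorWith_apply, ← hA, centralCommutator_mk, hu, inv_smul,
    ← SU.toMatrix_inv]
  simp only [Matrix.mul_smul, Matrix.smul_mul, smul_smul, map_mul]
  rw [inv_mul_cancel₀ ha, one_smul]

/-- A map `c` to `PU(2)` is *detected* if its pullback to some compact quotient space is represented
by a family of invertible matrices whose class in the K-group is not divisible by two. -/
def IsDetected (c : Y → PU 2) : Prop :=
  ∃ (X : Type) (_ : TopologicalSpace X) (_ : CompactSpace X) (_ : T2Space X) (r : Setoid X)
    (θ : C(X, Y)) (u : InvertibleFamily r (Fin 2)), (∀ x y, r x y → θ x = θ y) ∧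
      (∀ x, IsScaledLift (u x) (c (θ x))) ∧ ∀ k, u.kClass ≠ k + k

namespace IsDetected

theorem of_comp [TopologicalSpace Z] {c : Y → PU 2} (φ : C(Z, Y)) (h : IsDetected (c ∘ φ)) :
    IsDetected c := by
  obtain ⟨X, _, _, _, r, θ, u, hθ, hu, hk⟩ := h
  exact ⟨X, _, ‹_›, ‹_›, r, φ.comp θ, u, fun x y hxy => congrArg φ (hθ x y hxy), hu, hk⟩

open Sphere2 in
protected theorem id : IsDetected (fun g : PU 2 => g) := by
  have lift : Continuous fun z : Circle => ((ofSpherical (Real.pi / 2) z).1.toSU : PU 2) :=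
    QuotientGroup.continuous_mk.comp (by fun_prop)
  refine ⟨Circle, _, inferInstance, inferInstance, antipodal Circle, ⟨_, lift⟩, circleGenerator,
    fun z w h => Sphere3.mk_toSU_eq ?_, fun z => ⟨_, z, z.coe_ne_zero, rfl, ?_⟩,
    kClass_circleGenerator_ne_add_self⟩
  · exact antipodal_le_comap (φ := fun z => (ofSpherical (Real.pi / 2) z).1)
      (fun z => by rw [← neg_ofSpherical_pi_div_two, coe_neg]) h
  · rw [Sphere3.toMatrix_toSU, circleGenerator_apply]
    ext i j
    fin_cases i <;> fin_cases j <;>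
      simp [ofSpherical, sq, Complex.mul_conj', Circle.norm_coe]

theorem commutator {c : Y → PU 2} (hc : Continuous c) (h : IsDetected c) :
    IsDetected fun p : Y × PU 2 => p.2 * c p.1 * p.2⁻¹ * (c p.1)⁻¹ := by
  obtain ⟨X, _, _, _, r, θ, u, hθ, hu, hk⟩ := h
  have : Continuous fun p : X × Sphere3 => (p.2.toSU : PU 2) :=
    QuotientGroup.continuous_mk.comp (by fun_prop)
  refine ⟨X × Sphere3, _, inferInstance, inferInstance, r.prod (antipodal Sphere3),
    ⟨fun p => (θ p.1, (p.2.toSU : PU 2)), by fun_prop⟩, u.commutatorFamily,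
    fun p q h => Prod.ext (hθ _ _ h.1) (Sphere3.mk_toSU_eq h.2),
    fun p => ⟨centralCommutator (p.2.toSU : PU 2) (c (θ p.1)), 1, one_ne_zero,
      mk_centralCommutator (p.2.toSU : PU 2) (c (θ p.1)), ?_⟩, fun k h => ?_⟩
  · rw [u.commutatorFamily_eq_commutatorWith ⟨fun x => c (θ x), by fun_prop⟩
      (fun x y h => congrArg c (hθ x y h)) hu, one_smul]
    rfl
  · obtain ⟨k', hk'⟩ := u.exists_kClass_eq_add_self h
    exact hk k' hk'

theorem iteratedCommutator_succ :
    ∀ n : ℕ, IsDetected fun g : Fin (n + 1) → PU 2 => iteratedCommutator (n + 1) g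
  | 0 => IsDetected.id.of_comp ⟨fun g _ => g, by fun_prop⟩
  | n + 1 => by
    let snoc : C((Fin (n + 1) → PU 2) × PU 2, Fin (n + 2) → PU 2) :=
      ⟨fun p => Fin.snoc (α := fun _ => PU 2) p.1 p.2,
        Continuous.finSnoc (A := fun _ => PU 2) continuous_fst continuous_snd⟩
    refine of_comp snoc ?_
    convert (iteratedCommutator_succ n).commutator (continuous_iteratedCommutator (n + 1)) using 2
      with p
    simp [iteratedCommutator, snoc]

theorem not_nullhomotopic {c : C(Y, PU 2)} (hc : IsDetected c) {y₀ : Y} (hy₀ : c y₀ = 1) :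
    ¬ c.Nullhomotopic := by
  rintro ⟨g, ⟨H⟩⟩
  obtain ⟨X, _, _, _, r, θ, u, hθ, hu, hk⟩ := hc
  let f : C(I × X, PU 2) := ⟨fun p => H (p.1, θ p.2) * (H (p.1, y₀))⁻¹, by fun_prop⟩
  have hf : ∀ p q, (⊥ : Setoid I).prod r p q → f p = f q := by
    rintro ⟨t, x⟩ ⟨t', x'⟩ ⟨ht : t = t', hx⟩
    subst ht
    simp [f, hθ x x' hx]
  have f₀ (x) : f (0, x) = c (θ x) := by simp [f, hy₀]
  have f₁ (x) : f (1, x) = 1 := by simp [f]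
  have homotopic : InvertibleFamily.Homotopic u.commutatorFamily 1 := by
    rw [u.commutatorFamily_eq_commutatorWith (c.comp θ) (fun x y h => congrArg c (hθ x y h)) hu]
    refine InvertibleFamily.homotopic_of_prod (commutatorWith _ f hf) (fun x p => ?_) fun x p => ?_
    · simp only [commutatorWith_apply, f₀]
      rfl
    · simp only [commutatorWith_apply, f₁, centralCommutator_one, map_one]
      rfl
  obtain ⟨k, h⟩ := u.exists_kClass_eq_add_self (k := 0) (by
    rw [KGroup.kClass_eq_of_homotopic homotopic, KGroup.kClass_one, add_zero])
  exact hk k h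

end IsDetected

end Detection

end

/-- **Theorem (Rao).** For every `n ≥ 1` the iterated commutator map
`cₙ : PU(2)ⁿ → PU(2)` is continuous and not null-homotopic. -/
theorem iteratedCommutator_PU2_not_nullHomotopic (n : ℕ) (hn : 1 ≤ n) :
    Continuous (fun g : Fin n → PU 2 => iteratedCommutator n g) ∧
    ∀ c : C((Fin n → PU 2), PU 2),
      (∀ g : Fin n → PU 2, c g = iteratedCommutator n g) →
        ¬∃ y : PU 2, c.Homotopic (ContinuousMap.const (Fin n → PU 2) y) := by
  refine ⟨continuous_iteratedCommutator n, fun c hc => ?_⟩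
  obtain ⟨m, rfl⟩ := Nat.exists_eq_add_of_le' hn
  have detected : IsDetected c := by
    rw [funext hc]
    exact IsDetected.iteratedCommutator_succ m
  exact detected.not_nullhomotopic ((hc 1).trans (iteratedCommutator_one _))
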